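/- arXiv:1606.02790 — 2 statements merged into one kernel-verified Lean document; each statement's English description precedes it below -/
import Mathlib

section
/- Let 9/5 ≤ q ≤ 2 and (3−q)/(5q−6) ≤ k ≤ (3−q)/3. There exists a constant c > 0 depending only on q and k such that for every vector field v ∈ L^∞(−1,0; L²(B(1))) whose weak spatial gradient satisfies ∇v ∈ L^q(Q(1)), and every 0 < r ≤ 1, one has C̃(r) ≤ c · A(r)^{(9−3q−3qk)/(6−2q)} · E_q(r)^{3k/(3−q)}. -/
/- Setting: suitable weak solutions of the 3D incompressible Navier–Stokes equations,
   following Caffarelli–Kohn–Nirenberg.  The velocity field is `v`, its weak spatial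
   gradient is `dv`, the pressure is `p` and the force is `f`. -/

open MeasureTheory Filter Metric Set Bornology
open scoped Topology ENNReal

noncomputable section

/-- Three dimensional Euclidean space. -/
abbrev V3 : Type := EuclideanSpace ℝ (Fin 3)

/-- The standard basis of `V3`. -/
def e3 (i : Fin 3) : V3 := EuclideanSpace.single i 1

/-- Euclidean dot product. -/
def dot3 (a b : V3) : ℝ := ∑ i, a i * b i

/-- Squared Frobenius norm of a (gradient) matrix. -/
def fnormSq (A : V3 →L[ℝ] V3) : ℝ := ∑ i, ‖A (e3 i)‖ ^ 2

/-- Frobenius norm of a (gradient) matrix. -/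
def fnorm (A : V3 →L[ℝ] V3) : ℝ := Real.sqrt (fnormSq A)

/-- Frobenius inner product of two (gradient) matrices. -/
def fdot (A B : V3 →L[ℝ] V3) : ℝ := ∑ i, dot3 (A (e3 i)) (B (e3 i))

/-- Laplacian of a scalar function on `V3`. -/
def lap3 (φ : V3 → ℝ) (x : V3) : ℝ :=
  ∑ i, fderiv ℝ (fun y => fderiv ℝ φ y (e3 i)) x (e3 i)

/-- Smooth compactly supported scalar test function on a spatial domain. -/
def IsSpaceTest (U : Set V3) (φ : V3 → ℝ) : Prop :=
  ContDiff ℝ (⊤ : ℕ∞) φ ∧ HasCompactSupport φ ∧ tsupport φ ⊆ U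

/-- Smooth compactly supported scalar test function on a space-time domain. -/
def IsTimeSpaceTest (U : Set V3) (I : Set ℝ) (φ : V3 → ℝ → ℝ) : Prop :=
  ContDiff ℝ (⊤ : ℕ∞) (fun z : V3 × ℝ => φ z.1 z.2) ∧
  HasCompactSupport (fun z : V3 × ℝ => φ z.1 z.2) ∧
  tsupport (fun z : V3 × ℝ => φ z.1 z.2) ⊆ U ×ˢ I

/-- Smooth compactly supported vector test field on a space-time domain. -/
def IsVectorTest (U : Set V3) (I : Set ℝ) (ψ : V3 → ℝ → V3) : Prop :=
  ContDiff ℝ (⊤ : ℕ∞) (fun z : V3 × ℝ => ψ z.1 z.2) ∧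
  HasCompactSupport (fun z : V3 × ℝ => ψ z.1 z.2) ∧
  tsupport (fun z : V3 × ℝ => ψ z.1 z.2) ⊆ U ×ˢ I

/-- `Ω` has a `C²` boundary: near every boundary point, `Ω` is the sublevel set of a
`C²` function with nonvanishing gradient. -/
def HasC2Boundary (Ω : Set V3) : Prop :=
  ∀ x ∈ frontier Ω, ∃ (U : Set V3) (g : V3 → ℝ), IsOpen U ∧ x ∈ U ∧
    ContDiff ℝ 2 g ∧ (∀ y ∈ U, fderiv ℝ g y ≠ 0) ∧ Ω ∩ U = {y ∈ U | g y < 0}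

/-- `dv` is the weak spatial gradient of `v` on `U × I`. -/
def IsWeakSpatialGradient (U : Set V3) (I : Set ℝ) (v : V3 → ℝ → V3)
    (dv : V3 → ℝ → V3 →L[ℝ] V3) : Prop :=
  ∀ᵐ t ∂(volume.restrict I), ∀ φ : V3 → ℝ, IsSpaceTest U φ → ∀ u : V3,
    (∫ x in U, φ x • dv x t u) = - ∫ x in U, fderiv ℝ φ x u • v x t

/-- `(v, p)` is a suitable weak solution of the Navier–Stokes system with force `f` on
`Ω × (a, b)`, where `Ω ⊆ ℝ³` is a bounded `C²` domain; `dv` denotes the weak spatial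
gradient of `v`. -/
structure IsSuitableWeakSolution (Ω : Set V3) (a b : ℝ) (v : V3 → ℝ → V3)
    (dv : V3 → ℝ → V3 →L[ℝ] V3) (p : V3 → ℝ → ℝ) (f : V3 → ℝ → V3) : Prop where
  open_dom : IsOpen Ω
  bounded_dom : IsBounded Ω
  nonempty_dom : Ω.Nonempty
  c2_boundary : HasC2Boundary Ω
  time_lt : a < b
  meas_v : AEMeasurable (fun z : V3 × ℝ => v z.1 z.2) (volume.restrict (Ω ×ˢ Ioo a b))
  meas_dv : AEMeasurable (fun z : V3 × ℝ => dv z.1 z.2) (volume.restrict (Ω ×ˢ Ioo a b))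
  meas_p : AEMeasurable (fun z : V3 × ℝ => p z.1 z.2) (volume.restrict (Ω ×ˢ Ioo a b))
  meas_f : AEMeasurable (fun z : V3 × ℝ => f z.1 z.2) (volume.restrict (Ω ×ˢ Ioo a b))
  /-- `v ∈ L^∞(a,b; L²(Ω))`. -/
  v_linf_l2 : ∃ K : ℝ, ∀ᵐ t ∂(volume.restrict (Ioo a b)),
    IntegrableOn (fun x => ‖v x t‖ ^ 2) Ω volume ∧ (∫ x in Ω, ‖v x t‖ ^ 2) ≤ K
  /-- `∇v ∈ L²(Ω × (a,b))`. -/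
  dv_l2 : IntegrableOn (fun z : V3 × ℝ => fnormSq (dv z.1 z.2)) (Ω ×ˢ Ioo a b) volume
  /-- `p ∈ L^{3/2}(Ω × (a,b))`. -/
  p_l32 : IntegrableOn (fun z : V3 × ℝ => |p z.1 z.2| ^ ((3:ℝ)/2)) (Ω ×ˢ Ioo a b) volume
  /-- `f ∈ L^m(Ω × (a,b))` for some `m > 5/2`. -/
  f_lm : ∃ m : ℝ, 5/2 < m ∧
    IntegrableOn (fun z : V3 × ℝ => ‖f z.1 z.2‖ ^ m) (Ω ×ˢ Ioo a b) volume
  /-- `dv` is the weak spatial gradient of `v`. -/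
  weak_gradient : IsWeakSpatialGradient Ω (Ioo a b) v dv
  /-- `v` is divergence free in the sense of distributions. -/
  div_free : ∀ᵐ t ∂(volume.restrict (Ioo a b)), ∀ φ : V3 → ℝ, IsSpaceTest Ω φ →
    (∫ x in Ω, fderiv ℝ φ x (v x t)) = 0
  /-- The Navier–Stokes equations hold in the sense of distributions. -/
  nse : ∀ ψ : V3 → ℝ → V3, IsVectorTest Ω (Ioo a b) ψ →
    (∫ t in Ioo a b, ∫ x in Ω,
      (dot3 (v x t) (deriv (fun s => ψ x s) t)
        - fdot (dv x t) (fderiv ℝ (fun y => ψ y t) x)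
        - dot3 (dv x t (v x t)) (ψ x t)
        + p x t * (∑ i, fderiv ℝ (fun y => ψ y t) x (e3 i) i)
        + dot3 (f x t) (ψ x t))) = 0
  /-- The generalized local energy inequality. -/
  energy : ∀ᵐ t ∂(volume.restrict (Ioo a b)), ∀ φ : V3 → ℝ → ℝ,
    IsTimeSpaceTest Ω (Ioo a b) φ → (∀ x s, 0 ≤ φ x s) →
    (∫ x in Ω, ‖v x t‖ ^ 2 * φ x t)
        + 2 * ∫ s in Ioo a t, ∫ x in Ω, fnormSq (dv x s) * φ x s
      ≤ (∫ s in Ioo a t, ∫ x in Ω,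
            ‖v x s‖ ^ 2 * (deriv (fun τ => φ x τ) s + lap3 (fun y => φ y s) x))
        + (∫ s in Ioo a t, ∫ x in Ω, ‖v x s‖ ^ 2 * fderiv ℝ (fun y => φ y s) x (v x s))
        + 2 * (∫ s in Ioo a t, ∫ x in Ω, p x s * fderiv ℝ (fun y => φ y s) x (v x s))
        + 2 * (∫ s in Ioo a t, ∫ x in Ω, dot3 (f x s) (v x s) * φ x s)

/-- `E_q(z,r) = r^{-5+2q} ∬_{Q(z,r)} |∇v|^q`, centered at `z = (x₀,t₀)`. -/
def funEq (dv : V3 → ℝ → V3 →L[ℝ] V3) (q : ℝ) (z : V3 × ℝ) (r : ℝ) : ℝ :=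
  r ^ (2 * q - 5) * ∫ t in Ioo (z.2 - r ^ 2) z.2, ∫ x in ball z.1 r, fnorm (dv x t) ^ q

/-- `E(z,r) = r⁻¹ ∬_{Q(z,r)} |∇v|²`, centered at `z = (x₀,t₀)`. -/
def funE2 (dv : V3 → ℝ → V3 →L[ℝ] V3) (z : V3 × ℝ) (r : ℝ) : ℝ :=
  r⁻¹ * ∫ t in Ioo (z.2 - r ^ 2) z.2, ∫ x in ball z.1 r, fnormSq (dv x t)

/-- `z` is a regular point of `v`: `v` is essentially bounded on some parabolic
cylinder `Q(z,ρ)`. -/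
def RegularPoint (v : V3 → ℝ → V3) (z : V3 × ℝ) : Prop :=
  ∃ ρ : ℝ, 0 < ρ ∧ ∃ K : ℝ,
    ∀ᵐ w : V3 × ℝ ∂(volume.restrict (ball z.1 ρ ×ˢ Ioo (z.2 - ρ ^ 2) z.2)),
      ‖v w.1 w.2‖ ≤ K

/- Scaled functionals centered at the reference point `z = (0,0)`. -/

/-- `A(r) = r⁻¹ sup_{-r²<s<0} ∫_{B(r)} |v|²`. -/
def funA (v : V3 → ℝ → V3) (r : ℝ) : ℝ :=
  r⁻¹ * sSup ((fun s => ∫ x in ball (0 : V3) r, ‖v x s‖ ^ 2) '' Ioo (-r ^ 2) 0)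

/-- `E(r) = r⁻¹ ∬_{Q(r)} |∇v|²`. -/
def funE (dv : V3 → ℝ → V3 →L[ℝ] V3) (r : ℝ) : ℝ :=
  r⁻¹ * ∫ t in Ioo (-r ^ 2) 0, ∫ x in ball (0 : V3) r, fnormSq (dv x t)

/-- `E_q(r) = r^{-5+2q} ∬_{Q(r)} |∇v|^q`. -/
def funEqz (dv : V3 → ℝ → V3 →L[ℝ] V3) (q r : ℝ) : ℝ :=
  r ^ (2 * q - 5) * ∫ t in Ioo (-r ^ 2) 0, ∫ x in ball (0 : V3) r, fnorm (dv x t) ^ q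

/-- `C(r) = r⁻² ∬_{Q(r)} |v|³`. -/
def funC (v : V3 → ℝ → V3) (r : ℝ) : ℝ :=
  r ^ (-2 : ℝ) * ∫ t in Ioo (-r ^ 2) 0, ∫ x in ball (0 : V3) r, ‖v x t‖ ^ 3

/-- `D(r) = r⁻² ∬_{Q(r)} |p - ⟨p⟩_{B(r)}|^{3/2}`. -/
def funD (p : V3 → ℝ → ℝ) (r : ℝ) : ℝ :=
  r ^ (-2 : ℝ) * ∫ t in Ioo (-r ^ 2) 0, ∫ x in ball (0 : V3) r,
    |p x t - ⨍ y in ball (0 : V3) r, p y t| ^ ((3:ℝ)/2)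

/-- `C̃(r) = r⁻² ∬_{Q(r)} |v - ⟨v⟩_{B(r)}|³`. -/
def funCt (v : V3 → ℝ → V3) (r : ℝ) : ℝ :=
  r ^ (-2 : ℝ) * ∫ t in Ioo (-r ^ 2) 0, ∫ x in ball (0 : V3) r,
    ‖v x t - ⨍ y in ball (0 : V3) r, v y t‖ ^ 3

/-- `G(r) = r⁻¹ ∫_{-r²}^0 (∫_{B(r)} |v|⁶)^{1/3}`. -/
def funG (v : V3 → ℝ → V3) (r : ℝ) : ℝ :=
  r⁻¹ * ∫ t in Ioo (-r ^ 2) 0, (∫ x in ball (0 : V3) r, ‖v x t‖ ^ 6) ^ ((1:ℝ)/3)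

/-- `P(r) = r⁻² inf_{c∈ℝ} ( ∫_{-r²}^0 (∫_{B(r)} |p - c|³)^{1/3} )²`. -/
def funP (p : V3 → ℝ → ℝ) (r : ℝ) : ℝ :=
  r ^ (-2 : ℝ) * ⨅ c : ℝ,
    (∫ t in Ioo (-r ^ 2) 0, (∫ x in ball (0 : V3) r, |p x t - c| ^ 3) ^ ((1:ℝ)/3)) ^ 2

/-- `F(r) = ( ∫_{-r²}^0 (∫_{B(r)} |f|²)^{2/3} )^{3/2}`. -/
def funF (f : V3 → ℝ → V3) (r : ℝ) : ℝ :=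
  (∫ t in Ioo (-r ^ 2) 0, (∫ x in ball (0 : V3) r, ‖f x t‖ ^ 2) ^ ((2:ℝ)/3)) ^ ((3:ℝ)/2)


/-- Jensen / Hölder for a finite measure. -/
lemma aux_jensen {Ω : Type*} [MeasurableSpace Ω] (ν : Measure Ω) (f : Ω → ℝ≥0∞)
    (hf : AEMeasurable f ν) (q : ℝ) (hq : 1 < q) :
    (∫⁻ x, f x ∂ν) ^ q ≤ (ν univ) ^ (q - 1) * ∫⁻ x, f x ^ q ∂ν := by
  have hpq : q.HolderConjugate (Real.conjExponent q) := Real.HolderConjugate.conjExponent hq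
  have h := ENNReal.lintegral_mul_le_Lp_mul_Lq ν hpq hf (aemeasurable_const (b := (1:ℝ≥0∞)))
  simp only [Pi.mul_apply, mul_one, ENNReal.one_rpow, lintegral_const, one_mul] at h
  have h0 : 0 < q := by linarith
  calc (∫⁻ x, f x ∂ν) ^ q ≤ ((∫⁻ x, f x ^ q ∂ν) ^ (1 / q) * (ν univ) ^ (1 / q.conjExponent)) ^ q := by
        gcongr
    _ = _ := by
        rw [ENNReal.mul_rpow_of_nonneg _ _ h0.le, ← ENNReal.rpow_mul, ← ENNReal.rpow_mul, mul_comm]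
        have e1 : 1 / q * q = 1 := by field_simp
        have e2 : 1 / q.conjExponent * q = q - 1 := by
          rw [Real.conjExponent]; field_simp
        rw [e1, e2, ENNReal.rpow_one]

lemma aux_M {Ω : Type*} [MeasurableSpace Ω] (μ : Measure Ω) (κ g : Ω → ℝ≥0∞)
    (hκ : Measurable κ) (hg : Measurable g) (q : ℝ) (hq : 1 < q) (h1 : ∫⁻ z, κ z ∂μ ≤ 1) :
    (∫⁻ z, κ z * g z ∂μ) ^ q ≤ ∫⁻ z, κ z * g z ^ q ∂μ := by
  have := aux_jensen (μ.withDensity κ) g hg.aemeasurable q hq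
  rw [lintegral_withDensity_eq_lintegral_mul _ hκ hg,
    lintegral_withDensity_eq_lintegral_mul _ hκ (hg.pow_const q), withDensity_apply _ .univ,
    Measure.restrict_univ] at this
  simp only [Pi.mul_apply] at this
  refine this.trans ?_
  calc _ ≤ 1 ^ (q-1) * ∫⁻ z, κ z * g z ^ q ∂μ := by
        gcongr
    _ = _ := by simp

lemma aux_layer {Ω : Type*} [MeasurableSpace Ω] (μ : Measure Ω) (h : Ω → ℝ) (h0 : ∀ x, 0 ≤ h x)
    (hm : AEMeasurable h μ) (H W p : ℝ) (hp : 3 < p) (hH : 0 < H) (hW : 0 < W)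
    (hH2 : ∫⁻ x, ENNReal.ofReal (h x ^ 2) ∂μ ≤ ENNReal.ofReal H)
    (hw : ∀ t : ℝ, 0 < t → μ {x | t < h x} ≤ ENNReal.ofReal (W * t ^ (-p))) :
    ∫⁻ x, ENNReal.ofReal (h x ^ 3) ∂μ ≤
      ENNReal.ofReal (3 * (1 + 1 / (p - 3)) * (H ^ (1 - 1 / (p - 2)) * W ^ (1 / (p - 2)))) := by
  have hl := lintegral_rpow_eq_lintegral_meas_lt_mul μ (Eventually.of_forall h0) hm
    (p := 3) (by norm_num)
  have e3 : ∀ x, h x ^ (3:ℝ) = h x ^ 3 := fun x => by norm_cast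
  simp only [e3] at hl
  rw [hl]
  set L : ℝ := (W / H) ^ (1 / (p - 2)) with hL
  have hLpos : 0 < L := by positivity
  have hp2 : (0:ℝ) < p - 2 := by linarith
  have hp3 : (0:ℝ) < p - 3 := by linarith
  have hcheb : ∀ t : ℝ, 0 < t → μ {x | t < h x} ≤ ENNReal.ofReal (H * t ^ (-2:ℝ)) := by
    intro t ht
    have h2 := mul_meas_ge_le_lintegral₀ (μ := μ) (f := fun x => ENNReal.ofReal (h x ^ 2))
      (by fun_prop) (ENNReal.ofReal (t ^ 2))
    have hsub : {x | t < h x} ⊆ {x | ENNReal.ofReal (t ^ 2) ≤ ENNReal.ofReal (h x ^ 2)} := by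
      intro x hx
      simp only [mem_ofPred_eq] at hx ⊢
      apply ENNReal.ofReal_le_ofReal
      gcongr
    have h3 : ENNReal.ofReal (t ^ 2) * μ {x | t < h x} ≤ ENNReal.ofReal H :=
      (mul_le_mul_right (measure_mono hsub) _).trans (h2.trans hH2)
    rw [mul_comm, ← ENNReal.le_div_iff_mul_le (by left; simp; positivity) (by simp)] at h3
    refine h3.trans_eq ?_
    rw [← ENNReal.ofReal_div_of_pos (by positivity), Real.rpow_neg ht.le]
    norm_cast
  have hsplit : (Ioi (0:ℝ)) = Ioc 0 L ∪ Ioi L := (Ioc_union_Ioi_eq_Ioi hLpos.le).symm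
  have hA : ∫⁻ t in Ioc 0 L, μ {a | t < h a} * ENNReal.ofReal (t ^ ((3:ℝ) - 1)) ≤
      ENNReal.ofReal (H * L) := by
    calc _ ≤ ∫⁻ t in Ioc 0 L, ENNReal.ofReal H := by
          apply setLIntegral_mono measurable_const
          intro t ht
          refine (mul_le_mul_left (hcheb t ht.1) _).trans_eq ?_
          rw [← ENNReal.ofReal_mul (by have := ht.1; positivity), mul_assoc,
            ← Real.rpow_add ht.1]
          norm_num
      _ = _ := by
          simp [ENNReal.ofReal_mul hH.le]
  have hB : ∫⁻ t in Ioi L, μ {a | t < h a} * ENNReal.ofReal (t ^ ((3:ℝ) - 1)) ≤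
      ENNReal.ofReal (W * (L ^ (3 - p) / (p - 3))) := by
    calc _ ≤ ∫⁻ t in Ioi L, ENNReal.ofReal (W * t ^ (2 - p)) := by
          apply setLIntegral_mono (by fun_prop)
          intro t ht
          have ht0 : 0 < t := hLpos.trans ht
          refine (mul_le_mul_left (hw t ht0) _).trans_eq ?_
          rw [← ENNReal.ofReal_mul (by positivity), mul_assoc,
            ← Real.rpow_add ht0]
          congr 3; ring
      _ = ENNReal.ofReal (∫ t in Ioi L, W * t ^ (2 - p)) := by
          rw [ofReal_integral_eq_lintegral_ofReal]
          · exact (integrableOn_Ioi_rpow_of_lt (by linarith) hLpos).const_mul W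
          · filter_upwards [self_mem_ae_restrict measurableSet_Ioi] with t ht
            have ht0 : 0 < t := hLpos.trans ht
            positivity
      _ = _ := by
          rw [integral_const_mul, integral_Ioi_rpow_of_lt (by linarith) hLpos]
          congr 2
          rw [show 2 - p + 1 = 3 - p by ring, show 3 - p = -(p - 3) by ring, neg_div_neg_eq]
  rw [hsplit]
  have eHL : H * L = H ^ (1 - 1 / (p - 2)) * W ^ (1 / (p - 2)) := by
    rw [hL, Real.div_rpow hW.le hH.le, Real.rpow_sub hH, Real.rpow_one]; field_simp
  have eWL : W * L ^ (3 - p) = H ^ (1 - 1 / (p - 2)) * W ^ (1 / (p - 2)) := by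
    rw [← eHL]
    have : L ^ (p - 2) = W / H := by
      rw [hL, ← Real.rpow_mul (by positivity), one_div_mul_cancel hp2.ne', Real.rpow_one]
    have h5 : L ^ (3 - p) = L / L ^ (p - 2) := by
      rw [show 3 - p = 1 - (p - 2) by ring, Real.rpow_sub hLpos, Real.rpow_one]
    rw [h5, this]; field_simp
  calc _ ≤ ENNReal.ofReal 3 * (ENNReal.ofReal (H * L) + ENNReal.ofReal (W * (L ^ (3 - p) / (p - 3)))) := by
        gcongr
        exact (lintegral_union_le _ _ _).trans (add_le_add hA hB)
    _ = _ := by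
        rw [← ENNReal.ofReal_add (by positivity) (by positivity), ← ENNReal.ofReal_mul (by norm_num),
          ← mul_div_assoc, eWL, eHL]
        congr 1; ring

lemma aux_weak {Ω : Type*} [MeasurableSpace Ω] (μ : Measure Ω) [IsProbabilityMeasure μ]
    (κ : ℝ → Ω → Ω → ℝ≥0∞) (hκ : Measurable (fun p : ℝ × Ω × Ω => κ p.1 p.2.1 p.2.2))
    (g : Ω → ℝ≥0∞) (hg : Measurable g) (q C : ℝ) (hq : 1 < q) (hq3 : q < 3) (hC : 0 < C)
    (h1 : ∀ s ∈ Ioo (0:ℝ) 1, ∀ x, ∫⁻ z, κ s x z ∂μ ≤ 1)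
    (h2 : ∀ s ∈ Ioo (0:ℝ) 1, ∀ z, ∫⁻ x, κ s x z ∂μ ≤ ENNReal.ofReal C)
    (h3 : ∀ s ∈ Ioo (0:ℝ) 1, ∀ x z, κ s x z ≤ ENNReal.ofReal (C * s ^ (-3:ℝ)))
    (Γ : ℝ) (hΓ : 0 < Γ) (hgΓ : ∫⁻ z, g z ^ q ∂μ ≤ ENNReal.ofReal Γ) (t : ℝ) (ht : 0 < t) :
    μ {x | ENNReal.ofReal t < ∫⁻ s in Ioo (0:ℝ) 1, ∫⁻ z, κ s x z * g z ∂μ} ≤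
      ENNReal.ofReal ((2 ^ q * C * (2 * C ^ (1 / q) / (3 / q - 1)) ^ (q ^ 2 / (3 - q))
        * Γ ^ (3 / (3 - q))) * t ^ (-(3 * q / (3 - q)))) := by
  have q0 : 0 < q := by linarith
  have h3q : 0 < 3 - q := by linarith
  have h3q' : 0 < 3 / q - 1 := by
    rw [sub_pos, lt_div_iff₀ q0]; linarith
  set M : ℝ → Ω → ℝ≥0∞ := fun s x => ∫⁻ z, κ s x z * g z ∂μ with hM
  have hMm : Measurable (fun p : ℝ × Ω => M p.1 p.2) := by
    apply Measurable.lintegral_prod_right' (f := fun pz : (ℝ × Ω) × Ω => κ pz.1.1 pz.1.2 pz.2 * g pz.2)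
    apply Measurable.mul
    · exact hκ.comp (by fun_prop : Measurable fun pz : (ℝ × Ω) × Ω => (pz.1.1, pz.1.2, pz.2))
    · fun_prop
  have hκ2 : ∀ s x, Measurable (κ s x) := fun s x =>
    hκ.comp (by fun_prop : Measurable fun z : Ω => (s, x, z))
  have hMq : ∀ s ∈ Ioo (0:ℝ) 1, ∀ x, M s x ^ q ≤ ∫⁻ z, κ s x z * g z ^ q ∂μ := fun s hs x =>
    aux_M μ (κ s x) g (hκ2 s x) hg q hq (h1 s hs x)
  -- pointwise bound
  have hMa : ∀ s ∈ Ioo (0:ℝ) 1, ∀ x, M s x ≤ ENNReal.ofReal ((C * Γ) ^ (1 / q) * s ^ (-(3 / q))) := by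
    intro s hs x
    have hs0 := hs.1
    have : M s x ^ q ≤ ENNReal.ofReal (C * s ^ (-3:ℝ) * Γ) := by
      refine (hMq s hs x).trans ?_
      calc _ ≤ ∫⁻ z, ENNReal.ofReal (C * s ^ (-3:ℝ)) * g z ^ q ∂μ := by
            exact lintegral_mono fun z => mul_le_mul_left (h3 s hs x z) _
        _ ≤ _ := by
            rw [lintegral_const_mul _ (hg.pow_const q), ENNReal.ofReal_mul (p := C * s ^ (-3:ℝ)) (by positivity)]
            gcongr
    rw [← ENNReal.le_rpow_inv_iff q0, ENNReal.ofReal_rpow_of_nonneg (by positivity) (by positivity)] at this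
    refine this.trans_eq ?_
    congr 1
    rw [show C * s ^ (-3:ℝ) * Γ = (C * Γ) * s ^ (-3:ℝ) by ring, Real.mul_rpow (by positivity) (by positivity),
      ← Real.rpow_mul hs0.le, one_div]
    congr 2; ring
  -- integral bound
  have hMb : ∀ s ∈ Ioo (0:ℝ) 1, ∫⁻ x, M s x ^ q ∂μ ≤ ENNReal.ofReal (C * Γ) := by
    intro s hs
    calc _ ≤ ∫⁻ x, ∫⁻ z, κ s x z * g z ^ q ∂μ ∂μ := lintegral_mono (hMq s hs)
      _ = ∫⁻ z, ∫⁻ x, κ s x z * g z ^ q ∂μ ∂μ := by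
          apply lintegral_lintegral_swap
          apply Measurable.aemeasurable
          apply Measurable.mul
          · exact hκ.comp (by fun_prop : Measurable fun p : Ω × Ω => (s, p.1, p.2))
          · fun_prop
      _ = ∫⁻ z, (∫⁻ x, κ s x z ∂μ) * g z ^ q ∂μ := by
          congr 1; ext z
          have hk : Measurable fun x => κ s x z := hκ.comp (by fun_prop : Measurable fun x : Ω => (s, x, z))
          rw [lintegral_mul_const _ hk]
      _ ≤ ∫⁻ z, ENNReal.ofReal C * g z ^ q ∂μ := by
          exact lintegral_mono fun z => mul_le_mul_left (h2 s hs z) _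
      _ ≤ _ := by
          rw [lintegral_const_mul _ (hg.pow_const q), ENNReal.ofReal_mul hC.le]
          gcongr
  -- choice of δ
  set B : ℝ := (C * Γ) ^ (1 / q) / (3 / q - 1) with hB
  have hBpos : 0 < B := by positivity
  set δ : ℝ := (t / (2 * B)) ^ (-(q / (3 - q))) with hδ
  have hδpos : 0 < δ := by positivity
  have hδ1 : δ ^ (1 - 3 / q) = t / (2 * B) := by
    rw [hδ, ← Real.rpow_mul (by positivity)]
    have : -(q / (3 - q)) * (1 - 3 / q) = 1 := by field_simp; ring
    rw [this, Real.rpow_one]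
  set Pd : Ω → ℝ≥0∞ := fun x => ∫⁻ s in Ioo (0:ℝ) 1 ∩ Iic δ, M s x with hPd
  have hPdm : Measurable Pd := by
    apply Measurable.lintegral_prod_left' (f := fun p : ℝ × Ω => M p.1 p.2) hMm
  have htail : ∀ x, ∫⁻ s in Ioo (0:ℝ) 1 ∩ Ioi δ, M s x ≤ ENNReal.ofReal (t / 2) := by
    intro x
    calc _ ≤ ∫⁻ s in Ioo (0:ℝ) 1 ∩ Ioi δ, ENNReal.ofReal ((C * Γ) ^ (1 / q) * s ^ (-(3 / q))) := by
          apply setLIntegral_mono (by fun_prop)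
          intro s hs; exact hMa s hs.1 x
      _ ≤ ∫⁻ s in Ioi δ, ENNReal.ofReal ((C * Γ) ^ (1 / q) * s ^ (-(3 / q))) :=
          lintegral_mono_set inter_subset_right
      _ = ENNReal.ofReal (∫ s in Ioi δ, (C * Γ) ^ (1 / q) * s ^ (-(3 / q))) := by
          rw [ofReal_integral_eq_lintegral_ofReal]
          · exact (integrableOn_Ioi_rpow_of_lt (by linarith) hδpos).const_mul _
          · filter_upwards [self_mem_ae_restrict measurableSet_Ioi] with t ht
            have ht0 : 0 < t := hδpos.trans ht
            positivity
      _ = _ := by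
          rw [integral_const_mul, integral_Ioi_rpow_of_lt (by linarith) hδpos]
          congr 1
          rw [show -(3 / q) + 1 = -(3/q - 1) by ring, neg_div_neg_eq,
            show -(3 / q - 1) = 1 - 3 / q by ring, hδ1]
          have : (C * Γ) ^ (1 / q) = B * (3 / q - 1) := by rw [hB]; field_simp
          rw [this]; field_simp
  have hPdq : ∫⁻ x, Pd x ^ q ∂μ ≤ ENNReal.ofReal (δ ^ q * (C * Γ)) := by
    have hvol : volume (Ioo (0:ℝ) 1 ∩ Iic δ) ≤ ENNReal.ofReal δ := by
      refine (measure_mono (t := Ioc 0 δ) (fun s hs => ⟨hs.1.1, hs.2⟩)).trans ?_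
      simp
    calc _ ≤ ∫⁻ x, ((ENNReal.ofReal δ) ^ (q - 1) * ∫⁻ s in Ioo (0:ℝ) 1 ∩ Iic δ, M s x ^ q) ∂μ := by
          apply lintegral_mono; intro x
          refine (aux_jensen (volume.restrict (Ioo (0:ℝ) 1 ∩ Iic δ)) (fun s => M s x)
            (hMm.comp (by fun_prop : Measurable fun s : ℝ => (s, x))).aemeasurable q hq).trans ?_
          rw [Measure.restrict_apply_univ]
          exact mul_le_mul_left (ENNReal.rpow_le_rpow hvol (by linarith)) _
      _ = (ENNReal.ofReal δ) ^ (q - 1) * ∫⁻ s in Ioo (0:ℝ) 1 ∩ Iic δ, (∫⁻ x, M s x ^ q ∂μ) := by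
          rw [lintegral_const_mul, lintegral_lintegral_swap]
          · exact ((hMm.comp measurable_swap).pow_const q).aemeasurable
          · apply Measurable.lintegral_prod_left' (f := fun p : ℝ × Ω => M p.1 p.2 ^ q) (hMm.pow_const q)
      _ ≤ (ENNReal.ofReal δ) ^ (q - 1) * ∫⁻ s in Ioo (0:ℝ) 1 ∩ Iic δ, ENNReal.ofReal (C * Γ) := by
          gcongr 1
          apply setLIntegral_mono measurable_const
          intro s hs; exact hMb s hs.1
      _ ≤ (ENNReal.ofReal δ) ^ (q - 1) * (ENNReal.ofReal (C * Γ) * ENNReal.ofReal δ) := by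
          rw [setLIntegral_const]; gcongr
      _ = _ := by
          rw [ENNReal.ofReal_rpow_of_pos hδpos, ← ENNReal.ofReal_mul (by positivity),
            ← ENNReal.ofReal_mul (by positivity)]
          congr 1
          rw [Real.rpow_sub hδpos, Real.rpow_one]; field_simp
  have hsub : {x | ENNReal.ofReal t < ∫⁻ s in Ioo (0:ℝ) 1, M s x} ⊆
      {x | ENNReal.ofReal ((t / 2) ^ q) ≤ Pd x ^ q} := by
    intro x hx
    simp only [mem_ofPred_eq] at hx ⊢
    rw [← ENNReal.ofReal_rpow_of_pos (by positivity)]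
    refine ENNReal.rpow_le_rpow ?_ q0.le
    by_contra hcon
    push Not at hcon
    have e : Ioo (0:ℝ) 1 = (Ioo (0:ℝ) 1 ∩ Iic δ) ∪ (Ioo (0:ℝ) 1 ∩ Ioi δ) := by
      rw [← inter_union_distrib_left, Iic_union_Ioi, inter_univ]
    have : ∫⁻ s in Ioo (0:ℝ) 1, M s x ≤ ENNReal.ofReal t := by
      rw [e]
      refine (lintegral_union_le _ _ _).trans ?_
      refine (add_le_add hcon.le (htail x)).trans_eq ?_
      rw [← ENNReal.ofReal_add (by positivity) (by positivity)]; congr 1; ring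
    exact absurd hx (not_lt.mpr this)
  have hch := (mul_meas_ge_le_lintegral₀ (μ := μ) (f := fun x => Pd x ^ q)
      (hPdm.pow_const q).aemeasurable (ENNReal.ofReal ((t / 2) ^ q))).trans hPdq
  have hch2 := (mul_le_mul_right (measure_mono (μ := μ) hsub) (ENNReal.ofReal ((t / 2) ^ q))).trans hch
  rw [mul_comm, ← ENNReal.le_div_iff_mul_le (by left; simp; positivity) (by simp)] at hch2
  refine hch2.trans_eq ?_
  rw [← ENNReal.ofReal_div_of_pos (by positivity)]
  congr 1
  have hBe : 2 * B = (2 * C ^ (1 / q) / (3 / q - 1)) * Γ ^ (1 / q) := by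
    rw [hB, Real.mul_rpow hC.le hΓ.le]; ring
  have hδq : δ ^ q = (2 * C ^ (1 / q) / (3 / q - 1)) ^ (q ^ 2 / (3 - q)) * Γ ^ (q / (3 - q))
      * t ^ (-(q ^ 2 / (3 - q))) := by
    rw [hδ, ← Real.rpow_mul (by positivity), show -(q / (3 - q)) * q = -(q ^ 2 / (3 - q)) by ring,
      Real.div_rpow ht.le (by positivity), hBe, Real.rpow_neg (by positivity) (q ^ 2 / (3 - q)),
      Real.rpow_neg (by positivity) (q ^ 2 / (3 - q)),
      Real.mul_rpow (by positivity) (by positivity), ← Real.rpow_mul hΓ.le,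
      show 1 / q * (q ^ 2 / (3 - q)) = q / (3 - q) by field_simp]
    field_simp
  rw [hδq, Real.div_rpow ht.le (by norm_num), show 3 / (3 - q) = q / (3 - q) + 1 by field_simp; ring,
    Real.rpow_add hΓ, Real.rpow_one,
    show -(3 * q / (3 - q)) = -(q ^ 2 / (3 - q)) - q by field_simp; ring, Real.rpow_sub ht]
  field_simp

lemma aux_layer2 (p a : ℝ) (hp : 3 < p) (ha0 : 0 ≤ a) (ha : a ≤ 1 - 1 / (p - 2)) :
    ∃ K : ℝ, 0 < K ∧ ∀ {Ω : Type} [MeasurableSpace Ω] (μ : Measure Ω) [IsProbabilityMeasure μ]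
    (h : Ω → ℝ) (_ : ∀ x, 0 ≤ h x)
    (_ : AEMeasurable h μ) (H W : ℝ) (_ : 0 < H) (_ : 0 < W)
    (_ : ∫⁻ x, ENNReal.ofReal (h x ^ 2) ∂μ ≤ ENNReal.ofReal H)
    (_ : ∀ t : ℝ, 0 < t → μ {x | t < h x} ≤ ENNReal.ofReal (W * t ^ (-p))),
    ∫⁻ x, ENNReal.ofReal (h x ^ 3) ∂μ ≤
      ENNReal.ofReal (K * (H ^ a * W ^ ((3 - 2 * a) / p))) := by
  have hp2 : (0:ℝ) < p - 2 := by linarith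
  have hp3 : (0:ℝ) < p - 3 := by linarith
  have hp0 : (0:ℝ) < p := by linarith
  set C : ℝ := 3 * (1 + 1 / (p - 3)) with hC
  have hCpos : 0 < C := by positivity
  set θ : ℝ := 1 / (p - 2) with hθ
  have hθ0 : 0 < θ := by positivity
  set L : ℝ := C ^ (1 / (1 / 2 + θ)) with hL
  have hLpos : 0 < L := by positivity
  refine ⟨C * L ^ (1 - θ - a), by positivity, ?_⟩
  intro Ω _ μ _ h h0 hm H W hH hW hH2 hw
  -- Poincare-type bound
  have hP : ∫⁻ x, ENNReal.ofReal (h x ^ 2) ∂μ ≤ ENNReal.ofReal (L * W ^ (2 / p)) := by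
    set H0 : ℝ := (∫⁻ x, ENNReal.ofReal (h x ^ 2) ∂μ).toReal with hH0
    have hfin : ∫⁻ x, ENNReal.ofReal (h x ^ 2) ∂μ ≠ ⊤ := (hH2.trans_lt ENNReal.ofReal_lt_top).ne
    have hH0e : ∫⁻ x, ENNReal.ofReal (h x ^ 2) ∂μ = ENNReal.ofReal H0 := (ENNReal.ofReal_toReal hfin).symm
    rcases (ENNReal.toReal_nonneg : 0 ≤ H0).eq_or_lt with hz | hpos
    · rw [hH0e, hH0, ← hz]; simp
    have hl := aux_layer μ h h0 hm H0 W p hp hpos hW hH0e.le hw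
    have hj := aux_jensen μ (fun x => ENNReal.ofReal (h x ^ 2)) (by fun_prop) (3/2) (by norm_num)
    have e : ∀ x, ENNReal.ofReal (h x ^ 2) ^ (3/2:ℝ) = ENNReal.ofReal (h x ^ 3) := by
      intro x
      rw [ENNReal.ofReal_rpow_of_nonneg (by positivity) (by norm_num), ← Real.rpow_natCast,
        ← Real.rpow_mul (h0 x)]
      norm_num
    simp only [e, measure_univ, ENNReal.one_rpow, one_mul] at hj
    have hj2 := hj.trans hl
    rw [hH0e, ENNReal.ofReal_rpow_of_pos hpos, ENNReal.ofReal_le_ofReal_iff (by positivity)] at hj2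
    rw [hH0e]
    apply ENNReal.ofReal_le_ofReal
    have h4 : H0 ^ (1 / 2 + θ) ≤ C * W ^ θ := by
      have : H0 ^ (3/2:ℝ) = H0 ^ (1/2 + θ) * H0 ^ (1 - θ) := by
        rw [← Real.rpow_add hpos]; congr 1; ring
      rw [this] at hj2
      have hp' : 0 < H0 ^ (1 - θ) := by positivity
      refine le_of_mul_le_mul_right (hj2.trans_eq ?_) hp'
      ring
    have h5 := Real.rpow_le_rpow (by positivity) h4 (by positivity : 0 ≤ 1 / (1 / 2 + θ))
    rw [← Real.rpow_mul hpos.le, Real.mul_rpow (by positivity) (by positivity),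
      ← Real.rpow_mul hW.le, mul_one_div_cancel (by positivity), Real.rpow_one, ← hL] at h5
    refine h5.trans_eq ?_
    congr 2
    rw [hθ]; field_simp; ring
  set H' := min H (L * W ^ (2 / p)) with hH'
  have hH'pos : 0 < H' := lt_min hH (by positivity)
  have hH'2 : ∫⁻ x, ENNReal.ofReal (h x ^ 2) ∂μ ≤ ENNReal.ofReal H' := by
    rw [hH', ENNReal.ofReal_min]; exact le_min hH2 hP
  refine (aux_layer μ h h0 hm H' W p hp hH'pos hW hH'2 hw).trans (ENNReal.ofReal_le_ofReal ?_)
  rw [← hC, ← hθ]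
  calc C * (H' ^ (1 - θ) * W ^ θ) = C * (H' ^ a * H' ^ (1 - θ - a) * W ^ θ) := by
        rw [← Real.rpow_add hH'pos]; congr 3; ring
    _ ≤ C * (H ^ a * (L * W ^ (2 / p)) ^ (1 - θ - a) * W ^ θ) := by
        have : 0 ≤ 1 - θ - a := by linarith
        gcongr
        · exact min_le_left _ _
        · exact min_le_right _ _
    _ = _ := by
        rw [Real.mul_rpow (by positivity) (by positivity), ← Real.rpow_mul hW.le]
        have : W ^ ((3 - 2 * a) / p) = W ^ (2 / p * (1 - θ - a)) * W ^ θ := by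
          rw [← Real.rpow_add hW]; congr 1; rw [hθ]; field_simp; ring
        rw [this]; ring

/-- the abstract interpolation inequality -/
lemma aux_interp (q α β C : ℝ) (hq1 : 9/5 ≤ q) (hq2 : q ≤ 2)
    (hα0 : 0 ≤ α) (hα1 : α ≤ 1 - (3 - q) / (5 * q - 6)) (hαβ : 2 * α + q * β = 3) (hC : 0 < C) :
    ∃ K : ℝ, 0 < K ∧ ∀ {Ω : Type} [MeasurableSpace Ω] (μ : Measure Ω) [IsProbabilityMeasure μ]
    (κ : ℝ → Ω → Ω → ℝ≥0∞) (_ : Measurable (fun p : ℝ × Ω × Ω => κ p.1 p.2.1 p.2.2))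
    (g : Ω → ℝ≥0∞) (_ : Measurable g)
    (_ : ∀ s ∈ Ioo (0:ℝ) 1, ∀ x, ∫⁻ z, κ s x z ∂μ ≤ 1)
    (_ : ∀ s ∈ Ioo (0:ℝ) 1, ∀ z, ∫⁻ x, κ s x z ∂μ ≤ ENNReal.ofReal C)
    (_ : ∀ s ∈ Ioo (0:ℝ) 1, ∀ x z, κ s x z ≤ ENNReal.ofReal (C * s ^ (-3:ℝ)))
    (Γ : ℝ) (_ : 0 < Γ) (_ : ∫⁻ z, g z ^ q ∂μ ≤ ENNReal.ofReal Γ)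
    (h : Ω → ℝ) (_ : ∀ x, 0 ≤ h x) (_ : AEMeasurable h μ)
    (_ : ∀ᵐ x ∂μ, ENNReal.ofReal (h x) ≤ ∫⁻ s in Ioo (0:ℝ) 1, ∫⁻ z, κ s x z * g z ∂μ)
    (H : ℝ) (_ : 0 < H) (_ : ∫⁻ x, ENNReal.ofReal (h x ^ 2) ∂μ ≤ ENNReal.ofReal H),
    ∫⁻ x, ENNReal.ofReal (h x ^ 3) ∂μ ≤ ENNReal.ofReal (K * (H ^ α * Γ ^ β)) := by
  have q0 : 0 < q := by linarith
  have h3q : 0 < 3 - q := by linarith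
  have h3q' : 0 < 3 / q - 1 := by
    rw [sub_pos, lt_div_iff₀ q0]; linarith
  have h5q : 0 < 5 * q - 6 := by linarith
  set p : ℝ := 3 * q / (3 - q) with hp
  have hp3 : 3 < p := by rw [hp, lt_div_iff₀ h3q]; linarith
  have hp2 : 1 / (p - 2) = (3 - q) / (5 * q - 6) := by
    have : p - 2 = (5 * q - 6) / (3 - q) := by rw [hp]; field_simp; ring
    rw [this, one_div_div]
  obtain ⟨K, hK, hmain⟩ := aux_layer2 p α hp3 hα0 (by rw [hp2]; exact hα1)
  set w : ℝ := 2 ^ q * C * (2 * C ^ (1 / q) / (3 / q - 1)) ^ (q ^ 2 / (3 - q)) with hw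
  have hwpos : 0 < w := by positivity
  refine ⟨K * w ^ ((3 - 2 * α) / p), by positivity, ?_⟩
  intro Ω _ μ _ κ hκ g hg h1 h2 h3 Γ hΓ hgΓ h h0 hm hh H hH hH2
  refine (hmain μ h h0 hm H (w * Γ ^ (3 / (3 - q))) hH (by positivity) hH2 ?_).trans_eq ?_
  · intro t ht
    refine le_trans (measure_mono_ae ?_) (aux_weak μ κ hκ g hg q C (by linarith) (by linarith) hC
      h1 h2 h3 Γ hΓ hgΓ t ht)
    filter_upwards [hh] with x hx hxt
    exact ((ENNReal.ofReal_lt_ofReal_iff (ht.trans hxt)).2 hxt).trans_le hx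
  · congr 1
    rw [Real.mul_rpow (by positivity) (by positivity), ← Real.rpow_mul hΓ.le]
    have : 3 / (3 - q) * ((3 - 2 * α) / p) = β := by
      rw [show 3 - 2 * α = q * β by linarith, hp]; field_simp
    rw [this]; ring


open Module in
lemma aux_finrank : finrank ℝ V3 = 3 := by simp

/-- A nonnegative smooth averaging kernel supported in the half ball. -/
structure IsKer (r M : ℝ) (φ : V3 → ℝ) : Prop where
  smooth : ContDiff ℝ (⊤ : ℕ∞) φ
  nonneg : ∀ y, 0 ≤ φ y
  le : ∀ y, φ y ≤ M
  supp : tsupport φ ⊆ closedBall 0 (r / 2)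
  int : ∫ y, φ y = 1

lemma IsKer.norm_le {r M : ℝ} {φ : V3 → ℝ} (h : IsKer r M φ) {y : V3} (hy : φ y ≠ 0) : ‖y‖ ≤ r / 2 := by
  have := h.supp (subset_tsupport _ hy)
  simpa using this

lemma IsKer.compact {r M : ℝ} {φ : V3 → ℝ} (h : IsKer r M φ) : HasCompactSupport φ :=
  (isCompact_closedBall (0:V3) (r/2)).of_isClosed_subset (isClosed_tsupport _) h.supp

lemma aux_vol (r : ℝ) (hr : 0 < r) : volume.real (ball (0:V3) r) = r ^ 3 * volume.real (ball (0:V3) 1) := by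
  have := Measure.addHaar_ball (volume : Measure V3) 0 hr.le
  rw [aux_finrank] at this
  rw [Measure.real, this, ENNReal.toReal_mul, ENNReal.toReal_ofReal (by positivity), Measure.real]

lemma aux_volpos (r : ℝ) (hr : 0 < r) : 0 < volume.real (ball (0:V3) r) := by
  rw [Measure.real, ENNReal.toReal_pos_iff]
  exact ⟨measure_ball_pos _ _ hr, measure_ball_lt_top⟩

lemma exists_ker (r : ℝ) (hr : 0 < r) :
    ∃ φ, IsKer r (64 / volume.real (ball (0:V3) r)) φ := by
  let f : ContDiffBump (0:V3) := ⟨r/4, r/2, by positivity, by linarith⟩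
  refine ⟨f.normed volume, f.contDiff_normed, fun y => f.nonneg_normed y, fun y => ?_, ?_, f.integral_normed⟩
  · have := f.normed_le_div_measure_closedBall_rOut volume 2 (by simp only [f]; linarith) y
    refine this.trans_eq ?_
    have e : volume.real (closedBall (0:V3) f.rOut) = (r/2)^3 * volume.real (ball (0:V3) 1) := by
      have := Measure.addHaar_real_closedBall (volume : Measure V3) 0 (r := f.rOut) (by simp only [f]; positivity)
      rw [aux_finrank] at this
      exact this
    have := aux_volpos 1 one_pos
    rw [e, aux_finrank, aux_vol r hr]
    field_simp; norm_num
  · rw [f.tsupport_normed_eq]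

lemma aux_cov (f : V3 → ℝ) (a : V3) (R : ℝ) : ∫ z, f (a + R • z) = |R ^ 3|⁻¹ * ∫ z, f z := by
  have := Measure.integral_comp_smul (volume : Measure V3) (fun y => f (a + y)) R
  simp only [smul_eq_mul, aux_finrank, abs_inv] at this
  rw [this, integral_add_left_eq_self]

lemma aux_lcov {r M : ℝ} {φ : V3 → ℝ} (h : IsKer r M φ) (a : V3) (R : ℝ) (hR : R ≠ 0) :
    ∫⁻ z, ENNReal.ofReal (φ (a + R • z)) = ENNReal.ofReal (|R ^ 3|⁻¹) := by
  have hc : Continuous φ := h.smooth.continuous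
  have hIntg : Integrable (fun z => φ (a + R • z)) := by
    have h1 : Integrable (fun y => φ (a + y)) :=
      (hc.integrable_of_hasCompactSupport h.compact).comp_add_left a
    exact h1.comp_smul hR
  rw [← ofReal_integral_eq_lintegral_ofReal hIntg (Eventually.of_forall fun z => h.nonneg _),
    aux_cov, h.int, mul_one]

/-- the kernel -/
def kr (φ : V3 → ℝ) (s : ℝ) (x z : V3) : ℝ := s⁻¹ ^ 3 * φ (x + s⁻¹ • (z - x))

lemma kr_nonneg {r M : ℝ} {φ : V3 → ℝ} (h : IsKer r M φ) {s : ℝ} (hs : 0 < s) (x z : V3) :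
    0 ≤ kr φ s x z := by
  have := h.nonneg (x + s⁻¹ • (z - x))
  rw [kr]; positivity

lemma kr_supp {r M : ℝ} {φ : V3 → ℝ} (h : IsKer r M φ) {s : ℝ} (hs : 0 < s) {x z : V3}
    (hx : x ∈ ball (0:V3) r) (hk : φ (x + s⁻¹ • (z - x)) ≠ 0) : ‖z - x‖ ≤ 2 * r * s := by
  have h1 := h.norm_le hk
  have hx' : ‖x‖ < r := by simpa using hx
  have h2 : ‖s⁻¹ • (z - x)‖ ≤ 2 * r := by
    calc _ = ‖(x + s⁻¹ • (z - x)) - x‖ := by congr 1; abel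
      _ ≤ _ := (norm_sub_le _ _).trans (by have := norm_nonneg x; linarith)
  rw [norm_smul, Real.norm_eq_abs, abs_of_pos (by positivity), inv_mul_le_iff₀ hs] at h2
  linarith

lemma kr_int1 {r M : ℝ} {φ : V3 → ℝ} (h : IsKer r M φ) {s : ℝ} (hs : 0 < s) (x : V3) :
    ∫⁻ z, ENNReal.ofReal (kr φ s x z) = 1 := by
  have e : ∀ z, kr φ s x z = s⁻¹ ^ 3 * φ ((x - s⁻¹ • x) + s⁻¹ • z) := by
    intro z; rw [kr, smul_sub]; congr 2; abel
  simp only [e]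
  have : ∀ z, ENNReal.ofReal (s⁻¹ ^ 3 * φ ((x - s⁻¹ • x) + s⁻¹ • z)) =
      ENNReal.ofReal (s⁻¹ ^ 3) * ENNReal.ofReal (φ ((x - s⁻¹ • x) + s⁻¹ • z)) :=
    fun z => ENNReal.ofReal_mul (by positivity)
  simp only [this]
  rw [lintegral_const_mul' _ _ (by simp), aux_lcov h _ _ (by positivity),
    ← ENNReal.ofReal_mul (by positivity), abs_of_pos (by positivity), mul_inv_cancel₀ (by positivity)]
  simp

lemma kr_int2 {r M : ℝ} {φ : V3 → ℝ} (h : IsKer r M φ) {s : ℝ} (hs : 0 < s) (hs2 : s ≤ 1 / 2) (z : V3) :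
    ∫⁻ x, ENNReal.ofReal (kr φ s x z) ≤ ENNReal.ofReal 8 := by
  have e : ∀ x, kr φ s x z = s⁻¹ ^ 3 * φ (s⁻¹ • z + (1 - s⁻¹) • x) := by
    intro z; rw [kr, smul_sub, sub_smul, one_smul]; congr 2; abel
  simp only [e]
  have h2 : 2 ≤ s⁻¹ := by rw [le_inv_comm₀ (by norm_num) hs]; linarith
  have : ∀ x, ENNReal.ofReal (s⁻¹ ^ 3 * φ (s⁻¹ • z + (1 - s⁻¹) • x)) =
      ENNReal.ofReal (s⁻¹ ^ 3) * ENNReal.ofReal (φ (s⁻¹ • z + (1 - s⁻¹) • x)) :=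
    fun z => ENNReal.ofReal_mul (by positivity)
  simp only [this]
  rw [lintegral_const_mul' _ _ (by simp), aux_lcov h _ _ (by linarith),
    ← ENNReal.ofReal_mul (by positivity)]
  apply ENNReal.ofReal_le_ofReal
  rw [abs_pow, abs_sub_comm, abs_of_pos (by linarith : 0 < s⁻¹ - 1), ← div_eq_mul_inv, ← div_pow]
  have : s⁻¹ / (s⁻¹ - 1) ≤ 2 := by rw [div_le_iff₀ (by linarith)]; linarith
  calc _ ≤ (2:ℝ) ^ 3 := by
        have : 0 ≤ s⁻¹ / (s⁻¹ - 1) := div_nonneg (by linarith) (by linarith)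
        gcongr
    _ = 8 := by norm_num

/-- normalized measure on the ball -/
def muB (r : ℝ) : Measure V3 := (volume (ball (0:V3) r))⁻¹ • volume.restrict (ball (0:V3) r)

lemma muB_prob (r : ℝ) (hr : 0 < r) : IsProbabilityMeasure (muB r) := by
  constructor
  rw [muB, Measure.smul_apply, Measure.restrict_apply_univ, smul_eq_mul,
    ENNReal.inv_mul_cancel (measure_ball_pos _ _ hr).ne' measure_ball_lt_top.ne]

def kap (r : ℝ) (φ : V3 → ℝ) (s : ℝ) (x z : V3) : ℝ≥0∞ :=
  volume (ball (0:V3) r) * ENNReal.ofReal (kr φ s x z)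

lemma kap_meas {r M : ℝ} {φ : V3 → ℝ} (h : IsKer r M φ) :
    Measurable (fun p : ℝ × V3 × V3 => kap r φ p.1 p.2.1 p.2.2) := by
  have hc : Measurable φ := h.smooth.continuous.measurable
  unfold kap kr
  fun_prop

lemma kap_int {r : ℝ} (hr : 0 < r) (f : V3 → ℝ≥0∞) :
    ∫⁻ z, volume (ball (0:V3) r) * f z ∂(muB r) = ∫⁻ z in ball (0:V3) r, f z := by
  rw [muB, lintegral_smul_measure, lintegral_const_mul' _ _ measure_ball_lt_top.ne, smul_eq_mul,
    ← mul_assoc, ENNReal.inv_mul_cancel (measure_ball_pos _ _ hr).ne' measure_ball_lt_top.ne, one_mul]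

lemma kap_int1 {r M : ℝ} {φ : V3 → ℝ} (hr : 0 < r) (h : IsKer r M φ) {s : ℝ} (hs : s ∈ Ioo (0:ℝ) 1) (x : V3) :
    ∫⁻ z, kap r φ s x z ∂(muB r) ≤ 1 := by
  unfold kap
  rw [kap_int hr, ← kr_int1 h hs.1 x]
  exact setLIntegral_le_lintegral _ _

lemma kap_le {r : ℝ} {φ : V3 → ℝ} (hr : 0 < r) (h : IsKer r (64 / volume.real (ball (0:V3) r)) φ)
    {s : ℝ} (hs : s ∈ Ioo (0:ℝ) 1) (x z : V3) :
    kap r φ s x z ≤ ENNReal.ofReal (512 * s ^ (-3:ℝ)) := by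
  have hv := aux_volpos r hr
  have hs0 := hs.1
  rw [kap, ← ENNReal.ofReal_toReal (measure_ball_lt_top (μ := volume) (x := (0:V3)) (r := r)).ne,
    ← ENNReal.ofReal_mul ENNReal.toReal_nonneg]
  apply ENNReal.ofReal_le_ofReal
  change volume.real (ball (0:V3) r) * _ ≤ _
  have e : s ^ (-3:ℝ) = s⁻¹ ^ 3 := by
    rw [Real.rpow_neg hs0.le, inv_pow]; norm_cast
  rw [e, kr]
  calc _ ≤ volume.real (ball (0:V3) r) * (s⁻¹ ^ 3 * (64 / volume.real (ball (0:V3) r))) := by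
        gcongr; exact h.le _
    _ = 64 * s⁻¹ ^ 3 := by field_simp
    _ ≤ _ := by gcongr; norm_num

lemma kap_le' {r : ℝ} {φ : V3 → ℝ} (hr : 0 < r) (h : IsKer r (64 / volume.real (ball (0:V3) r)) φ)
    {s : ℝ} (hs : 1 / 2 ≤ s) (x z : V3) :
    kap r φ s x z ≤ ENNReal.ofReal 512 := by
  have hv := aux_volpos r hr
  have hs0 : 0 < s := by linarith
  rw [kap, ← ENNReal.ofReal_toReal (measure_ball_lt_top (μ := volume) (x := (0:V3)) (r := r)).ne,
    ← ENNReal.ofReal_mul ENNReal.toReal_nonneg]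
  apply ENNReal.ofReal_le_ofReal
  change volume.real (ball (0:V3) r) * _ ≤ _
  have h2 : s⁻¹ ≤ 2 := by rw [inv_le_comm₀ hs0 (by norm_num)]; linarith
  rw [kr]
  calc _ ≤ volume.real (ball (0:V3) r) * (2 ^ 3 * (64 / volume.real (ball (0:V3) r))) := by
        gcongr
        · exact h.nonneg _
        · exact h.le _
    _ = 512 := by field_simp; norm_num

lemma kap_int2 {r : ℝ} {φ : V3 → ℝ} (hr : 0 < r) (h : IsKer r (64 / volume.real (ball (0:V3) r)) φ)
    {s : ℝ} (hs : s ∈ Ioo (0:ℝ) 1) (z : V3) :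
    ∫⁻ x, kap r φ s x z ∂(muB r) ≤ ENNReal.ofReal 512 := by
  have := muB_prob r hr
  rcases le_total s (1/2) with h2 | h2
  · unfold kap
    rw [kap_int hr]
    exact (setLIntegral_le_lintegral _ _).trans ((kr_int2 h hs.1 h2 z).trans
      (ENNReal.ofReal_le_ofReal (by norm_num)))
  · calc _ ≤ ∫⁻ x, ENNReal.ofReal 512 ∂(muB r) := lintegral_mono fun x => kap_le' hr h h2 x z
      _ = _ := by simp


/-- derivative of the kernel in the scale parameter -/
def dkr (φ : V3 → ℝ) (s : ℝ) (x z : V3) : ℝ :=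
  -(3 * s⁻¹ ^ 4 * φ (x + s⁻¹ • (z - x))) - s⁻¹ ^ 5 * fderiv ℝ φ (x + s⁻¹ • (z - x)) (z - x)

lemma kr_hasDerivAt {φ : V3 → ℝ} (h : ContDiff ℝ (⊤ : ℕ∞) φ) {s : ℝ} (hs : s ≠ 0) (x z : V3) :
    HasDerivAt (fun s => kr φ s x z) (dkr φ s x z) s := by
  have h1 : HasDerivAt (fun s : ℝ => s⁻¹) (-(s ^ 2)⁻¹) s := hasDerivAt_inv hs
  have h2 : HasDerivAt (fun s : ℝ => x + s⁻¹ • (z - x)) ((-(s ^ 2)⁻¹) • (z - x)) s :=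
    (h1.smul_const (z - x)).const_add x
  have h3 : HasFDerivAt φ (fderiv ℝ φ (x + s⁻¹ • (z - x))) (x + s⁻¹ • (z - x)) :=
    ((h.differentiable (by simp)) _).hasFDerivAt
  have h4 := h3.comp_hasDerivAt s h2
  have h5 := (h1.pow 3).mul h4
  refine h5.congr_deriv ?_
  simp only [dkr, map_smul, smul_eq_mul, Pi.pow_apply, Function.comp, ← inv_pow]
  push_cast
  norm_num
  ring

lemma dkr_cont {φ : V3 → ℝ} (h : ContDiff ℝ (⊤ : ℕ∞) φ) (s : ℝ) (x : V3) :
    Continuous (fun z => dkr φ s x z) := by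
  have h0 := h.continuous
  have h1 : Continuous (fderiv ℝ φ) := h.continuous_fderiv (by simp)
  unfold dkr
  fun_prop

lemma kr_cont {φ : V3 → ℝ} (h : ContDiff ℝ (⊤ : ℕ∞) φ) (s : ℝ) (x : V3) :
    Continuous (fun z => kr φ s x z) := by
  have h0 := h.continuous
  unfold kr
  fun_prop

lemma dkr_contOn {φ : V3 → ℝ} (h : ContDiff ℝ (⊤ : ℕ∞) φ) (x z : V3) :
    ContinuousOn (fun s => dkr φ s x z) (Ioi 0) := by
  have h0 := h.continuous
  have h1 : Continuous (fderiv ℝ φ) := h.continuous_fderiv (by simp)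
  have h2 : ContinuousOn (fun s : ℝ => s⁻¹) (Ioi 0) :=
    continuousOn_inv₀.mono (fun s hs => (ne_of_gt hs : s ≠ 0))
  have h3 : ContinuousOn (fun s : ℝ => x + s⁻¹ • (z - x)) (Ioi 0) := by fun_prop
  have h4 := h0.comp_continuousOn h3
  have h5 := h1.comp_continuousOn h3
  unfold dkr
  refine ContinuousOn.sub (ContinuousOn.neg ?_) ?_
  · exact (continuousOn_const.mul (h2.pow 4)).mul h4
  · exact (h2.pow 5).mul (h5.clm_apply continuousOn_const)

lemma dkr_bound {r M : ℝ} {φ : V3 → ℝ} (h : IsKer r M φ) (a : ℝ) (ha : 0 < a) :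
    ∃ K, ∀ s, a ≤ s → ∀ x ∈ ball (0:V3) r, ∀ z ∈ ball (0:V3) r, ‖dkr φ s x z‖ ≤ K := by
  have h1 : Continuous (fderiv ℝ φ) := h.smooth.continuous_fderiv (by simp)
  obtain ⟨M1, hM1⟩ := h1.bounded_above_of_compact_support (h.compact.fderiv ℝ)
  refine ⟨3 * a⁻¹ ^ 4 * M + a⁻¹ ^ 5 * (M1 * (2 * r)), fun s hs x hx z hz => ?_⟩
  have hs0 : 0 < s := ha.trans_le hs
  have hi : s⁻¹ ≤ a⁻¹ := inv_anti₀ ha hs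
  have hi0 : 0 < s⁻¹ := by positivity
  have hx' : ‖x‖ < r := by simpa using hx
  have hz' : ‖z‖ < r := by simpa using hz
  have hzx : ‖z - x‖ ≤ 2 * r := (norm_sub_le _ _).trans (by linarith)
  have hM0 : 0 ≤ M := (h.nonneg 0).trans (h.le 0)
  have hM10 : 0 ≤ M1 := (norm_nonneg _).trans (hM1 0)
  unfold dkr
  refine (norm_sub_le _ _).trans (add_le_add ?_ ?_)
  · rw [norm_neg, Real.norm_eq_abs, abs_of_nonneg (by have := h.nonneg (x + s⁻¹ • (z - x)); positivity)]
    gcongr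
    · exact h.nonneg _
    · exact h.le _
  · rw [norm_mul, Real.norm_eq_abs, abs_of_nonneg (by positivity)]
    gcongr
    exact ((fderiv ℝ φ _).le_opNorm _).trans (by gcongr; exact hM1 _)

lemma kr_bound {r M : ℝ} {φ : V3 → ℝ} (h : IsKer r M φ) {s : ℝ} (hs : 0 < s) (x z : V3) :
    ‖kr φ s x z‖ ≤ s⁻¹ ^ 3 * M := by
  rw [Real.norm_eq_abs, abs_of_nonneg (kr_nonneg h hs x z), kr]
  gcongr
  exact h.le _

/-- test functions realizing the divergence structure -/
def psi (φ : V3 → ℝ) (s : ℝ) (x : V3) (i : Fin 3) (z : V3) : ℝ :=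
  s⁻¹ ^ 4 * φ (x + s⁻¹ • (z - x)) * (z i - x i)

lemma psi_smooth {φ : V3 → ℝ} (h : ContDiff ℝ (⊤ : ℕ∞) φ) (s : ℝ) (x : V3) (i : Fin 3) :
    ContDiff ℝ (⊤ : ℕ∞) (psi φ s x i) := by
  unfold psi
  have : ContDiff ℝ (⊤ : ℕ∞) (fun z : V3 => z i) := by
    exact (EuclideanSpace.proj (𝕜 := ℝ) i).contDiff
  have h2 : ContDiff ℝ (⊤ : ℕ∞) (fun z : V3 => φ (x + s⁻¹ • (z - x))) := by
    apply h.comp; fun_prop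
  fun_prop

lemma psi_test {r M : ℝ} {φ : V3 → ℝ} (hr : 0 < r) (h : IsKer r M φ) {s : ℝ} (hs : 0 < s) (hs1 : s ≤ 1)
    {x : V3} (hx : x ∈ ball (0:V3) r) (i : Fin 3) : IsSpaceTest (ball (0:V3) r) (psi φ s x i) := by
  have hx' : ‖x‖ < r := by simpa using hx
  have key : tsupport (psi φ s x i) ⊆ closedBall 0 ((1 - s) * ‖x‖ + s * (r / 2)) := by
    apply closure_minimal _ isClosed_closedBall
    intro z hz
    have hz1 : φ (x + s⁻¹ • (z - x)) ≠ 0 := by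
      intro h0; apply hz; simp [psi, h0]
    have h1 := h.norm_le hz1
    have e : z = (1 - s) • x + s • (x + s⁻¹ • (z - x)) := by
      rw [smul_add, smul_smul, mul_inv_cancel₀ hs.ne', sub_smul, one_smul, one_smul]; abel
    rw [mem_closedBall, dist_zero_right, e]
    refine (norm_add_le _ _).trans ?_
    rw [norm_smul, norm_smul, Real.norm_eq_abs, Real.norm_eq_abs, abs_of_nonneg (by linarith), abs_of_pos hs]
    gcongr
  refine ⟨psi_smooth h.smooth s x i,
    (isCompact_closedBall (0:V3) _).of_isClosed_subset (isClosed_tsupport _) key,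
    key.trans (closedBall_subset_ball ?_)⟩
  nlinarith

lemma psi_fderiv {φ : V3 → ℝ} (h : ContDiff ℝ (⊤ : ℕ∞) φ) (s : ℝ) (x z : V3) (i : Fin 3) (e : V3) :
    fderiv ℝ (psi φ s x i) z e = s⁻¹ ^ 4 * φ (x + s⁻¹ • (z - x)) * e i
      + s⁻¹ ^ 5 * fderiv ℝ φ (x + s⁻¹ • (z - x)) e * (z i - x i) := by
  have h2 : HasFDerivAt (fun z : V3 => x + s⁻¹ • (z - x)) (s⁻¹ • ContinuousLinearMap.id ℝ V3) z :=
    (((hasFDerivAt_id z).sub_const x).const_smul s⁻¹).const_add x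
  have h3 : HasFDerivAt φ (fderiv ℝ φ (x + s⁻¹ • (z - x))) (x + s⁻¹ • (z - x)) :=
    ((h.differentiable (by simp)) _).hasFDerivAt
  have h4 := (h3.comp z h2).const_mul (s⁻¹ ^ 4)
  have h5 : HasFDerivAt (fun z : V3 => z i - x i) (EuclideanSpace.proj (𝕜 := ℝ) i) z :=
    (EuclideanSpace.proj (𝕜 := ℝ) i).hasFDerivAt.sub_const _
  have h6 := h4.mul h5
  have : fderiv ℝ (psi φ s x i) z = _ := h6.fderiv
  rw [this]
  simp [Function.comp]
  ring

lemma psi_sum {φ : V3 → ℝ} (h : ContDiff ℝ (⊤ : ℕ∞) φ) (s : ℝ) (x z : V3) :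
    ∑ i, fderiv ℝ (psi φ s x i) z (e3 i) = - dkr φ s x z := by
  simp only [psi_fderiv h]
  have hz : z - x = ∑ i, (z i - x i) • e3 i := by
    ext j; simp [e3, Pi.single_apply]
  have h1 : fderiv ℝ φ (x + s⁻¹ • (z - x)) (z - x)
      = ∑ i, (z i - x i) * fderiv ℝ φ (x + s⁻¹ • (z - x)) (e3 i) := by
    conv_lhs => arg 2; rw [hz]
    simp only [map_sum, map_smul, smul_eq_mul]
  rw [dkr, h1]
  simp only [Fin.sum_univ_three]
  simp [e3]
  ring


lemma int_hasDerivAt {r M : ℝ} {φ : V3 → ℝ} (h : IsKer r M φ) {u : V3 → V3}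
    (hu : IntegrableOn u (ball (0:V3) r)) {x : V3} (hx : x ∈ ball (0:V3) r) {s : ℝ} (hs : 0 < s) :
    HasDerivAt (fun s => ∫ z in ball (0:V3) r, kr φ s x z • u z)
      (∫ z in ball (0:V3) r, dkr φ s x z • u z) s := by
  obtain ⟨K, hK⟩ := dkr_bound h (s / 2) (by positivity)
  refine (hasDerivAt_integral_of_dominated_loc_of_deriv_le (F := fun s z => kr φ s x z • u z)
    (F' := fun s z => dkr φ s x z • u z) (s := Ioi (s/2))
    (bound := fun z => K * ‖u z‖) (Ioi_mem_nhds (half_lt_self hs)) ?_ ?_ ?_ ?_ ?_ ?_).2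
  · exact Eventually.of_forall fun s => ((kr_cont h.smooth s x).aestronglyMeasurable).smul hu.1
  · exact hu.bdd_smul (s⁻¹ ^ 3 * M) (kr_cont h.smooth s x).aestronglyMeasurable
      (Eventually.of_forall fun z => kr_bound h hs x z)
  · exact ((dkr_cont h.smooth s x).aestronglyMeasurable).smul hu.1
  · filter_upwards [ae_restrict_mem measurableSet_ball] with z hz t ht
    rw [norm_smul]
    gcongr
    exact hK t (le_of_lt ht) x hx z hz
  · exact hu.norm.const_mul K
  · refine Eventually.of_forall fun z t ht => ?_
    have ht0 : t ≠ 0 := by have : s / 2 < t := ht; linarith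
    exact (kr_hasDerivAt h.smooth ht0 x z).smul_const (u z)

lemma int_contOn {r M : ℝ} {φ : V3 → ℝ} (h : IsKer r M φ) {u : V3 → V3}
    (hu : IntegrableOn u (ball (0:V3) r)) {x : V3} (hx : x ∈ ball (0:V3) r) {a : ℝ} (ha : 0 < a) :
    ContinuousOn (fun s => ∫ z in ball (0:V3) r, dkr φ s x z • u z) (Ici a) := by
  obtain ⟨K, hK⟩ := dkr_bound h a ha
  refine continuousOn_of_dominated (bound := fun z => K * ‖u z‖) ?_ ?_ (hu.norm.const_mul K) ?_
  · exact fun s _ => ((dkr_cont h.smooth s x).aestronglyMeasurable).smul hu.1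
  · intro s hs
    filter_upwards [ae_restrict_mem measurableSet_ball] with z hz
    rw [norm_smul]
    gcongr
    exact hK s hs x hx z hz
  · refine Eventually.of_forall fun z => ?_
    exact ((dkr_contOn h.smooth x z).mono (fun t ht => ha.trans_le ht)).smul continuousOn_const

lemma int_parts {r M : ℝ} {φ : V3 → ℝ} (hr : 0 < r) (h : IsKer r M φ) {u : V3 → V3} {D : V3 → V3 →L[ℝ] V3}
    (hu : IntegrableOn u (ball (0:V3) r)) (hD : IntegrableOn D (ball (0:V3) r))
    (hw : ∀ ψ, IsSpaceTest (ball (0:V3) r) ψ → ∀ e : V3,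
      (∫ z in ball (0:V3) r, ψ z • D z e) = - ∫ z in ball (0:V3) r, fderiv ℝ ψ z e • u z)
    {x : V3} (hx : x ∈ ball (0:V3) r) {s : ℝ} (hs : 0 < s) (hs1 : s ≤ 1) :
    (∫ z in ball (0:V3) r, dkr φ s x z • u z)
      = ∫ z in ball (0:V3) r, (s⁻¹ ^ 4 * φ (x + s⁻¹ • (z - x))) • D z (z - x) := by
  have hT := fun i => psi_test hr h hs hs1 hx i
  have i1 : ∀ i : Fin 3, IntegrableOn (fun z => fderiv ℝ (psi φ s x i) z (e3 i) • u z) (ball (0:V3) r) := by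
    intro i
    have hc : Continuous (fun z => fderiv ℝ (psi φ s x i) z) := (hT i).1.continuous_fderiv (by simp)
    obtain ⟨K, hK⟩ := hc.bounded_above_of_compact_support ((hT i).2.1.fderiv ℝ)
    refine hu.bdd_smul (K * ‖e3 i‖) (hc.clm_apply continuous_const).aestronglyMeasurable
      (Eventually.of_forall fun z => ?_)
    exact ((fderiv ℝ (psi φ s x i) z).le_opNorm _).trans (by gcongr; exact hK z)
  have i2 : ∀ i : Fin 3, IntegrableOn (fun z => psi φ s x i z • D z (e3 i)) (ball (0:V3) r) := by
    intro i
    have hc : Continuous (psi φ s x i) := (hT i).1.continuous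
    obtain ⟨K, hK⟩ := hc.bounded_above_of_compact_support (hT i).2.1
    exact (hD.apply_continuousLinearMap (e3 i)).bdd_smul K hc.aestronglyMeasurable
      (Eventually.of_forall hK)
  have e1 : ∀ z, dkr φ s x z • u z = - ∑ i, fderiv ℝ (psi φ s x i) z (e3 i) • u z := by
    intro z
    rw [← Finset.sum_smul, psi_sum h.smooth, neg_smul, neg_neg]
  have e2 : ∀ z, (s⁻¹ ^ 4 * φ (x + s⁻¹ • (z - x))) • D z (z - x) = ∑ i, psi φ s x i z • D z (e3 i) := by
    intro z
    have hz : z - x = ∑ i, (z i - x i) • e3 i := by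
      ext j; simp [e3, Pi.single_apply]
    conv_lhs => arg 2; rw [hz]
    simp only [map_sum, map_smul, Finset.smul_sum, smul_smul, psi]
  simp only [e1, e2]
  rw [integral_neg, integral_finsetSum _ (fun i _ => i1 i), integral_finsetSum _ (fun i _ => i2 i),
    ← Finset.sum_neg_distrib]
  exact Finset.sum_congr rfl fun i _ => (hw _ (hT i) (e3 i)).symm

lemma int_bound {r M : ℝ} {φ : V3 → ℝ} (hr : 0 < r) (h : IsKer r M φ) {u : V3 → V3} {D : V3 → V3 →L[ℝ] V3}
    (hu : IntegrableOn u (ball (0:V3) r)) (hD : IntegrableOn D (ball (0:V3) r))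
    (hw : ∀ ψ, IsSpaceTest (ball (0:V3) r) ψ → ∀ e : V3,
      (∫ z in ball (0:V3) r, ψ z • D z e) = - ∫ z in ball (0:V3) r, fderiv ℝ ψ z e • u z)
    {g : V3 → ℝ≥0∞} (hg : ∀ᵐ z ∂(volume.restrict (ball (0:V3) r)), ‖D z‖ₑ ≤ g z)
    {x : V3} (hx : x ∈ ball (0:V3) r) {s : ℝ} (hs : 0 < s) (hs1 : s ≤ 1) :
    ‖∫ z in ball (0:V3) r, dkr φ s x z • u z‖ₑ
      ≤ ENNReal.ofReal (2 * r) * ∫⁻ z in ball (0:V3) r, ENNReal.ofReal (kr φ s x z) * g z := by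
  rw [int_parts hr h hu hD hw hx hs hs1, ← lintegral_const_mul' _ _ ENNReal.ofReal_ne_top]
  refine (enorm_integral_le_lintegral_enorm _).trans (lintegral_mono_ae ?_)
  filter_upwards [hg] with z hz
  by_cases h0 : φ (x + s⁻¹ • (z - x)) = 0
  · simp [h0]
  have h1 := kr_supp h hs hx h0
  have h2 := h.nonneg (x + s⁻¹ • (z - x))
  calc ‖(s⁻¹ ^ 4 * φ (x + s⁻¹ • (z - x))) • D z (z - x)‖ₑ
      ≤ ENNReal.ofReal ((s⁻¹ ^ 4 * φ (x + s⁻¹ • (z - x))) * (2 * r * s)) * ‖D z‖ₑ := by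
        rw [← ofReal_norm, ← ofReal_norm, ← ENNReal.ofReal_mul (by positivity)]
        apply ENNReal.ofReal_le_ofReal
        rw [norm_smul, Real.norm_eq_abs, abs_of_nonneg (by positivity)]
        have := (D z).le_opNorm (z - x)
        calc _ ≤ (s⁻¹ ^ 4 * φ (x + s⁻¹ • (z - x))) * (‖D z‖ * (2 * r * s)) := by
              gcongr; exact this.trans (by gcongr)
          _ = _ := by ring
    _ = ENNReal.ofReal (2 * r) * (ENNReal.ofReal (kr φ s x z) * ‖D z‖ₑ) := by
        rw [← mul_assoc (ENNReal.ofReal (2 * r)), ← ENNReal.ofReal_mul (by positivity), kr]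
        congr 2
        field_simp
    _ ≤ _ := by gcongr

lemma int_tendsto {r M : ℝ} {φ : V3 → ℝ} (hr : 0 < r) (h : IsKer r M φ) {u : V3 → V3}
    (hu : IntegrableOn u (ball (0:V3) r)) :
    ∀ᵐ x ∂(volume.restrict (ball (0:V3) r)),
      Tendsto (fun s => ∫ z in ball (0:V3) r, kr φ s x z • u z) (𝓝[>] 0) (𝓝 (u x)) := by
  have hi : Integrable ((ball (0:V3) r).indicator u) := (integrable_indicator_iff measurableSet_ball).2 hu
  have hl := hi.locallyIntegrable
  filter_upwards [ae_restrict_of_ae ((Besicovitch.vitaliFamily (volume : Measure V3)).ae_tendsto_average_norm_sub hl),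
    ae_restrict_mem measurableSet_ball] with x h₀ hx
  have hφ' : Tendsto (fun s : ℝ => 2 * r * s) (𝓝[>] 0) (𝓝[>] 0) := by
    refine tendsto_nhdsWithin_iff.2 ⟨?_, ?_⟩
    · have : Continuous (fun s : ℝ => 2 * r * s) := by fun_prop
      simpa using (this.tendsto 0).mono_left nhdsWithin_le_nhds
    · filter_upwards [self_mem_nhdsWithin] with s hs
      have : (0:ℝ) < s := hs
      simp only [mem_Ioi]; positivity
  have h1 := (h₀.comp (Besicovitch.tendsto_filterAt volume x)).comp hφ'
  have hux : (ball (0:V3) r).indicator u x = u x := indicator_of_mem hx u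
  rw [hux] at h1
  have h2 := tendsto_integral_smul_of_tendsto_average_norm_sub
    (a := fun s => closedBall x (2 * r * s)) (g := fun s z => kr φ s x z)
    (f := (ball (0:V3) r).indicator u) (μ := volume) (l := 𝓝[>] (0:ℝ)) (c := u x)
    ((2 * r) ^ 3 * M * volume.real (ball (0:V3) 1)) h1 ?_ ?_ ?_ ?_
  · refine h2.congr fun s => ?_
    rw [← integral_indicator measurableSet_ball]
    congr 1; ext1 z
    by_cases hz : z ∈ ball (0:V3) r <;> simp [hz]
  · exact Eventually.of_forall fun s => hi.integrableOn
  · apply tendsto_const_nhds.congr'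
    filter_upwards [self_mem_nhdsWithin] with s hs
    rw [integral_eq_lintegral_of_nonneg_ae (Eventually.of_forall fun z => kr_nonneg h hs x z)
      (kr_cont h.smooth s x).aestronglyMeasurable, kr_int1 h hs]
    simp
  · filter_upwards [self_mem_nhdsWithin] with s hs z hz
    rw [mem_closedBall, dist_eq_norm]
    refine kr_supp h hs hx ?_
    intro h0; apply hz; simp [kr, h0]
  · filter_upwards [self_mem_nhdsWithin] with s hs z
    have hs : (0:ℝ) < s := hs
    have hv := aux_volpos 1 one_pos
    refine (kr_bound h hs x z).trans_eq ?_
    rw [Measure.addHaar_real_closedBall _ _ (by positivity), aux_finrank]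
    field_simp

lemma pointwise_bound {r M : ℝ} {φ : V3 → ℝ} (hr : 0 < r) (h : IsKer r M φ) {u : V3 → V3} {D : V3 → V3 →L[ℝ] V3}
    (hu : IntegrableOn u (ball (0:V3) r)) (hD : IntegrableOn D (ball (0:V3) r))
    (hw : ∀ ψ, IsSpaceTest (ball (0:V3) r) ψ → ∀ e : V3,
      (∫ z in ball (0:V3) r, ψ z • D z e) = - ∫ z in ball (0:V3) r, fderiv ℝ ψ z e • u z)
    {g : V3 → ℝ≥0∞} (hg : ∀ᵐ z ∂(volume.restrict (ball (0:V3) r)), ‖D z‖ₑ ≤ g z) :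
    ∀ᵐ x ∂(volume.restrict (ball (0:V3) r)),
      ‖u x - ∫ z in ball (0:V3) r, φ z • u z‖ₑ ≤ ENNReal.ofReal (2 * r) *
        ∫⁻ s in Ioo (0:ℝ) 1, ∫⁻ z in ball (0:V3) r, ENNReal.ofReal (kr φ s x z) * g z := by
  filter_upwards [int_tendsto hr h hu, ae_restrict_mem measurableSet_ball] with x hlim hx
  set F : ℝ → V3 := fun s => ∫ z in ball (0:V3) r, kr φ s x z • u z with hF
  have hF1 : F 1 = ∫ z in ball (0:V3) r, φ z • u z := by
    simp [hF, kr]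
  rw [← hF1]
  have hlim2 : Tendsto (fun s => ‖F s - F 1‖ₑ) (𝓝[>] 0) (𝓝 ‖u x - F 1‖ₑ) :=
    (hlim.sub_const _).enorm
  refine le_of_tendsto hlim2 ?_
  filter_upwards [Ioo_mem_nhdsGT (one_pos)] with a ha
  have hc : ContinuousOn (fun s => ∫ z in ball (0:V3) r, dkr φ s x z • u z) (uIcc a 1) :=
    (int_contOn h hu hx ha.1).mono (by rw [uIcc_of_le ha.2.le]; exact fun s hs => hs.1)
  have hftc : ∫ s in a..1, (∫ z in ball (0:V3) r, dkr φ s x z • u z) = F 1 - F a :=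
    intervalIntegral.integral_eq_sub_of_hasDerivAt
    (fun s hs => by
      rw [uIcc_of_le ha.2.le] at hs
      exact int_hasDerivAt h hu hx (ha.1.trans_le hs.1)) hc.intervalIntegrable
  rw [enorm_sub_rev, ← hftc, intervalIntegral.integral_of_le ha.2.le, ← lintegral_const_mul' _ _ ENNReal.ofReal_ne_top]
  refine (enorm_integral_le_lintegral_enorm _).trans ?_
  rw [← restrict_Ioo_eq_restrict_Ioc]
  calc _ ≤ ∫⁻ s in Ioo a 1, ENNReal.ofReal (2 * r) * ∫⁻ z in ball (0:V3) r, ENNReal.ofReal (kr φ s x z) * g z := by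
        refine setLIntegral_mono' measurableSet_Ioo fun s hs => ?_
        exact int_bound hr h hu hD hw hg hx (ha.1.trans hs.1) hs.2.le
    _ ≤ _ := lintegral_mono_set (Ioo_subset_Ioo_left ha.1.le)


lemma aux_shift {Ω : Type*} [MeasurableSpace Ω] (μ : Measure Ω) [IsProbabilityMeasure μ] (u : Ω → V3)
    (hu : AEStronglyMeasurable u μ) (c : V3) (p : ℝ) (hp : 1 < p) (A : ℝ≥0∞)
    (hc : ‖c‖ₑ ≤ A * ∫⁻ x, ‖u x‖ₑ ∂μ) :
    ∫⁻ x, ‖u x - c‖ₑ ^ p ∂μ ≤ 2 ^ (p - 1) * (1 + A ^ p) * ∫⁻ x, ‖u x‖ₑ ^ p ∂μ := by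
  have hj := aux_jensen μ (fun x => ‖u x‖ₑ) hu.enorm p hp
  rw [measure_univ, ENNReal.one_rpow, one_mul] at hj
  have hc2 : ‖c‖ₑ ^ p ≤ A ^ p * ∫⁻ x, ‖u x‖ₑ ^ p ∂μ := by
    calc _ ≤ (A * ∫⁻ x, ‖u x‖ₑ ∂μ) ^ p := ENNReal.rpow_le_rpow hc (by linarith)
      _ = A ^ p * (∫⁻ x, ‖u x‖ₑ ∂μ) ^ p := ENNReal.mul_rpow_of_nonneg _ _ (by linarith)
      _ ≤ _ := by gcongr
  calc ∫⁻ x, ‖u x - c‖ₑ ^ p ∂μ ≤ ∫⁻ x, 2 ^ (p - 1) * (‖u x‖ₑ ^ p + ‖c‖ₑ ^ p) ∂μ := by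
        refine lintegral_mono fun x => ?_
        refine le_trans ?_ (ENNReal.rpow_add_le_mul_rpow_add_rpow _ _ hp.le)
        exact ENNReal.rpow_le_rpow (enorm_sub_le) (by linarith)
    _ = 2 ^ (p - 1) * (∫⁻ x, ‖u x‖ₑ ^ p ∂μ + ‖c‖ₑ ^ p) := by
        rw [lintegral_const_mul' _ _ (ENNReal.rpow_ne_top_of_nonneg (by linarith) (by simp)),
          lintegral_add_right _ measurable_const]
        simp
    _ ≤ 2 ^ (p - 1) * (∫⁻ x, ‖u x‖ₑ ^ p ∂μ + A ^ p * ∫⁻ x, ‖u x‖ₑ ^ p ∂μ) := by gcongr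
    _ = _ := by ring

lemma norm_le_fnorm (A : V3 →L[ℝ] V3) : ‖A‖ ≤ fnorm A := by
  refine A.opNorm_le_bound (Real.sqrt_nonneg _) fun x => ?_
  have hx : x = ∑ i, x i • e3 i := by
    ext j; simp [e3, Pi.single_apply]
  calc ‖A x‖ = ‖∑ i, x i • A (e3 i)‖ := by
        conv_lhs => rw [hx]
        simp only [map_sum, map_smul]
    _ ≤ ∑ i, ‖A (e3 i)‖ * |x i| := by
        refine (norm_sum_le _ _).trans_eq (Finset.sum_congr rfl fun i _ => ?_)
        rw [norm_smul, Real.norm_eq_abs, mul_comm]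
    _ ≤ Real.sqrt (∑ i, ‖A (e3 i)‖ ^ 2) * Real.sqrt (∑ i, |x i| ^ 2) :=
        Real.sum_mul_le_sqrt_mul_sqrt _ _ _
    _ = _ := by
        rw [EuclideanSpace.norm_eq x]; rfl

lemma fnorm_cont : Continuous fnorm := by
  unfold fnorm fnormSq
  fun_prop

lemma restrict_eq_muB {r : ℝ} (hr : 0 < r) (f : V3 → ℝ≥0∞) :
    ∫⁻ z in ball (0:V3) r, f z = volume (ball (0:V3) r) * ∫⁻ z, f z ∂(muB r) := by
  rw [← kap_int hr, lintegral_const_mul' _ _ measure_ball_lt_top.ne]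

lemma muB_ac (r : ℝ) : muB r ≪ volume.restrict (ball (0:V3) r) :=
  Measure.smul_absolutelyContinuous

lemma int_of_pow {E : Type*} [NormedAddCommGroup E] {r : ℝ} (hr : 0 < r) (f : V3 → E)
    (hf : AEStronglyMeasurable f (volume.restrict (ball (0:V3) r))) (p : ℝ) (hp : 1 < p) (g : V3 → ℝ≥0∞)
    (hg : ∀ z, ‖f z‖ₑ ≤ g z)
    (hI : ∫⁻ z, g z ^ p ∂(muB r) < ∞) : IntegrableOn f (ball (0:V3) r) := by
  refine ⟨hf, ?_⟩
  have := muB_prob r hr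
  have hj := aux_jensen (muB r) (fun x => ‖f x‖ₑ) (hf.mono_ac (muB_ac r)).enorm p hp
  rw [measure_univ, ENNReal.one_rpow, one_mul] at hj
  have h2 : (∫⁻ x, ‖f x‖ₑ ∂(muB r)) ^ p < ∞ :=
    hj.trans_lt ((lintegral_mono fun x => ENNReal.rpow_le_rpow (hg x) (by linarith)).trans_lt hI)
  have h3 : ∫⁻ x, ‖f x‖ₑ ∂(muB r) < ∞ := by
    by_contra hcon
    rw [not_lt, top_le_iff] at hcon
    rw [hcon, ENNReal.top_rpow_of_pos (by linarith)] at h2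
    exact lt_irrefl _ h2
  rw [HasFiniteIntegral, restrict_eq_muB hr]
  exact ENNReal.mul_lt_top measure_ball_lt_top h3

lemma per_time (q α β : ℝ) (hq1 : 9/5 ≤ q) (hq2 : q ≤ 2)
    (hα0 : 0 < α) (hα1 : α ≤ 1 - (3 - q) / (5 * q - 6)) (hβ0 : 0 < β) (hαβ : 2 * α + q * β = 3) :
    ∃ K : ℝ, 0 < K ∧ ∀ (r : ℝ) (_ : 0 < r) (u : V3 → V3) (D : V3 → V3 →L[ℝ] V3)
    (_ : AEStronglyMeasurable u (volume.restrict (ball (0:V3) r)))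
    (_ : AEStronglyMeasurable D (volume.restrict (ball (0:V3) r)))
    (_ : ∀ ψ, IsSpaceTest (ball (0:V3) r) ψ → ∀ e : V3,
      (∫ z in ball (0:V3) r, ψ z • D z e) = - ∫ z in ball (0:V3) r, fderiv ℝ ψ z e • u z)
    (A G : ℝ) (_ : 0 ≤ A) (_ : 0 ≤ G) (_ : ∫⁻ z, ‖u z‖ₑ ^ (2:ℝ) ∂(muB r) ≤ ENNReal.ofReal A)
    (_ : ∫⁻ z, ENNReal.ofReal (fnorm (D z)) ^ q ∂(muB r) ≤ ENNReal.ofReal G),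
    ∫⁻ z, ‖u z - ⨍ y in ball (0:V3) r, u y‖ₑ ^ (3:ℝ) ∂(muB r) ≤
      ENNReal.ofReal (K * r ^ 3 * ((A / r ^ 2) ^ α * G ^ β)) := by
  obtain ⟨K0, hK0, hIntg⟩ := aux_interp q α β 512 hq1 hq2 hα0.le hα1 hαβ (by norm_num)
  refine ⟨64 * K0 * (8194 / 4) ^ α, by positivity, ?_⟩
  intro r hr u D hum hDm hw A G hA hG huA hDG
  have hP := muB_prob r hr
  have hac := muB_ac r
  obtain ⟨φ, hφ⟩ := exists_ker r hr
  have hV := aux_volpos r hr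
  have hu : IntegrableOn u (ball (0:V3) r) :=
    int_of_pow hr u hum 2 (by norm_num) (fun z => ‖u z‖ₑ) (fun z => le_rfl)
      (huA.trans_lt ENNReal.ofReal_lt_top)
  have hnf : ∀ A : V3 →L[ℝ] V3, ‖A‖ₑ ≤ ENNReal.ofReal (fnorm A) := by
    intro A
    rw [← ofReal_norm]
    exact ENNReal.ofReal_le_ofReal (norm_le_fnorm A)
  have hD : IntegrableOn D (ball (0:V3) r) :=
    int_of_pow hr D hDm q (by linarith) (fun z => ENNReal.ofReal (fnorm (D z))) (fun z => hnf _)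
      (hDG.trans_lt ENNReal.ofReal_lt_top)
  set m : V3 := ∫ z in ball (0:V3) r, φ z • u z with hm
  set g : V3 → ℝ≥0∞ := fun z => ENNReal.ofReal (fnorm (hDm.mk D z)) with hgdef
  have hgm : Measurable g :=
    (fnorm_cont.comp_stronglyMeasurable hDm.stronglyMeasurable_mk).measurable.ennreal_ofReal
  have hg : ∀ᵐ z ∂(volume.restrict (ball (0:V3) r)), ‖D z‖ₑ ≤ g z := by
    filter_upwards [hDm.ae_eq_mk] with z hz
    rw [hz]; exact hnf _
  have hgq : ∫⁻ z, g z ^ q ∂(muB r) ≤ ENNReal.ofReal G := by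
    refine (lintegral_congr_ae ?_).trans_le hDG
    filter_upwards [hac.ae_le hDm.ae_eq_mk] with z hz
    simp only [hgdef, ← hz]
  have hpt := pointwise_bound hr hφ hu hD hw hg
  -- bound for the shift
  have hm64 : ‖m‖ₑ ≤ 64 * ∫⁻ x, ‖u x‖ₑ ∂(muB r) := by
    have h1 : ‖m‖ₑ ≤ ∫⁻ z in ball (0:V3) r, ‖φ z • u z‖ₑ := enorm_integral_le_lintegral_enorm _
    rw [restrict_eq_muB hr] at h1
    refine h1.trans ?_
    rw [← lintegral_const_mul' _ _ measure_ball_lt_top.ne, ← lintegral_const_mul' _ _ (by simp)]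
    refine lintegral_mono fun z => ?_
    rw [enorm_smul, ← mul_assoc]
    gcongr
    rw [← ofReal_norm, Real.norm_eq_abs, abs_of_nonneg (hφ.nonneg z),
      ← ENNReal.ofReal_toReal (measure_ball_lt_top (μ := volume) (x := (0:V3)) (r := r)).ne,
      ← ENNReal.ofReal_mul ENNReal.toReal_nonneg]
    rw [show (64 : ℝ≥0∞) = ENNReal.ofReal 64 by simp]
    apply ENNReal.ofReal_le_ofReal
    change volume.real (ball (0:V3) r) * _ ≤ _
    have := hφ.le z
    rw [le_div_iff₀ hV] at this
    linarith
  have humB : AEStronglyMeasurable u (muB r) := hum.mono_ac hac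
  have hwB : AEStronglyMeasurable (fun z => u z - m) (muB r) := humB.sub aestronglyMeasurable_const
  have hsh2 : ∫⁻ x, ‖u x - m‖ₑ ^ (2:ℝ) ∂(muB r) ≤ ENNReal.ofReal (8194 * A) := by
    refine (aux_shift (muB r) u humB m 2 (by norm_num) 64 hm64).trans ?_
    rw [ENNReal.ofReal_mul (by norm_num)]
    refine mul_le_mul' (le_of_eq ?_) huA
    have : (2:ℝ≥0∞) ^ ((2:ℝ) - 1) = 2 := by norm_num
    rw [this]
    norm_num
  have hmean : ∫⁻ z, ‖u z - ⨍ y in ball (0:V3) r, u y‖ₑ ^ (3:ℝ) ∂(muB r) ≤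
      8 * ∫⁻ x, ‖u x - m‖ₑ ^ (3:ℝ) ∂(muB r) := by
    have hav : (⨍ y in ball (0:V3) r, u y) = ∫ y, u y ∂(muB r) := by
      rw [average, Measure.restrict_apply_univ, muB]
    have huB : Integrable u (muB r) := by
      exact Integrable.smul_measure hu (ENNReal.inv_ne_top.2 (measure_ball_pos _ _ hr).ne')
    have hc : ‖(⨍ y in ball (0:V3) r, u y) - m‖ₑ ≤ 1 * ∫⁻ x, ‖u x - m‖ₑ ∂(muB r) := by
      rw [hav, one_mul]
      have : (∫ y, u y ∂(muB r)) - m = ∫ y, (u y - m) ∂(muB r) := by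
        rw [integral_sub huB (integrable_const _)]; simp
      rw [this]
      exact enorm_integral_le_lintegral_enorm _
    have := aux_shift (muB r) (fun z => u z - m) hwB _ 3 (by norm_num) 1 hc
    simp only [sub_sub_sub_cancel_right] at this
    refine this.trans_eq ?_
    congr 1
    have : (2:ℝ≥0∞) ^ ((3:ℝ) - 1) = 4 := by
      rw [show (3:ℝ) - 1 = ((2:ℕ):ℝ) by norm_num, ENNReal.rpow_natCast]; norm_num
    rw [this]; norm_num
  have h2r : 0 < 2 * r := by positivity
  set h : V3 → ℝ := fun x => ‖u x - m‖ / (2 * r) with hh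
  have hh0 : ∀ x, 0 ≤ h x := fun x => by positivity
  have hhm : AEMeasurable h (muB r) := (hwB.norm.aemeasurable).div_const _
  have hpt2 : ∀ᵐ x ∂(muB r), ENNReal.ofReal (h x) ≤
      ∫⁻ s in Ioo (0:ℝ) 1, ∫⁻ z, kap r φ s x z * g z ∂(muB r) := by
    filter_upwards [hac.ae_le hpt] with x hx
    have e : ∀ s, ∫⁻ z, kap r φ s x z * g z ∂(muB r)
        = ∫⁻ z in ball (0:V3) r, ENNReal.ofReal (kr φ s x z) * g z := by
      intro s
      rw [← kap_int hr]
      simp only [kap, mul_assoc]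
    simp only [e, hh]
    rw [ENNReal.ofReal_div_of_pos h2r, ofReal_norm]
    exact ENNReal.div_le_of_le_mul' hx
  have hh2 : ∫⁻ x, ENNReal.ofReal (h x ^ 2) ∂(muB r) ≤ ENNReal.ofReal (8194 / 4 * (A / r ^ 2)) := by
    have e : ∀ x, ENNReal.ofReal (h x ^ 2) = ENNReal.ofReal ((2 * r) ^ 2)⁻¹ * ‖u x - m‖ₑ ^ (2:ℝ) := by
      intro x
      rw [← ofReal_norm, ENNReal.ofReal_rpow_of_nonneg (norm_nonneg _) (by norm_num),
        ← ENNReal.ofReal_mul (by positivity)]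
      congr 1
      rw [Real.rpow_two, hh]; field_simp
    simp only [e]
    rw [lintegral_const_mul' _ _ ENNReal.ofReal_ne_top]
    calc _ ≤ ENNReal.ofReal ((2 * r) ^ 2)⁻¹ * ENNReal.ofReal (8194 * A) := by gcongr
      _ = _ := by
        rw [← ENNReal.ofReal_mul (by positivity)]
        congr 1; field_simp; ring
  have hh3 : ∫⁻ x, ‖u x - m‖ₑ ^ (3:ℝ) ∂(muB r) =
      ENNReal.ofReal ((2 * r) ^ 3) * ∫⁻ x, ENNReal.ofReal (h x ^ 3) ∂(muB r) := by
    rw [← lintegral_const_mul' _ _ ENNReal.ofReal_ne_top]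
    refine lintegral_congr fun x => ?_
    rw [← ofReal_norm, ENNReal.ofReal_rpow_of_nonneg (norm_nonneg _) (by norm_num),
        ← ENNReal.ofReal_mul (by positivity)]
    congr 1
    rw [show (3:ℝ) = ((3:ℕ):ℝ) by norm_num, Real.rpow_natCast, hh]; field_simp
  -- the limiting argument
  have hA' : 0 ≤ A / r ^ 2 := by positivity
  have hfin : ∫⁻ x, ENNReal.ofReal (h x ^ 3) ∂(muB r) ≤
      ENNReal.ofReal (K0 * ((8194 / 4 * (A / r ^ 2)) ^ α * G ^ β)) := by
    have hlim : Tendsto (fun ε : ℝ => ENNReal.ofReal (K0 * ((8194 / 4 * (A / r ^ 2) + ε) ^ α * (G + ε) ^ β)))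
        (𝓝[>] 0) (𝓝 (ENNReal.ofReal (K0 * ((8194 / 4 * (A / r ^ 2)) ^ α * G ^ β)))) := by
      have hc : Continuous (fun ε : ℝ => ENNReal.ofReal (K0 * ((8194 / 4 * (A / r ^ 2) + ε) ^ α * (G + ε) ^ β))) := by
        refine ENNReal.continuous_ofReal.comp (continuous_const.mul (Continuous.mul ?_ ?_))
        · exact (continuous_const.add continuous_id).rpow_const fun _ => Or.inr hα0.le
        · exact (continuous_const.add continuous_id).rpow_const fun _ => Or.inr hβ0.le
      have := (hc.tendsto 0).mono_left (nhdsWithin_le_nhds (s := Ioi 0))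
      simpa only [add_zero] using this
    refine ge_of_tendsto hlim ?_
    filter_upwards [self_mem_nhdsWithin] with ε hε
    have hε : (0:ℝ) < ε := hε
    refine hIntg (muB r) (kap r φ) (kap_meas hφ) g hgm (fun s hs x => kap_int1 hr hφ hs x)
      (fun s hs z => kap_int2 hr hφ hs z) (fun s hs x z => kap_le hr hφ hs x z) (G + ε) (by positivity)
      (hgq.trans (ENNReal.ofReal_le_ofReal (by linarith))) h hh0 hhm hpt2
      (8194 / 4 * (A / r ^ 2) + ε) (by positivity) (hh2.trans (ENNReal.ofReal_le_ofReal (by linarith)))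
  refine hmean.trans ?_
  rw [hh3]
  calc _ ≤ 8 * (ENNReal.ofReal ((2 * r) ^ 3) * ENNReal.ofReal (K0 * ((8194 / 4 * (A / r ^ 2)) ^ α * G ^ β))) := by
        gcongr
    _ = _ := by
        rw [show (8 : ℝ≥0∞) = ENNReal.ofReal 8 by simp, ← ENNReal.ofReal_mul (by positivity),
          ← ENNReal.ofReal_mul (by norm_num), Real.mul_rpow (by norm_num) hA']
        congr 1; ring


lemma per_time_real (q α β : ℝ) (hq1 : 9/5 ≤ q) (hq2 : q ≤ 2)
    (hα0 : 0 < α) (hα1 : α ≤ 1 - (3 - q) / (5 * q - 6)) (hβ0 : 0 < β) (hαβ : 2 * α + q * β = 3) :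
    ∃ K : ℝ, 0 < K ∧ ∀ (r : ℝ) (_ : 0 < r) (u : V3 → V3) (D : V3 → V3 →L[ℝ] V3)
    (_ : AEStronglyMeasurable u (volume.restrict (ball (0:V3) r)))
    (_ : AEStronglyMeasurable D (volume.restrict (ball (0:V3) r)))
    (_ : ∀ ψ, IsSpaceTest (ball (0:V3) r) ψ → ∀ e : V3,
      (∫ z in ball (0:V3) r, ψ z • D z e) = - ∫ z in ball (0:V3) r, fderiv ℝ ψ z e • u z)
    (_ : IntegrableOn (fun z => ‖u z‖ ^ 2) (ball (0:V3) r))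
    (_ : IntegrableOn (fun z => fnorm (D z) ^ q) (ball (0:V3) r)),
    ∫ z in ball (0:V3) r, ‖u z - ⨍ y in ball (0:V3) r, u y‖ ^ 3 ≤
      K * r ^ (6 - 5 * α - 3 * β) * (∫ z in ball (0:V3) r, ‖u z‖ ^ 2) ^ α
        * (∫ z in ball (0:V3) r, fnorm (D z) ^ q) ^ β := by
  obtain ⟨K, hK, hmain⟩ := per_time q α β hq1 hq2 hα0 hα1 hβ0 hαβ
  have hV1 := aux_volpos 1 one_pos
  set V1 := volume.real (ball (0:V3) 1) with hV1def
  refine ⟨V1 * K * V1⁻¹ ^ α * V1⁻¹ ^ β, by positivity, ?_⟩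
  intro r hr u D hum hDm hw hu2 hDq
  have hV := aux_volpos r hr
  have hVr := aux_vol r hr
  rw [← hV1def] at hVr
  set V := volume.real (ball (0:V3) r) with hVdef
  set I2 := ∫ z in ball (0:V3) r, ‖u z‖ ^ 2 with hI2
  set Iq := ∫ z in ball (0:V3) r, fnorm (D z) ^ q with hIq
  have hI20 : 0 ≤ I2 := integral_nonneg fun z => by positivity
  have hfn : ∀ A : V3 →L[ℝ] V3, 0 ≤ fnorm A := fun A => Real.sqrt_nonneg _
  have hIq0 : 0 ≤ Iq := integral_nonneg fun z => Real.rpow_nonneg (hfn _) _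
  have hVE : volume (ball (0:V3) r) = ENNReal.ofReal V :=
    (ENNReal.ofReal_toReal measure_ball_lt_top.ne).symm
  have hmu : ∀ f : V3 → ℝ≥0∞, ∫⁻ z, f z ∂(muB r) = ENNReal.ofReal V⁻¹ * ∫⁻ z in ball (0:V3) r, f z := by
    intro f
    rw [muB, lintegral_smul_measure, hVE, ENNReal.ofReal_inv_of_pos hV, smul_eq_mul]
  have h1 : ∫⁻ z, ‖u z‖ₑ ^ (2:ℝ) ∂(muB r) ≤ ENNReal.ofReal (V⁻¹ * I2) := by
    rw [hmu, ENNReal.ofReal_mul (by positivity), hI2,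
      ofReal_integral_eq_lintegral_ofReal hu2 (Eventually.of_forall fun z => by positivity)]
    refine le_of_eq ?_
    congr 2
    ext1 z
    rw [← ofReal_norm, ENNReal.ofReal_rpow_of_nonneg (norm_nonneg _) (by norm_num), Real.rpow_two]
  have h2 : ∫⁻ z, ENNReal.ofReal (fnorm (D z)) ^ q ∂(muB r) ≤ ENNReal.ofReal (V⁻¹ * Iq) := by
    rw [hmu, ENNReal.ofReal_mul (by positivity), hIq,
      ofReal_integral_eq_lintegral_ofReal hDq (Eventually.of_forall fun z => Real.rpow_nonneg (hfn _) _)]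
    refine le_of_eq ?_
    congr 2
    ext1 z
    rw [ENNReal.ofReal_rpow_of_nonneg (hfn _) (by linarith)]
  have h3 := hmain r hr u D hum hDm hw (V⁻¹ * I2) (V⁻¹ * Iq) (by positivity) (by positivity) h1 h2
  have h4 : ∫⁻ z in ball (0:V3) r, ENNReal.ofReal (‖u z - ⨍ y in ball (0:V3) r, u y‖ ^ 3) ≤
      ENNReal.ofReal (V * (K * r ^ 3 * ((V⁻¹ * I2 / r ^ 2) ^ α * (V⁻¹ * Iq) ^ β))) := by
    rw [restrict_eq_muB hr, hVE, ENNReal.ofReal_mul hV.le]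
    gcongr
    refine le_trans (le_of_eq ?_) h3
    congr 1
    ext1 z
    rw [← ofReal_norm, ENNReal.ofReal_rpow_of_nonneg (norm_nonneg _) (by norm_num)]
    congr 1
    rw [show (3:ℝ) = ((3:ℕ):ℝ) by norm_num, Real.rpow_natCast]
  have hms : AEStronglyMeasurable (fun z => ‖u z - ⨍ y in ball (0:V3) r, u y‖ ^ 3)
      (volume.restrict (ball (0:V3) r)) := (hum.sub aestronglyMeasurable_const).norm.pow 3
  rw [integral_eq_lintegral_of_nonneg_ae (Eventually.of_forall fun z => by positivity) hms]
  refine (ENNReal.toReal_le_of_le_ofReal (by positivity) h4).trans_eq ?_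
  have e1 : V⁻¹ * I2 / r ^ 2 = V1⁻¹ * r ^ (-5:ℝ) * I2 := by
    rw [hVr, Real.rpow_neg hr.le, show (5:ℝ) = ((5:ℕ):ℝ) by norm_num, Real.rpow_natCast]
    field_simp
  have e2 : V⁻¹ * Iq = V1⁻¹ * r ^ (-3:ℝ) * Iq := by
    rw [hVr, Real.rpow_neg hr.le, show (3:ℝ) = ((3:ℕ):ℝ) by norm_num, Real.rpow_natCast]
    field_simp
  have e3 : r ^ (6 - 5 * α - 3 * β) = r ^ 3 * r ^ 3 * (r ^ (-5:ℝ)) ^ α * (r ^ (-3:ℝ)) ^ β := by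
    rw [← Real.rpow_mul hr.le, ← Real.rpow_mul hr.le, ← Real.rpow_natCast, ← Real.rpow_add hr,
      ← Real.rpow_add hr, ← Real.rpow_add hr]
    congr 1; push_cast; ring
  rw [e1, e2, e3, hVr, Real.mul_rpow (by positivity) hI20, Real.mul_rpow (by positivity) (by positivity),
    Real.mul_rpow (by positivity) hIq0, Real.mul_rpow (by positivity) (by positivity)]
  ring

lemma time_holder (r : ℝ) (hr : 0 < r) (f : ℝ → ℝ) (hf0 : ∀ t, 0 ≤ f t) (β : ℝ) (hβ0 : 0 < β) (hβ1 : β ≤ 1)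
    (hf : IntegrableOn f (Ioo (-r ^ 2) 0)) :
    IntegrableOn (fun t => f t ^ β) (Ioo (-r ^ 2) 0) ∧
    ∫ t in Ioo (-r ^ 2) 0, f t ^ β ≤ r ^ (2 - 2 * β) * (∫ t in Ioo (-r ^ 2) 0, f t) ^ β := by
  have hr2 : 0 < r ^ 2 := by positivity
  have hi : IntegrableOn (fun t => f t ^ β) (Ioo (-r ^ 2) 0) := by
    have hb : IntegrableOn (fun t => 1 + f t) (Ioo (-r ^ 2) 0) := Integrable.add (integrable_const 1) hf
    refine Integrable.mono' hb ?_ (Eventually.of_forall fun t => ?_)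
    · exact (hf.1.aemeasurable.pow_const β).aestronglyMeasurable
    · rw [Real.norm_eq_abs, abs_of_nonneg (Real.rpow_nonneg (hf0 t) _)]
      rcases le_total (f t) 1 with h | h
      · have := Real.rpow_le_one (hf0 t) h hβ0.le
        have := hf0 t
        linarith
      · have := Real.rpow_le_rpow_of_exponent_le h hβ1
        rw [Real.rpow_one] at this
        linarith
  refine ⟨hi, ?_⟩
  have hvol : volume.real (Ioo (-r ^ 2) 0) = r ^ 2 := by
    rw [Real.volume_real_Ioo_of_le (by linarith)]; ring
  have hne : NeZero (volume.restrict (Ioo (-r ^ 2) (0:ℝ))) := by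
    refine ⟨fun h => ?_⟩
    rw [Measure.restrict_eq_zero, Real.volume_Ioo] at h
    simp at h
    linarith
  have hj := (Real.concaveOn_rpow hβ0.le hβ1).le_map_average
    (continuousOn_id.rpow_const fun x _ => Or.inr hβ0.le) isClosed_Ici
    (Eventually.of_forall fun t => hf0 t) hf hi
  rw [average_eq, average_eq, measureReal_restrict_apply_univ, hvol, smul_eq_mul, smul_eq_mul,
    Real.mul_rpow (by positivity) (integral_nonneg fun t => hf0 t), inv_mul_le_iff₀ hr2] at hj
  refine hj.trans_eq ?_
  rw [← mul_assoc]
  congr 1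
  rw [← Real.rpow_two, ← Real.rpow_neg hr.le, ← Real.rpow_mul hr.le, ← Real.rpow_add hr]
  congr 1; ring

/-- interpolation inequality I. -/
theorem statement14 (q k : ℝ) (hq1 : 9/5 ≤ q) (hq2 : q ≤ 2)
    (hk1 : (3 - q)/(5*q - 6) ≤ k) (hk2 : k ≤ (3 - q)/3) :
    ∃ c : ℝ, 0 < c ∧
      ∀ (v : V3 → ℝ → V3) (dv : V3 → ℝ → V3 →L[ℝ] V3),
        AEMeasurable (fun z : V3 × ℝ => v z.1 z.2)
          (volume.restrict (ball (0 : V3) 1 ×ˢ Ioo (-1 : ℝ) 0)) →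
        AEMeasurable (fun z : V3 × ℝ => dv z.1 z.2)
          (volume.restrict (ball (0 : V3) 1 ×ˢ Ioo (-1 : ℝ) 0)) →
        (∃ K : ℝ, ∀ s ∈ Ioo (-1 : ℝ) 0,
          IntegrableOn (fun x => ‖v x s‖ ^ 2) (ball (0 : V3) 1) volume ∧
          (∫ x in ball (0 : V3) 1, ‖v x s‖ ^ 2) ≤ K) →
        IsWeakSpatialGradient (ball (0 : V3) 1) (Ioo (-1 : ℝ) 0) v dv →
        IntegrableOn (fun z : V3 × ℝ => fnorm (dv z.1 z.2) ^ q)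
          (ball (0 : V3) 1 ×ˢ Ioo (-1 : ℝ) 0) volume →
        ∀ r : ℝ, 0 < r → r ≤ 1 →
          funCt v r
            ≤ c * funA v r ^ ((9 - 3*q - 3*q*k)/(6 - 2*q))
                * funEqz dv q r ^ (3*k/(3 - q)) := by
  have h3q : 0 < 3 - q := by linarith
  have h5q : 0 < 5 * q - 6 := by linarith
  have hk0 : 0 < k := lt_of_lt_of_le (by positivity) hk1
  set α : ℝ := (9 - 3*q - 3*q*k)/(6 - 2*q) with hα
  set β : ℝ := 3*k/(3 - q) with hβ
  have hβ0 : 0 < β := by positivity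
  have hβ1 : β ≤ 1 := by
    rw [hβ, div_le_one h3q]
    linarith
  have hαβ : 2 * α + q * β = 3 := by
    rw [hα, hβ, show 6 - 2 * q = 2 * (3 - q) by ring]
    field_simp
    ring
  have hα0 : 0 < α := by nlinarith
  have hα1 : α ≤ 1 - (3 - q) / (5 * q - 6) := by
    have h1 : (3 - q) / (5 * q - 6) * (3 / (3 - q)) ≤ β := by
      rw [hβ, show 3 * k / (3 - q) = k * (3 / (3 - q)) by ring]
      gcongr
    have h2 : (3 - q) / (5 * q - 6) * (3 / (3 - q)) = 3 / (5 * q - 6) := by field_simp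
    rw [h2, div_le_iff₀ h5q] at h1
    have h3 : α = (3 - q * β) / 2 := by linarith
    rw [h3, le_sub_iff_add_le, div_add_div _ _ two_ne_zero h5q.ne', div_le_one (by positivity)]
    nlinarith
  obtain ⟨K, hK, hmain⟩ := per_time_real q α β hq1 hq2 hα0 hα1 hβ0 hαβ
  refine ⟨K, hK, ?_⟩
  intro v dv hvm hdvm hbd hwg hI r hr hr1
  obtain ⟨K2, hK2⟩ := hbd
  have hfn : ∀ A : V3 →L[ℝ] V3, 0 ≤ fnorm A := fun A => Real.sqrt_nonneg _
  have hr2 : r ^ 2 ≤ 1 := by nlinarith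
  have hJ : Ioo (-r ^ 2) 0 ⊆ Ioo (-1 : ℝ) 0 := Ioo_subset_Ioo_left (by linarith)
  have hB : ball (0 : V3) r ⊆ ball 0 1 := ball_subset_ball hr1
  have hBJ : ball (0 : V3) r ×ˢ Ioo (-r ^ 2) 0 ⊆ ball (0 : V3) 1 ×ˢ Ioo (-1 : ℝ) 0 := prod_mono hB hJ
  have hpr : (volume : Measure (V3 × ℝ)).restrict (ball (0 : V3) r ×ˢ Ioo (-r ^ 2) 0)
      = (volume.restrict (ball (0 : V3) r)).prod (volume.restrict (Ioo (-r ^ 2) 0)) := by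
    rw [Measure.volume_eq_prod, Measure.prod_restrict]
  have hvm' := (hvm.mono_measure (Measure.restrict_mono hBJ le_rfl)).aestronglyMeasurable
  have hdvm' := (hdvm.mono_measure (Measure.restrict_mono hBJ le_rfl)).aestronglyMeasurable
  have hI' : Integrable (fun z : V3 × ℝ => fnorm (dv z.1 z.2) ^ q) _ := hI.mono_set hBJ
  rw [hpr] at hvm' hdvm' hI'
  have hv_ae := hvm'.prodMk_right
  have hdv_ae := hdvm'.prodMk_right
  have hI_ae := hI'.prod_left_ae
  have hIt := hI'.integral_prod_right
  have hw_ae := ae_restrict_of_ae_restrict_of_subset hJ hwg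
  set g : ℝ → ℝ := fun t => ∫ x in ball (0 : V3) r, fnorm (dv x t) ^ q with hg
  have hg0 : ∀ t, 0 ≤ g t := fun t => integral_nonneg fun x => Real.rpow_nonneg (hfn _) _
  obtain ⟨hgi, hgle⟩ := time_holder r hr g hg0 β hβ0 hβ1 hIt
  have hu2 : ∀ t ∈ Ioo (-r ^ 2) 0, IntegrableOn (fun x => ‖v x t‖ ^ 2) (ball (0 : V3) r) :=
    fun t ht => (hK2 t (hJ ht)).1.mono_set hB
  set S := sSup ((fun s => ∫ x in ball (0 : V3) r, ‖v x s‖ ^ 2) '' Ioo (-r ^ 2) 0) with hS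
  have hS0 : 0 ≤ S := Real.sSup_nonneg (by
    rintro _ ⟨t, _, rfl⟩
    exact integral_nonneg fun x => by positivity)
  have hSle : ∀ t ∈ Ioo (-r ^ 2) 0, ∫ x in ball (0 : V3) r, ‖v x t‖ ^ 2 ≤ S := by
    intro t ht
    refine le_csSup ⟨K2, ?_⟩ ⟨t, ht, rfl⟩
    rintro _ ⟨s, hs, rfl⟩
    refine le_trans ?_ (hK2 s (hJ hs)).2
    exact setIntegral_mono_set (hK2 s (hJ hs)).1 (Eventually.of_forall fun x => by positivity)
      (HasSubset.Subset.eventuallyLE hB)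
  have hkey : ∀ᵐ t ∂(volume.restrict (Ioo (-r ^ 2) 0)),
      ∫ x in ball (0 : V3) r, ‖v x t - ⨍ y in ball (0 : V3) r, v y t‖ ^ 3
        ≤ K * r ^ (6 - 5 * α - 3 * β) * S ^ α * g t ^ β := by
    filter_upwards [hv_ae, hdv_ae, hI_ae, hw_ae, ae_restrict_mem measurableSet_Ioo] with t h1 h2 h3 h4 ht
    refine (hmain r hr (fun x => v x t) (fun x => dv x t) h1 h2 ?_ (hu2 t ht) h3).trans ?_
    · intro ψ hψ e
      have := h4 ψ ⟨hψ.1, hψ.2.1, hψ.2.2.trans hB⟩ e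
      rw [setIntegral_eq_of_subset_of_forall_diff_eq_zero measurableSet_ball hB,
        setIntegral_eq_of_subset_of_forall_diff_eq_zero measurableSet_ball hB] at this
      · exact this
      · intro x hx
        rw [fderiv_of_notMem_tsupport ℝ (fun h => hx.2 (hψ.2.2 h))]
        simp
      · intro x hx
        rw [image_eq_zero_of_notMem_tsupport (fun h => hx.2 (hψ.2.2 h))]
        simp
    · have := hSle t ht
      have h0 : 0 ≤ ∫ x in ball (0 : V3) r, ‖v x t‖ ^ 2 := integral_nonneg fun x => by positivity
      have hgt := hg0 t
      gcongr
  have hfin : ∫ t in Ioo (-r ^ 2) 0, ∫ x in ball (0 : V3) r, ‖v x t - ⨍ y in ball (0 : V3) r, v y t‖ ^ 3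
      ≤ K * r ^ (6 - 5 * α - 3 * β) * S ^ α *
        (r ^ (2 - 2 * β) * (∫ t in Ioo (-r ^ 2) 0, g t) ^ β) := by
    calc _ ≤ ∫ t in Ioo (-r ^ 2) 0, K * r ^ (6 - 5 * α - 3 * β) * S ^ α * g t ^ β :=
          integral_mono_of_nonneg
            (Eventually.of_forall fun t => integral_nonneg fun x => by positivity)
            (hgi.const_mul _) hkey
      _ = K * r ^ (6 - 5 * α - 3 * β) * S ^ α * ∫ t in Ioo (-r ^ 2) 0, g t ^ β := integral_const_mul _ _
      _ ≤ _ := by gcongr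
  have hX0 : 0 ≤ ∫ t in Ioo (-r ^ 2) 0, g t := integral_nonneg fun t => hg0 t
  unfold funCt funA funEqz
  rw [← hS]
  change _ ≤ K * (r⁻¹ * S) ^ α * (r ^ (2 * q - 5) * ∫ t in Ioo (-r ^ 2) 0, g t) ^ β
  refine (mul_le_mul_of_nonneg_left hfin (by positivity)).trans_eq ?_
  rw [Real.mul_rpow (by positivity) hS0, Real.mul_rpow (by positivity) hX0, ← Real.rpow_neg_one,
    ← Real.rpow_mul hr.le, ← Real.rpow_mul hr.le]
  have e : r ^ (-2:ℝ) * r ^ (6 - 5 * α - 3 * β) * r ^ (2 - 2 * β) = r ^ (-1 * α) * r ^ ((2 * q - 5) * β) := by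
    rw [← Real.rpow_add hr, ← Real.rpow_add hr, ← Real.rpow_add hr]
    congr 1
    linarith
  calc _ = K * (r ^ (-2:ℝ) * r ^ (6 - 5 * α - 3 * β) * r ^ (2 - 2 * β)) * S ^ α
        * (∫ t in Ioo (-r ^ 2) 0, g t) ^ β := by ring
    _ = _ := by rw [e]; ring

end
end

section
/- There exists an absolute constant c > 0 such that for every vector field v ∈ L^∞(−1,0; L²(B(1))) whose weak spatial gradient satisfies ∇v ∈ L²(Q(1)), every 0 < r ≤ 1 and every 0 < θ ≤ 1, one has G(θr) ≤ c ( θ^{−1} E(r) + θ² A(r) ). -/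
/- Setting: suitable weak solutions of the 3D incompressible Navier–Stokes equations,
   following Caffarelli–Kohn–Nirenberg.  The velocity field is `v`, its weak spatial
   gradient is `dv`, the pressure is `p` and the force is `f`. -/

open MeasureTheory Filter Metric Set Bornology
open scoped Topology ENNReal

noncomputable section

lemma exists_cutoff {a b : ℝ} (ha : 0 < a) (hab : a < b) :
    ∃ ψ : V3 → ℝ, ContDiff ℝ 1 ψ ∧ (∀ x, 0 ≤ ψ x) ∧ (∀ x, ψ x ≤ 1) ∧
      (∀ x ∈ ball (0 : V3) a, ψ x = 1) ∧ (∀ x, x ∉ ball (0 : V3) b → ψ x = 0) ∧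
      HasCompactSupport ψ ∧
      ∀ x, a * ‖fderiv ℝ ψ x‖ ≤ -(fderiv ℝ ψ x x) := by
  have hd : 0 < b ^ 2 - a ^ 2 := by nlinarith
  let q : V3 → ℝ := fun x => (b ^ 2 - ‖x‖ ^ 2) / (b ^ 2 - a ^ 2)
  have hz : ∀ x, x ∉ ball (0 : V3) b → Real.smoothTransition (q x) = 0 := by
    intro x hx
    apply Real.smoothTransition.zero_of_nonpos
    apply div_nonpos_of_nonpos_of_nonneg _ hd.le
    have : b ≤ ‖x‖ := by simpa using hx
    nlinarith
  have h1 : ∀ x, ‖x‖ ≤ a → Real.smoothTransition (q x) = 1 := by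
    intro x hx
    apply Real.smoothTransition.one_of_one_le
    rw [le_div_iff₀ hd]
    nlinarith [norm_nonneg x]
  have hst : ContDiff ℝ 1 Real.smoothTransition := by
    exact_mod_cast (Real.smoothTransition.contDiff (n := 1))
  refine ⟨fun x => Real.smoothTransition (q x), ?_, fun x => Real.smoothTransition.nonneg _,
    fun x => Real.smoothTransition.le_one _, ?_, hz, ?_, ?_⟩
  · apply hst.comp
    apply ContDiff.div_const
    exact contDiff_const.sub (contDiff_norm_sq ℝ)
  · intro x hx
    exact h1 x (le_of_lt (by simpa using hx))
  · apply HasCompactSupport.of_support_subset_isCompact (isCompact_closedBall (0 : V3) b)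
    intro x hx
    by_contra hn
    exact hx (hz x (fun h => hn (ball_subset_closedBall h)))
  · intro x
    have hq : HasFDerivAt q ((b ^ 2 - a ^ 2)⁻¹ • (-((2 : ℝ) • innerSL ℝ x))) x := by
      have := ((hasStrictFDerivAt_norm_sq x).hasFDerivAt.const_sub (b ^ 2)).const_smul
        ((b ^ 2 - a ^ 2)⁻¹)
      have e : q = (b ^ 2 - a ^ 2)⁻¹ • fun x : V3 => b ^ 2 - ‖x‖ ^ 2 := by
        ext y
        simp [q]; ring
      rw [two_smul] at this
      rw [e, two_smul]; exact this
    have hs : HasDerivAt Real.smoothTransition (deriv Real.smoothTransition (q x)) (q x) :=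
      ((hst.differentiable one_ne_zero) _).hasDerivAt
    have hD := (hs.comp_hasFDerivAt x hq).fderiv
    have hpos : 0 ≤ deriv Real.smoothTransition (q x) :=
      Real.smoothTransition.monotone.deriv_nonneg
    have e : (fun x => Real.smoothTransition (q x)) = Real.smoothTransition ∘ q := rfl
    rw [e, hD]
    by_cases hx : ‖x‖ < a
    · have hloc : Real.smoothTransition ∘ q =ᶠ[𝓝 x] fun _ => (1:ℝ) := by
        have : ball (0 : V3) a ∈ 𝓝 x := isOpen_ball.mem_nhds (by simpa using hx)
        filter_upwards [this] with y hy
        exact h1 y (le_of_lt (by simpa using hy))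
      have := hloc.fderiv_eq (𝕜 := ℝ)
      rw [hD] at this
      rw [this]; simp
    · push Not at hx
      simp only [norm_smul, norm_neg, innerSL_apply_norm, _root_.smul_apply,
        _root_.neg_apply, innerSL_apply_apply, real_inner_self_eq_norm_sq, smul_eq_mul,
        Real.norm_eq_abs, abs_of_nonneg hpos, abs_inv, abs_of_pos hd]
      have : 0 ≤ deriv Real.smoothTransition (q x) * ((b ^ 2 - a ^ 2)⁻¹ * (2 * ‖x‖)) := by positivity
      norm_num
      nlinarith

lemma v3_decomp (x : V3) : x = ∑ i, x i • e3 i := by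
  ext j
  fin_cases j <;> simp [e3, Fin.sum_univ_three]

lemma clm_decomp (A : V3 →L[ℝ] ℝ) (x : V3) : A x = ∑ i, x i * A (e3 i) := by
  conv_lhs => rw [v3_decomp x]
  simp

lemma radial_ibp {h ψ : V3 → ℝ} (hh : ContDiff ℝ 1 h) (hψ : ContDiff ℝ 1 ψ)
    (hc : HasCompactSupport ψ) :
    ∫ x, h x * fderiv ℝ ψ x x = - ∫ x, ψ x * (3 * h x + fderiv ℝ h x x) := by
  have hψd : Continuous (fderiv ℝ ψ) := hψ.continuous_fderiv one_ne_zero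
  have hhd : Continuous (fderiv ℝ h) := hh.continuous_fderiv one_ne_zero
  have hcd : HasCompactSupport (fderiv ℝ ψ) := hc.fderiv ℝ
  have hci : ∀ i : Fin 3, ContDiff ℝ 1 (fun x : V3 => x i * h x) := by
    intro i
    exact ContDiff.mul (by fun_prop) hh
  have hfd : ∀ (i : Fin 3) (x : V3), fderiv ℝ (fun x : V3 => x i * h x) x (e3 i)
      = h x + x i * fderiv ℝ h x (e3 i) := by
    intro i x
    have h1 : HasFDerivAt (fun x : V3 => x i) (EuclideanSpace.proj i : V3 →L[ℝ] ℝ) x :=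
      (EuclideanSpace.proj i : V3 →L[ℝ] ℝ).hasFDerivAt
    have := (h1.mul ((hh.differentiable one_ne_zero) x).hasFDerivAt).fderiv
    change fderiv ℝ ((fun x : V3 => x i) * h) x (e3 i) = _
    rw [this]
    simp [e3]; ring
  have key : ∀ i : Fin 3, ∫ x : V3, x i * h x * fderiv ℝ ψ x (e3 i)
      = - ∫ x : V3, (h x + x i * fderiv ℝ h x (e3 i)) * ψ x := by
    intro i
    have := integral_mul_fderiv_eq_neg_fderiv_mul_of_integrable (μ := (volume : Measure V3))
      (f := fun x : V3 => x i * h x) (g := ψ) (v := e3 i) ?_ ?_ ?_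
      (fun x _ => (hci i).differentiable one_ne_zero x) (fun x _ => hψ.differentiable one_ne_zero x)
    · rw [this]; simp_rw [hfd]
    · simp_rw [hfd]
      apply Continuous.integrable_of_hasCompactSupport
      · have := hh.continuous; have := hψ.continuous; fun_prop
      · exact hc.mul_left
    · apply Continuous.integrable_of_hasCompactSupport
      · have := hh.continuous; fun_prop
      · apply HasCompactSupport.mul_left
        exact hcd.comp_left (g := fun A : V3 →L[ℝ] ℝ => A (e3 i)) rfl
    · apply Continuous.integrable_of_hasCompactSupport
      · have := hh.continuous; have := hψ.continuous; fun_prop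
      · exact hc.mul_left
  have s1 : ∀ x : V3, h x * fderiv ℝ ψ x x = ∑ i, x i * h x * fderiv ℝ ψ x (e3 i) := by
    intro x
    rw [clm_decomp, Finset.mul_sum]
    apply Finset.sum_congr rfl
    intro i _
    ring
  have s2 : ∀ x : V3, ψ x * (3 * h x + fderiv ℝ h x x)
      = ∑ i, (h x + x i * fderiv ℝ h x (e3 i)) * ψ x := by
    intro x
    rw [clm_decomp]
    simp [Fin.sum_univ_three]; ring
  simp_rw [s1, s2]
  rw [integral_finsetSum, integral_finsetSum, ← Finset.sum_neg_distrib]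
  · exact Finset.sum_congr rfl fun i _ => key i
  · intro i _
    apply Continuous.integrable_of_hasCompactSupport
    · have := hh.continuous; have := hψ.continuous; fun_prop
    · exact hc.mul_left
  · intro i _
    apply Continuous.integrable_of_hasCompactSupport
    · have := hh.continuous; fun_prop
    · apply HasCompactSupport.mul_left
      exact hcd.comp_left (g := fun A : V3 →L[ℝ] ℝ => A (e3 i)) rfl

/-- The Gagliardo–Nirenberg–Sobolev constant. -/
def gnsC : ℝ≥0∞ := (lintegralPowLePowLIntegralFDerivConst (volume : Measure V3) (3/2 : ℝ) : ℝ≥0∞)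

lemma gnsC_ne_top : gnsC ≠ ⊤ := ENNReal.coe_ne_top

lemma w11_aux {h : V3 → ℝ} (hh : ContDiff ℝ 1 h) (h0 : ∀ x, 0 ≤ h x) {a b : ℝ} (ha : 0 < a)
    (hab : a < b) (hb : b ≤ 2 * a) :
    ∫⁻ x in ball (0 : V3) a, ‖h x‖ₑ ^ (3/2 : ℝ) ≤
      gnsC * (3 * (∫⁻ x in ball (0 : V3) b, ‖fderiv ℝ h x‖ₑ)
        + ENNReal.ofReal (6 / b) * ∫⁻ x in ball (0 : V3) b, ‖h x‖ₑ) ^ (3/2 : ℝ) := by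
  obtain ⟨ψ, hψ, ψ0, ψ1, ψa, ψb, hc, hψr⟩ := exists_cutoff ha hab
  have hb0 : 0 < b := ha.trans hab
  have hψd : Continuous (fderiv ℝ ψ) := hψ.continuous_fderiv one_ne_zero
  have hhd : Continuous (fderiv ℝ h) := hh.continuous_fderiv one_ne_zero
  have hhc := hh.continuous
  have hψc := hψ.continuous
  have hcd : HasCompactSupport (fderiv ℝ ψ) := hc.fderiv ℝ
  set D := ∫⁻ x in ball (0 : V3) b, ‖fderiv ℝ h x‖ₑ with hD
  set S := ∫⁻ x in ball (0 : V3) b, ‖h x‖ₑ with hS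
  have gns := lintegral_pow_le_pow_lintegral_fderiv (volume : Measure V3)
    (u := fun x => h x * ψ x) (p := 3/2) (hh.mul hψ) hc.mul_left (by
      constructor <;> norm_num [finrank_euclideanSpace])
  -- left side
  have hleft : ∫⁻ x in ball (0 : V3) a, ‖h x‖ₑ ^ (3/2 : ℝ) ≤
      ∫⁻ x, ‖h x * ψ x‖ₑ ^ (3/2 : ℝ) := by
    calc _ = ∫⁻ x in ball (0 : V3) a, ‖h x * ψ x‖ₑ ^ (3/2 : ℝ) := by
          apply setLIntegral_congr_fun measurableSet_ball
          intro x hx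
          simp [ψa x hx]
      _ ≤ _ := setLIntegral_le_lintegral _ _
  -- trace part
  have htr : ∫⁻ x, ‖h x‖ₑ * ‖fderiv ℝ ψ x‖ₑ ≤ 2 * D + ENNReal.ofReal (6 / b) * S := by
    have i1 : Integrable (fun x => h x * ‖fderiv ℝ ψ x‖) := by
      apply Continuous.integrable_of_hasCompactSupport (by fun_prop)
      exact HasCompactSupport.mul_left hcd.norm
    have i2 : Integrable (fun x => h x * fderiv ℝ ψ x x) := by
      apply Continuous.integrable_of_hasCompactSupport (by fun_prop)
      apply HasCompactSupport.mul_left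
      apply hcd.mono
      intro x hx
      contrapose! hx
      have : fderiv ℝ ψ x = 0 := by simpa using hx
      simp [this]
    have e1 : ∫⁻ x, ‖h x‖ₑ * ‖fderiv ℝ ψ x‖ₑ = ENNReal.ofReal (∫ x, h x * ‖fderiv ℝ ψ x‖) := by
      rw [ofReal_integral_eq_lintegral_ofReal i1
        (Eventually.of_forall fun x => mul_nonneg (h0 x) (norm_nonneg _))]
      apply lintegral_congr
      intro x
      rw [ENNReal.ofReal_mul (h0 x), ofReal_norm, Real.enorm_of_nonneg (h0 x)]
    have e2 : ∫ x, h x * ‖fderiv ℝ ψ x‖ ≤ a⁻¹ * ∫ x, ψ x * (3 * h x + fderiv ℝ h x x) := by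
      rw [← neg_neg (∫ x, ψ x * (3 * h x + fderiv ℝ h x x)), ← radial_ibp hh hψ hc,
        ← integral_neg, ← integral_const_mul]
      apply integral_mono i1 (i2.neg.const_mul _)
      intro x
      have h2 := mul_le_mul_of_nonneg_left (hψr x) (mul_nonneg (h0 x) (inv_nonneg.2 ha.le))
      have : h x * a⁻¹ * (a * ‖fderiv ℝ ψ x‖) = h x * ‖fderiv ℝ ψ x‖ := by field_simp
      rw [this] at h2
      refine h2.trans (le_of_eq ?_)
      simp; ring
    have e3 : ENNReal.ofReal (∫ x, ψ x * (3 * h x + fderiv ℝ h x x)) ≤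
        3 * S + ENNReal.ofReal b * D := by
      calc _ ≤ ‖∫ x, ψ x * (3 * h x + fderiv ℝ h x x)‖ₑ := by
            rw [← ofReal_norm]
            exact ENNReal.ofReal_le_ofReal (le_abs_self _)
        _ ≤ ∫⁻ x, ‖ψ x * (3 * h x + fderiv ℝ h x x)‖ₑ := enorm_integral_le_lintegral_enorm _
        _ = ∫⁻ x in ball (0 : V3) b, ‖ψ x * (3 * h x + fderiv ℝ h x x)‖ₑ := by
            rw [← lintegral_indicator measurableSet_ball]
            apply lintegral_congr
            intro x
            by_cases hx : x ∈ ball (0 : V3) b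
            · simp [hx]
            · simp [hx, ψb x hx]
        _ ≤ ∫⁻ x in ball (0 : V3) b, (3 * ‖h x‖ₑ + ENNReal.ofReal b * ‖fderiv ℝ h x‖ₑ) := by
            apply setLIntegral_mono' measurableSet_ball
            intro x hx
            have hxb : ‖x‖ ≤ b := le_of_lt (by simpa using hx)
            rw [Real.enorm_of_nonneg (h0 x), ← ofReal_norm, ← ofReal_norm,
              ← ENNReal.ofReal_mul hb0.le]
            have : (3 : ℝ≥0∞) = ENNReal.ofReal 3 := by simp
            rw [this, ← ENNReal.ofReal_mul (by norm_num), ← ENNReal.ofReal_add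
              (mul_nonneg (by norm_num) (h0 x)) (by positivity)]
            apply ENNReal.ofReal_le_ofReal
            rw [norm_mul, Real.norm_of_nonneg (ψ0 x)]
            have n1 : ‖3 * h x + fderiv ℝ h x x‖ ≤ 3 * h x + b * ‖fderiv ℝ h x‖ := by
              refine (norm_add_le _ _).trans ?_
              rw [Real.norm_of_nonneg (mul_nonneg (by norm_num) (h0 x))]
              have := (fderiv ℝ h x).le_opNorm x
              nlinarith [norm_nonneg (fderiv ℝ h x)]
            calc _ ≤ 1 * ‖3 * h x + fderiv ℝ h x x‖ :=
                  mul_le_mul_of_nonneg_right (ψ1 x) (norm_nonneg _)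
              _ ≤ _ := by rw [one_mul]; exact n1
        _ = _ := by
            rw [lintegral_add_left (by fun_prop), lintegral_const_mul _ (by fun_prop),
              lintegral_const_mul _ (by fun_prop)]
    have hai : ENNReal.ofReal a⁻¹ ≤ ENNReal.ofReal (2 / b) := by
      apply ENNReal.ofReal_le_ofReal
      rw [inv_eq_one_div, div_le_div_iff₀ ha hb0]; linarith
    rw [e1]
    calc _ ≤ ENNReal.ofReal (a⁻¹ * ∫ x, ψ x * (3 * h x + fderiv ℝ h x x)) :=
          ENNReal.ofReal_le_ofReal e2
      _ = ENNReal.ofReal a⁻¹ * ENNReal.ofReal (∫ x, ψ x * (3 * h x + fderiv ℝ h x x)) :=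
          ENNReal.ofReal_mul (inv_nonneg.2 ha.le)
      _ ≤ ENNReal.ofReal (2 / b) * (3 * S + ENNReal.ofReal b * D) := by gcongr
      _ = _ := by
          rw [mul_add, ← mul_assoc, ← mul_assoc, ← ENNReal.ofReal_mul (by positivity)]
          have : (3 : ℝ≥0∞) = ENNReal.ofReal 3 := by simp
          rw [this, ← ENNReal.ofReal_mul (by positivity), add_comm]
          congr 2
          · rw [div_mul_cancel₀ _ hb0.ne']; simp
          · congr 1; ring
  have hright : ∫⁻ x, ‖fderiv ℝ (fun x => h x * ψ x) x‖ₑ ≤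
      3 * D + ENNReal.ofReal (6 / b) * S := by
    calc _ ≤ ∫⁻ x, (‖h x‖ₑ * ‖fderiv ℝ ψ x‖ₑ
          + (ball (0 : V3) b).indicator (fun x => ‖fderiv ℝ h x‖ₑ) x) := by
          apply lintegral_mono
          intro x
          have : fderiv ℝ (fun x => h x * ψ x) x = h x • fderiv ℝ ψ x + ψ x • fderiv ℝ h x :=
            fderiv_mul (hh.differentiable one_ne_zero x) (hψ.differentiable one_ne_zero x)
          simp only
          rw [this]
          refine le_trans (enorm_add_le (h x • fderiv ℝ ψ x) (ψ x • fderiv ℝ h x)) ?_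
          rw [enorm_smul, enorm_smul]
          gcongr
          by_cases hx : x ∈ ball (0 : V3) b
          · simp only [hx, indicator_of_mem]
            have : ‖ψ x‖ₑ ≤ 1 := by
              rw [Real.enorm_of_nonneg (ψ0 x)]
              simpa using ψ1 x
            calc _ ≤ 1 * ‖fderiv ℝ h x‖ₑ := by gcongr
              _ = _ := one_mul _
          · simp [ψb x hx]
      _ = (∫⁻ x, ‖h x‖ₑ * ‖fderiv ℝ ψ x‖ₑ) + D := by
          rw [lintegral_add_left (by fun_prop), lintegral_indicator measurableSet_ball]
      _ ≤ (2 * D + ENNReal.ofReal (6 / b) * S) + D := by gcongr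
      _ = _ := by ring
  refine hleft.trans (gns.trans ?_)
  unfold gnsC
  gcongr

lemma w11 {h : V3 → ℝ} (hh : ContDiff ℝ 1 h) (h0 : ∀ x, 0 ≤ h x) {b : ℝ} (hb : 0 < b) :
    ∫⁻ x in ball (0 : V3) b, ‖h x‖ₑ ^ (3/2 : ℝ) ≤
      gnsC * (3 * (∫⁻ x in ball (0 : V3) b, ‖fderiv ℝ h x‖ₑ)
        + ENNReal.ofReal (6 / b) * ∫⁻ x in ball (0 : V3) b, ‖h x‖ₑ) ^ (3/2 : ℝ) := by
  have hU : ball (0 : V3) b = ⋃ n : ℕ, ball (0 : V3) (b * (1 - 1 / ((n : ℝ) + 2))) := by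
    ext x
    simp only [mem_ball_zero_iff, mem_iUnion]
    constructor
    · intro hx
      have h1 : Tendsto (fun n : ℕ => b * (1 - 1 / ((n : ℝ) + 2))) atTop (𝓝 (b * (1 - 0))) := by
        apply Tendsto.const_mul
        apply Tendsto.const_sub
        have := (tendsto_add_atTop_iff_nat 2).2 (tendsto_one_div_atTop_nhds_zero_nat (𝕜 := ℝ))
        simpa using this
      have : ‖x‖ < b * (1 - 0) := by simpa using hx
      exact (h1.eventually_const_lt this).exists
    · rintro ⟨n, hn⟩
      refine hn.trans_le ?_
      have : (0 : ℝ) ≤ 1 / ((n : ℝ) + 2) := by positivity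
      nlinarith
  conv_lhs => rw [hU]
  rw [setLIntegral_iUnion_of_directed]
  · apply iSup_le
    intro n
    have h1 : (0 : ℝ) < 1 / ((n : ℝ) + 2) := by positivity
    have h2 : 1 / ((n : ℝ) + 2) ≤ 1 / 2 := by
      apply one_div_le_one_div_of_le (by norm_num); linarith [(n.cast_nonneg : (0:ℝ) ≤ n)]
    apply w11_aux hh h0 <;> nlinarith
  · apply Monotone.directed_le
    intro m n hmn
    apply ball_subset_ball
    have : (m : ℝ) ≤ n := by exact_mod_cast hmn
    gcongr

lemma absorb_aux {X C N : ℝ≥0∞} (hX : X ≠ ⊤) (h : X ≤ C * (X ^ (1/2 : ℝ) * N) ^ (3/2 : ℝ)) :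
    X ^ (1/3 : ℝ) ≤ C ^ (4/3 : ℝ) * N ^ 2 := by
  by_cases h0 : X = 0
  · simp [h0]
  have hY0 : X ^ (3/4 : ℝ) ≠ 0 := by simp [h0, hX]
  have hYt : X ^ (3/4 : ℝ) ≠ ⊤ := by simp [h0, hX]
  have h1 : X ^ (3/4 : ℝ) * X ^ (1/4 : ℝ) ≤ X ^ (3/4 : ℝ) * (C * N ^ (3/2 : ℝ)) := by
    calc _ = X := by rw [← ENNReal.rpow_add _ _ h0 hX]; norm_num
      _ ≤ _ := h
      _ = _ := by
        rw [ENNReal.mul_rpow_of_nonneg _ _ (by norm_num), ← ENNReal.rpow_mul]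
        norm_num
        ring
  have h2 : X ^ (1/4 : ℝ) ≤ C * N ^ (3/2 : ℝ) := (ENNReal.mul_le_mul_iff_right hY0 hYt).1 h1
  have h3 := ENNReal.rpow_le_rpow h2 (by norm_num : (0:ℝ) ≤ 4/3)
  rw [ENNReal.mul_rpow_of_nonneg _ _ (by norm_num), ← ENNReal.rpow_mul, ← ENNReal.rpow_mul] at h3
  norm_num at h3
  norm_num
  exact h3

lemma cs_sq {α : Type*} [MeasurableSpace α] (μ : Measure α) {f g : α → ℝ≥0∞}
    (hf : AEMeasurable f μ) (hg : AEMeasurable g μ) :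
    ∫⁻ x, f x * g x ∂μ ≤ (∫⁻ x, f x ^ 2 ∂μ) ^ (1/2 : ℝ) * (∫⁻ x, g x ^ 2 ∂μ) ^ (1/2 : ℝ) := by
  have := ENNReal.lintegral_mul_le_Lp_mul_Lq μ Real.HolderConjugate.two_two hf hg
  simpa using this

lemma norm_fderiv_pow4 {u : V3 → V3} (hu : ContDiff ℝ 1 u) (x : V3) :
    ‖fderiv ℝ (fun y => (‖u y‖ ^ 2) ^ 2) x‖ ≤ 4 * (‖u x‖ ^ 3 * ‖fderiv ℝ u x‖) := by
  have h1 : HasFDerivAt u (fderiv ℝ u x) x := (hu.differentiable one_ne_zero x).hasFDerivAt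
  have h2 := (h1.norm_sq.pow 2).fderiv
  rw [h2, norm_smul]
  have h3 : ‖(innerSL ℝ (u x)).comp (fderiv ℝ u x)‖ ≤ ‖u x‖ * ‖fderiv ℝ u x‖ := by
    refine (ContinuousLinearMap.opNorm_comp_le _ _).trans ?_
    rw [innerSL_apply_norm]
  rw [two_smul ℕ ((innerSL ℝ (u x)).comp (fderiv ℝ u x))]
  have h4 := norm_add_le ((innerSL ℝ (u x)).comp (fderiv ℝ u x))
    ((innerSL ℝ (u x)).comp (fderiv ℝ u x))
  simp only [Nat.cast_ofNat, Nat.add_one_sub_one, pow_one, norm_mul, Real.norm_ofNat, norm_pow, norm_norm,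
    smul_eq_mul, nsmul_eq_mul] at *
  calc _ ≤ 2 * ‖u x‖ ^ 2 * (2 * (‖u x‖ * ‖fderiv ℝ u x‖)) := by
        gcongr; linarith
    _ = _ := by ring

/-- Numerical constant in the Sobolev inequality on balls. -/
def sobC : ℝ≥0∞ := gnsC ^ (4/3 : ℝ) * 288

lemma sobC_ne_top : sobC ≠ ⊤ :=
  ENNReal.mul_ne_top (ENNReal.rpow_ne_top_of_nonneg (by norm_num) gnsC_ne_top) (by norm_num)

lemma sobolev_ball {u : V3 → V3} (hu : ContDiff ℝ 1 u) {R : ℝ} (hR : 0 < R) :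
    (∫⁻ x in ball (0 : V3) R, ‖u x‖ₑ ^ 6) ^ (1/3 : ℝ) ≤
      sobC * ((∫⁻ x in ball (0 : V3) R, ‖fderiv ℝ u x‖ₑ ^ 2)
        + ENNReal.ofReal (R⁻¹ ^ 2) * ∫⁻ x in ball (0 : V3) R, ‖u x‖ₑ ^ 2) := by
  have huc := hu.continuous
  have hud : Continuous (fderiv ℝ u) := hu.continuous_fderiv one_ne_zero
  set X := ∫⁻ x in ball (0 : V3) R, ‖u x‖ₑ ^ 6 with hXdef
  set D := ∫⁻ x in ball (0 : V3) R, ‖fderiv ℝ u x‖ₑ ^ 2 with hD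
  set S := ∫⁻ x in ball (0 : V3) R, ‖u x‖ₑ ^ 2 with hS
  have hX : X ≠ ⊤ := by
    obtain ⟨M, hM⟩ := (isCompact_closedBall (0 : V3) R).exists_bound_of_continuousOn huc.continuousOn
    apply ne_top_of_le_ne_top (b := ∫⁻ x in ball (0 : V3) R, (ENNReal.ofReal M) ^ 6)
    · rw [setLIntegral_const]
      exact ENNReal.mul_ne_top (by simp) measure_ball_lt_top.ne
    · apply setLIntegral_mono' measurableSet_ball
      intro x hx
      gcongr
      rw [← ofReal_norm]
      exact ENNReal.ofReal_le_ofReal (hM x (ball_subset_closedBall hx))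
  have hh : ContDiff ℝ 1 (fun y => (‖u y‖ ^ 2) ^ 2) := (hu.norm_sq ℝ).pow 2
  have main := w11 hh (fun x => by positivity) hR
  have hen : ∀ x, ‖(‖u x‖ ^ 2) ^ 2‖ₑ = ‖u x‖ₑ ^ 3 * ‖u x‖ₑ := by
    intro x
    rw [enorm_pow, enorm_pow, enorm_norm]; ring
  have e1 : ∫⁻ x in ball (0 : V3) R, ‖(‖u x‖ ^ 2) ^ 2‖ₑ ^ (3/2 : ℝ) = X := by
    apply lintegral_congr
    intro x
    rw [enorm_pow, enorm_pow, enorm_norm, ← pow_mul, ← ENNReal.rpow_natCast, ← ENNReal.rpow_mul,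
      ← ENNReal.rpow_natCast]
    norm_num
  have hX6 : ∫⁻ x in ball (0 : V3) R, (‖u x‖ₑ ^ 3) ^ 2 = X := by
    apply lintegral_congr
    intro x
    rw [← pow_mul]
  have e2 : ∫⁻ x in ball (0 : V3) R, ‖(‖u x‖ ^ 2) ^ 2‖ₑ ≤ X ^ (1/2 : ℝ) * S ^ (1/2 : ℝ) := by
    simp_rw [hen]
    refine (cs_sq _ (by fun_prop) (by fun_prop)).trans ?_
    rw [hX6]
  have e3 : ∫⁻ x in ball (0 : V3) R, ‖fderiv ℝ (fun y => (‖u y‖ ^ 2) ^ 2) x‖ₑ ≤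
      4 * (X ^ (1/2 : ℝ) * D ^ (1/2 : ℝ)) := by
    calc _ ≤ ∫⁻ x in ball (0 : V3) R, 4 * (‖u x‖ₑ ^ 3 * ‖fderiv ℝ u x‖ₑ) := by
          apply lintegral_mono
          intro x
          have := ENNReal.ofReal_le_ofReal (norm_fderiv_pow4 hu x)
          rw [ofReal_norm, ENNReal.ofReal_mul (by norm_num), ENNReal.ofReal_mul (by positivity),
            ENNReal.ofReal_pow (norm_nonneg _), ofReal_norm, ofReal_norm] at this
          simpa using this
      _ = 4 * ∫⁻ x in ball (0 : V3) R, (‖u x‖ₑ ^ 3 * ‖fderiv ℝ u x‖ₑ) :=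
          lintegral_const_mul _ (by fun_prop)
      _ ≤ _ := by
          gcongr
          refine (cs_sq _ (by fun_prop) (by fun_prop)).trans ?_
          rw [hX6]
  rw [e1] at main
  have main2 : X ≤ gnsC * (X ^ (1/2 : ℝ) *
      (12 * D ^ (1/2 : ℝ) + ENNReal.ofReal (6 / R) * S ^ (1/2 : ℝ))) ^ (3/2 : ℝ) := by
    refine main.trans ?_
    gcongr
    calc _ ≤ 3 * (4 * (X ^ (1/2 : ℝ) * D ^ (1/2 : ℝ))) +
          ENNReal.ofReal (6 / R) * (X ^ (1/2 : ℝ) * S ^ (1/2 : ℝ)) := by gcongr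
      _ = _ := by ring
  refine (absorb_aux hX main2).trans ?_
  unfold sobC
  rw [mul_assoc]
  gcongr
  have h2 : ∀ Y : ℝ≥0∞, (Y ^ (1/2 : ℝ)) ^ 2 = Y := by
    intro Y
    rw [← ENNReal.rpow_natCast, ← ENNReal.rpow_mul]; norm_num
  have hsq : ∀ p q : ℝ≥0∞, (p + q) ^ 2 ≤ 2 * (p ^ 2 + q ^ 2) := by
    intro p q
    have := ENNReal.rpow_add_le_mul_rpow_add_rpow p q (p := 2) (by norm_num)
    norm_num at this
    simpa using this
  refine (hsq _ _).trans ?_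
  rw [mul_pow, mul_pow, h2, h2]
  have : ENNReal.ofReal (6 / R) ^ 2 = 36 * ENNReal.ofReal (R⁻¹ ^ 2) := by
    rw [← ENNReal.ofReal_pow (by positivity)]
    have : (36 : ℝ≥0∞) = ENNReal.ofReal 36 := by simp
    rw [this, ← ENNReal.ofReal_mul (by norm_num)]
    congr 1; ring
  rw [this, mul_add, mul_add]
  apply add_le_add
  · rw [← mul_assoc]; gcongr; norm_num
  · rw [← mul_assoc, ← mul_assoc, ← mul_assoc]; gcongr; norm_num

lemma enn_sq_add (p q : ℝ≥0∞) : (p + q) ^ 2 ≤ 2 * (p ^ 2 + q ^ 2) := by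
  have := ENNReal.rpow_add_le_mul_rpow_add_rpow p q (p := 2) (by norm_num)
  norm_num at this
  simpa using this

lemma weight_int (T : ℝ) :
    ∫⁻ s in Icc 1 T, ENNReal.ofReal (s ^ (-(3/2) : ℝ)) ≤ 2 := by
  calc _ = ∫⁻ s in Ioc 1 T, ENNReal.ofReal (s ^ (-(3/2) : ℝ)) :=
        setLIntegral_congr Ioc_ae_eq_Icc.symm
    _ ≤ ∫⁻ s in Ioi 1, ENNReal.ofReal (s ^ (-(3/2) : ℝ)) :=
        lintegral_mono_set Ioc_subset_Ioi_self
    _ = ENNReal.ofReal (∫ s in Ioi (1 : ℝ), s ^ (-(3/2) : ℝ)) := by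
        rw [ofReal_integral_eq_lintegral_ofReal]
        · exact integrableOn_Ioi_rpow_of_lt (by norm_num) (by norm_num)
        · filter_upwards [self_mem_ae_restrict measurableSet_Ioi] with s hs
          exact Real.rpow_nonneg (zero_le_one.trans (le_of_lt hs)) _
    _ ≤ 2 := by
        rw [integral_Ioi_rpow_of_lt (by norm_num) (by norm_num)]
        norm_num

lemma scale_int {g : V3 → ℝ≥0∞} (hg : Measurable g) {s a R : ℝ} (hs : 0 < s) (ha : s * a ≤ R) :
    ∫⁻ x in ball (0 : V3) a, g (s • x) ≤ ENNReal.ofReal ((s ^ 3)⁻¹) * ∫⁻ x in ball (0 : V3) R, g x := by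
  have hm := Measure.map_addHaar_smul (volume : Measure V3) hs.ne'
  have e : ∫⁻ x, (ball (0 : V3) R).indicator g (s • x) =
      ENNReal.ofReal ((s ^ 3)⁻¹) * ∫⁻ x in ball (0 : V3) R, g x := by
    rw [← lintegral_indicator measurableSet_ball]
    rw [← lintegral_map (μ := volume) (f := (ball (0 : V3) R).indicator g) (g := fun x => s • x)
      (hg.indicator measurableSet_ball) (by fun_prop), hm, lintegral_smul_measure]
    rw [abs_of_pos (by positivity)]
    simp [finrank_euclideanSpace]
  rw [← e, ← lintegral_indicator measurableSet_ball]
  apply lintegral_mono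
  intro x
  by_cases hx : x ∈ ball (0 : V3) a
  · have : s • x ∈ ball (0 : V3) R := by
      have hx' : ‖x‖ < a := by simpa using hx
      simp only [mem_ball_zero_iff, norm_smul, Real.norm_of_nonneg hs.le]
      nlinarith
    simp [hx, this]
  · simp [hx]

lemma dil_pointwise {u : V3 → V3} (hu : ContDiff ℝ 1 u) {T : ℝ} (hT : 1 ≤ T) (x : V3) :
    ‖u x‖ₑ ^ 2 ≤ 2 * ‖u (T • x)‖ₑ ^ 2 + 4 * (‖x‖ₑ ^ 2 *
      ∫⁻ s in Icc 1 T, ENNReal.ofReal (s ^ (3/2 : ℝ)) * ‖fderiv ℝ u (s • x)‖ₑ ^ 2) := by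
  have hud : Continuous (fderiv ℝ u) := hu.continuous_fderiv one_ne_zero
  set J := ∫⁻ s in Icc 1 T, ENNReal.ofReal (s ^ (3/2 : ℝ)) * ‖fderiv ℝ u (s • x)‖ₑ ^ 2 with hJ
  have hf : ContDiff ℝ 1 (fun s : ℝ => u (s • x)) := hu.comp (by fun_prop)
  have h1 := enorm_sub_le_lintegral_deriv_of_contDiffOn_Icc (hf.contDiffOn (s := Icc 1 T)) hT
  simp only [one_smul] at h1
  have hder : ∀ s : ℝ, ‖deriv (fun s : ℝ => u (s • x)) s‖ₑ ≤ ‖x‖ₑ * ‖fderiv ℝ u (s • x)‖ₑ := by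
    intro s
    have h2 : HasDerivAt (fun s : ℝ => s • x) x s := by
      simpa using (hasDerivAt_id s).smul_const x
    have h3 := ((hu.differentiable one_ne_zero (s • x)).hasFDerivAt).comp_hasDerivAt s h2
    have h4 : deriv (fun s : ℝ => u (s • x)) s = fderiv ℝ u (s • x) x := h3.deriv
    rw [h4, mul_comm]
    exact (fderiv ℝ u (s • x)).le_opENorm x
  have h2 : ‖u (T • x) - u x‖ₑ ≤ ‖x‖ₑ * ∫⁻ s in Icc 1 T,
      ENNReal.ofReal (s ^ (-(3/4) : ℝ)) * (ENNReal.ofReal (s ^ (3/4 : ℝ)) * ‖fderiv ℝ u (s • x)‖ₑ) := by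
    refine h1.trans ?_
    rw [← lintegral_const_mul _ (by fun_prop)]
    apply setLIntegral_mono' measurableSet_Icc
    intro s hs
    refine (hder s).trans (le_of_eq ?_)
    have hs0 : 0 < s := lt_of_lt_of_le one_pos hs.1
    rw [← mul_assoc (ENNReal.ofReal _), ← ENNReal.ofReal_mul (by positivity),
      ← Real.rpow_add hs0]
    norm_num
  have h3 := cs_sq (volume.restrict (Icc 1 T)) (f := fun s => ENNReal.ofReal (s ^ (-(3/4) : ℝ)))
    (g := fun s => ENNReal.ofReal (s ^ (3/4 : ℝ)) * ‖fderiv ℝ u (s • x)‖ₑ) (by fun_prop) (by fun_prop)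
  have e1 : ∫⁻ s in Icc 1 T, ENNReal.ofReal (s ^ (-(3/4) : ℝ)) ^ 2 ≤ 2 := by
    refine le_trans (le_of_eq ?_) (weight_int T)
    apply setLIntegral_congr_fun measurableSet_Icc
    intro s hs
    have hs0 : 0 < s := lt_of_lt_of_le one_pos hs.1
    simp only
    rw [← ENNReal.ofReal_pow (by positivity), ← Real.rpow_natCast, ← Real.rpow_mul hs0.le]
    norm_num
  have e2 : ∫⁻ s in Icc 1 T, (ENNReal.ofReal (s ^ (3/4 : ℝ)) * ‖fderiv ℝ u (s • x)‖ₑ) ^ 2 = J := by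
    apply setLIntegral_congr_fun measurableSet_Icc
    intro s hs
    have hs0 : 0 < s := lt_of_lt_of_le one_pos hs.1
    simp only
    rw [mul_pow, ← ENNReal.ofReal_pow (by positivity), ← Real.rpow_natCast, ← Real.rpow_mul hs0.le]
    norm_num
  have hpow : ∀ Y : ℝ≥0∞, (Y ^ (1/2 : ℝ)) ^ 2 = Y := by
    intro Y
    rw [← ENNReal.rpow_natCast, ← ENNReal.rpow_mul]; norm_num
  have h4 : ‖u (T • x) - u x‖ₑ ^ 2 ≤ ‖x‖ₑ ^ 2 * (2 * J) := by
    calc _ ≤ (‖x‖ₑ * (2 ^ (1/2 : ℝ) * J ^ (1/2 : ℝ))) ^ 2 := by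
          gcongr
          refine h2.trans ?_
          gcongr
          refine h3.trans ?_
          rw [e2]
          gcongr
      _ = _ := by rw [mul_pow, mul_pow, hpow, hpow]
  have h5 : ‖u x‖ₑ ≤ ‖u (T • x)‖ₑ + ‖u (T • x) - u x‖ₑ := by
    have : u x = u (T • x) - (u (T • x) - u x) := by abel
    conv_lhs => rw [this]
    exact enorm_sub_le
  calc ‖u x‖ₑ ^ 2 ≤ (‖u (T • x)‖ₑ + ‖u (T • x) - u x‖ₑ) ^ 2 := by gcongr
    _ ≤ 2 * (‖u (T • x)‖ₑ ^ 2 + ‖u (T • x) - u x‖ₑ ^ 2) := enn_sq_add _ _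
    _ ≤ 2 * (‖u (T • x)‖ₑ ^ 2 + ‖x‖ₑ ^ 2 * (2 * J)) := by gcongr
    _ = _ := by ring

lemma dil {u : V3 → V3} (hu : ContDiff ℝ 1 u) {θ R : ℝ} (hθ : 0 < θ) (hθ1 : θ ≤ 1) (hR : 0 < R) :
    ∫⁻ x in ball (0 : V3) (θ * R), ‖u x‖ₑ ^ 2 ≤
      ENNReal.ofReal (2 * θ ^ 3) * (∫⁻ x in ball (0 : V3) R, ‖u x‖ₑ ^ 2)
      + ENNReal.ofReal (8 * (θ * R) ^ 2) * ∫⁻ x in ball (0 : V3) R, ‖fderiv ℝ u x‖ₑ ^ 2 := by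
  have huc := hu.continuous
  have hud : Continuous (fderiv ℝ u) := hu.continuous_fderiv one_ne_zero
  have hT : 1 ≤ θ⁻¹ := (one_le_inv₀ hθ).2 hθ1
  set D := ∫⁻ x in ball (0 : V3) R, ‖fderiv ℝ u x‖ₑ ^ 2
  set S := ∫⁻ x in ball (0 : V3) R, ‖u x‖ₑ ^ 2
  have hmeas : Measurable (fun p : V3 × ℝ =>
      ENNReal.ofReal (p.2 ^ (3/2 : ℝ)) * ‖fderiv ℝ u (p.2 • p.1)‖ₑ ^ 2) := by
    fun_prop
  have hJ : ∫⁻ x in ball (0 : V3) (θ * R), (∫⁻ s in Icc 1 θ⁻¹,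
      ENNReal.ofReal (s ^ (3/2 : ℝ)) * ‖fderiv ℝ u (s • x)‖ₑ ^ 2) ≤ 2 * D := by
    rw [lintegral_lintegral_swap hmeas.aemeasurable]
    calc _ ≤ ∫⁻ s in Icc 1 θ⁻¹, ENNReal.ofReal (s ^ (-(3/2) : ℝ)) * D := by
          apply setLIntegral_mono' measurableSet_Icc
          intro s hs
          have hs0 : 0 < s := lt_of_lt_of_le one_pos hs.1
          rw [lintegral_const_mul _ (by fun_prop)]
          have := scale_int (g := fun y => ‖fderiv ℝ u y‖ₑ ^ 2) (by fun_prop) hs0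
            (a := θ * R) (R := R) (by
              have : s * θ ≤ 1 := by
                calc _ ≤ θ⁻¹ * θ := by gcongr; exact hs.2
                  _ = 1 := inv_mul_cancel₀ hθ.ne'
              nlinarith)
          calc _ ≤ ENNReal.ofReal (s ^ (3/2 : ℝ)) * (ENNReal.ofReal ((s ^ 3)⁻¹) * D) := by gcongr
            _ = _ := by
              rw [← mul_assoc, ← ENNReal.ofReal_mul (by positivity)]
              congr 2
              rw [← Real.rpow_natCast, ← Real.rpow_neg hs0.le, ← Real.rpow_add hs0]
              norm_num
      _ = (∫⁻ s in Icc 1 θ⁻¹, ENNReal.ofReal (s ^ (-(3/2) : ℝ))) * D :=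
          lintegral_mul_const _ (by fun_prop)
      _ ≤ _ := by gcongr; exact weight_int _
  have hS : ∫⁻ x in ball (0 : V3) (θ * R), ‖u (θ⁻¹ • x)‖ₑ ^ 2 ≤ ENNReal.ofReal (θ ^ 3) * S := by
    have := scale_int (g := fun y => ‖u y‖ₑ ^ 2) (by fun_prop) (inv_pos.2 hθ)
            (a := θ * R) (R := R) (by rw [← mul_assoc, inv_mul_cancel₀ hθ.ne', one_mul])
    simpa using this
  calc _ ≤ ∫⁻ x in ball (0 : V3) (θ * R), (2 * ‖u (θ⁻¹ • x)‖ₑ ^ 2 +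
        4 * (ENNReal.ofReal ((θ * R) ^ 2) * ∫⁻ s in Icc 1 θ⁻¹,
          ENNReal.ofReal (s ^ (3/2 : ℝ)) * ‖fderiv ℝ u (s • x)‖ₑ ^ 2)) := by
        apply setLIntegral_mono' measurableSet_ball
        intro x hx
        refine (dil_pointwise hu hT x).trans ?_
        gcongr
        rw [ENNReal.ofReal_pow (by positivity), ← ofReal_norm]
        gcongr
        exact le_of_lt (by simpa using hx)
    _ = 2 * (∫⁻ x in ball (0 : V3) (θ * R), ‖u (θ⁻¹ • x)‖ₑ ^ 2) + 4 * (ENNReal.ofReal ((θ * R) ^ 2) *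
        ∫⁻ x in ball (0 : V3) (θ * R), (∫⁻ s in Icc 1 θ⁻¹,
      ENNReal.ofReal (s ^ (3/2 : ℝ)) * ‖fderiv ℝ u (s • x)‖ₑ ^ 2)) := by
        have hm2 : Measurable (fun x : V3 => ∫⁻ s in Icc 1 θ⁻¹,
          ENNReal.ofReal (s ^ (3/2 : ℝ)) * ‖fderiv ℝ u (s • x)‖ₑ ^ 2) := hmeas.lintegral_prod_right'
        have hm3 : Measurable (fun x : V3 => ‖u (θ⁻¹ • x)‖ₑ ^ 2) :=
          (huc.comp (continuous_const_smul θ⁻¹)).enorm.measurable.pow_const 2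
        rw [lintegral_add_left (hm3.const_mul _), lintegral_const_mul _ hm3,
          lintegral_const_mul _ (hm2.const_mul _), lintegral_const_mul _ hm2]
    _ ≤ 2 * (ENNReal.ofReal (θ ^ 3) * S) + 4 * (ENNReal.ofReal ((θ * R) ^ 2) * (2 * D)) := by
        gcongr
    _ = _ := by
        rw [ENNReal.ofReal_mul (by norm_num), ENNReal.ofReal_mul (p := 8) (by norm_num)]
        have : ENNReal.ofReal 8 = 4 * 2 := by norm_num
        rw [this]; norm_num; ring

lemma sobolev_theta {u : V3 → V3} (hu : ContDiff ℝ 1 u) {θ R : ℝ} (hθ : 0 < θ) (hθ1 : θ ≤ 1)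
    (hR : 0 < R) :
    (∫⁻ x in ball (0 : V3) (θ * R), ‖u x‖ₑ ^ 6) ^ (1/3 : ℝ) ≤
      9 * sobC * ((∫⁻ x in ball (0 : V3) R, ‖fderiv ℝ u x‖ₑ ^ 2)
        + ENNReal.ofReal (θ * R⁻¹ ^ 2) * ∫⁻ x in ball (0 : V3) R, ‖u x‖ₑ ^ 2) := by
  have hθR : 0 < θ * R := by positivity
  refine (sobolev_ball hu hθR).trans ?_
  rw [mul_comm 9 sobC, mul_assoc]
  gcongr
  have hd := dil hu hθ hθ1 hR
  set D := ∫⁻ x in ball (0 : V3) R, ‖fderiv ℝ u x‖ₑ ^ 2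
  set S := ∫⁻ x in ball (0 : V3) R, ‖u x‖ₑ ^ 2
  have hsub : ∫⁻ x in ball (0 : V3) (θ * R), ‖fderiv ℝ u x‖ₑ ^ 2 ≤ D :=
    lintegral_mono_set (ball_subset_ball (by nlinarith))
  calc _ ≤ D + ENNReal.ofReal ((θ * R)⁻¹ ^ 2) *
        (ENNReal.ofReal (2 * θ ^ 3) * S + ENNReal.ofReal (8 * (θ * R) ^ 2) * D) := by gcongr
    _ = D + (2 * (ENNReal.ofReal (θ * R⁻¹ ^ 2) * S) + 8 * D) := by
        rw [mul_add, ← mul_assoc, ← mul_assoc, ← ENNReal.ofReal_mul (by positivity),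
          ← ENNReal.ofReal_mul (by positivity)]
        have a1 : (θ * R)⁻¹ ^ 2 * (2 * θ ^ 3) = 2 * (θ * R⁻¹ ^ 2) := by field_simp
        have a2 : (θ * R)⁻¹ ^ 2 * (8 * (θ * R) ^ 2) = 8 := by field_simp
        rw [a1, a2, ENNReal.ofReal_mul (by norm_num)]
        norm_num; ring
    _ ≤ D + (9 * (ENNReal.ofReal (θ * R⁻¹ ^ 2) * S) + 8 * D) := by gcongr; norm_num
    _ = _ := by ring

theorem sqrt_sq_enn (k : ℝ≥0∞) : (k ^ (1/2:ℝ)) ^ 2 = k := by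
  rw [← ENNReal.rpow_natCast, ← ENNReal.rpow_mul]
  norm_num

theorem jensen_conv {F : Type*} [NormedAddCommGroup F] [NormedSpace ℝ F]
    {ρ : V3 → ℝ} (hρ : Continuous ρ) (h0 : ∀ x, 0 ≤ ρ x)
    (h1 : ∫⁻ x, ENNReal.ofReal (ρ x) ≤ 1) {ε : ℝ} (hs : ∀ x, ε ≤ ‖x‖ → ρ x = 0)
    {f : V3 → F} (hf : AEStronglyMeasurable f volume) (a : ℝ) :
    ∫⁻ x in ball 0 a, ‖∫ y, ρ (x - y) • f y‖ₑ ^ 2 ≤ ∫⁻ x in ball 0 (a + ε), ‖f x‖ₑ ^ 2 := by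
  set k : V3 → ℝ≥0∞ := fun x => ENNReal.ofReal (ρ x) with hk
  have hkm : Measurable k := (ENNReal.measurable_ofReal.comp hρ.measurable)
  set g : V3 → ℝ≥0∞ := indicator (ball 0 (a + ε)) (fun y => ‖f y‖ₑ ^ 2) with hg
  have hgm : AEMeasurable g volume := (hf.enorm.pow_const 2).indicator measurableSet_ball
  have hpt : ∀ x ∈ ball (0:V3) a, ‖∫ y, ρ (x - y) • f y‖ₑ ^ 2 ≤ ∫⁻ y, k (x - y) * g y := by
    intro x hx
    have hkx : Measurable (fun y => k (x - y)) := hkm.comp (measurable_const.sub measurable_id)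
    have e1 : ‖∫ y, ρ (x - y) • f y‖ₑ ≤
        ∫⁻ y, (k (x - y)) ^ (1/2:ℝ) * ((k (x - y)) ^ (1/2:ℝ) * ‖f y‖ₑ) := by
      refine (enorm_integral_le_lintegral_enorm _).trans (le_of_eq ?_)
      refine lintegral_congr fun y => ?_
      rw [enorm_smul, ← mul_assoc, ← sq, sqrt_sq_enn, Real.enorm_eq_ofReal (h0 _)]
    have e2 := cs_sq volume (f := fun y => (k (x - y)) ^ (1/2:ℝ))
      (g := fun y => (k (x - y)) ^ (1/2:ℝ) * ‖f y‖ₑ) (hkx.pow_const _).aemeasurable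
      ((hkx.pow_const _).aemeasurable.mul hf.enorm)
    simp only [mul_pow, sqrt_sq_enn] at e2
    have e3 : ∫⁻ y, k (x - y) ≤ 1 := by
      rw [lintegral_sub_left_eq_self k x]; exact h1
    have e4 : ∫⁻ y, k (x - y) * ‖f y‖ₑ ^ 2 ≤ ∫⁻ y, k (x - y) * g y := by
      refine lintegral_mono fun y => ?_
      by_cases hy : y ∈ ball (0:V3) (a + ε)
      · simp [hg, hy]
      · have : k (x - y) = 0 := by
          have : ρ (x - y) = 0 := by
            apply hs
            rw [mem_ball_zero_iff] at hx hy
            have := norm_sub_norm_le y x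
            rw [norm_sub_rev] at this
            linarith
          simp [hk, this]
        simp [this]
    calc ‖∫ y, ρ (x - y) • f y‖ₑ ^ 2 ≤ (1 * (∫⁻ y, k (x - y) * g y) ^ (1/2:ℝ)) ^ 2 := by
          gcongr
          refine (e1.trans e2).trans ?_
          gcongr
          calc (∫⁻ y, k (x - y)) ^ (1/2:ℝ) ≤ 1 ^ (1/2:ℝ) := by gcongr
            _ = 1 := by simp
      _ = _ := by rw [one_mul, sqrt_sq_enn]
  calc ∫⁻ x in ball 0 a, ‖∫ y, ρ (x - y) • f y‖ₑ ^ 2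
      ≤ ∫⁻ x in ball 0 a, ∫⁻ y, k (x - y) * g y := setLIntegral_mono' measurableSet_ball hpt
    _ ≤ ∫⁻ x, ∫⁻ y, k (x - y) * g y := setLIntegral_le_lintegral _ _
    _ = ∫⁻ y, ∫⁻ x, k (x - y) * g y := by
        apply lintegral_lintegral_swap
        exact (hkm.comp (measurable_fst.sub measurable_snd)).aemeasurable.mul hgm.comp_snd
    _ ≤ ∫⁻ y, g y := by
        refine lintegral_mono fun y => ?_
        rw [lintegral_mul_const _ (show Measurable (fun x => k (x - y)) from hkm.comp (measurable_id.sub measurable_const)),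
          lintegral_sub_right_eq_self k y]
        calc _ ≤ 1 * g y := by gcongr
          _ = g y := one_mul _
    _ = _ := by rw [hg, lintegral_indicator measurableSet_ball]

open Convolution in
theorem moll_deriv {w : V3 → V3} {dw : V3 → V3 →L[ℝ] V3} {ρ : V3 → ℝ}
    (hw : Integrable (indicator (ball 0 1) w) volume)
    (hdw : Integrable (indicator (ball 0 1) dw) volume)
    (hwk : ∀ φ : V3 → ℝ, IsSpaceTest (ball 0 1) φ → ∀ e : V3,
      (∫ x in ball 0 1, φ x • dw x e) = - ∫ x in ball 0 1, fderiv ℝ φ x e • w x)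
    (hρ : ContDiff ℝ (⊤ : ℕ∞) ρ) {ε : ℝ} (hs : tsupport ρ ⊆ closedBall 0 ε)
    (hc : HasCompactSupport ρ) {x : V3} (hx : ‖x‖ + ε < 1) :
    fderiv ℝ (ρ ⋆[ContinuousLinearMap.lsmul ℝ ℝ, volume] (indicator (ball 0 1) w)) x
      = ∫ y, ρ (x - y) • indicator (ball 0 1) dw y := by
  have hρ1 : ContDiff ℝ 1 ρ := hρ.of_le (by exact_mod_cast le_top)
  rw [(hc.hasFDerivAt_convolution_left (ContinuousLinearMap.lsmul ℝ ℝ) hρ1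
    hw.locallyIntegrable x).fderiv]
  have hce : ConvolutionExistsAt (fderiv ℝ ρ) (indicator (ball 0 1) w) x
      (ContinuousLinearMap.precompL V3 (ContinuousLinearMap.lsmul ℝ ℝ)) volume :=
    (hc.fderiv ℝ).convolutionExists_left _ (hρ1.continuous_fderiv one_ne_zero)
      hw.locallyIntegrable x
  obtain ⟨Cρ, hCρ⟩ := hρ1.continuous.bounded_above_of_compact_support hc
  have hIntg : Integrable (fun y => ρ (x - y) • indicator (ball 0 1) dw y) volume :=
    hdw.bdd_smul Cρ (hρ1.continuous.comp (continuous_const.sub continuous_id)).aestronglyMeasurable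
      (Eventually.of_forall fun y => hCρ _)
  ext1 e
  rw [convolution_def, ContinuousLinearMap.integral_apply hce.integrable,
    ContinuousLinearMap.integral_apply hIntg]
  set φ : V3 → ℝ := fun y => ρ (x - y) with hφ
  have hfd : ∀ y, fderiv ℝ φ y e = - fderiv ℝ ρ (x - y) e := by
    intro y
    have h1 : HasFDerivAt (fun y => x - y) (-ContinuousLinearMap.id ℝ V3) y :=
      (hasFDerivAt_id y).const_sub x
    have h2 := ((hρ1.differentiable one_ne_zero) (x - y)).hasFDerivAt.comp y h1
    have h3 : HasFDerivAt φ _ y := h2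
    rw [h3.fderiv]; simp
  have htest : IsSpaceTest (ball 0 1) φ := by
    have hts : tsupport φ ⊆ closedBall x ε := by
      apply closure_minimal _ isClosed_closedBall
      intro y hy
      have : x - y ∈ tsupport ρ := subset_tsupport _ hy
      have := hs this
      rw [mem_closedBall_zero_iff, norm_sub_rev] at this
      rwa [mem_closedBall, dist_eq_norm]
    refine ⟨hρ.comp (contDiff_const.sub contDiff_id), ?_, ?_⟩
    · exact (isCompact_closedBall x ε).of_isClosed_subset (isClosed_tsupport _) hts
    · intro y hy
      have := hts hy
      rw [mem_closedBall, dist_eq_norm] at this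
      rw [mem_ball_zero_iff]
      have := norm_sub_norm_le y x
      linarith
  have key := hwk φ htest e
  have l1 : (∫ y, (ρ (x - y) • indicator (ball 0 1) dw y) e) = ∫ y in ball 0 1, φ y • dw y e := by
    rw [← integral_indicator measurableSet_ball]
    congr 1; ext1 y
    by_cases hy : y ∈ ball (0:V3) 1
    · simp [hφ, indicator_of_mem hy]
    · simp [hφ, indicator_of_notMem hy]
  rw [l1, key, ← integral_neg, ← integral_indicator measurableSet_ball,
    ← integral_sub_left_eq_self _ volume x]
  congr 1; ext1 y
  by_cases hy : y ∈ ball (0:V3) 1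
  · simp [indicator_of_mem hy, hfd, ContinuousLinearMap.precompL_apply]
  · simp [indicator_of_notMem hy, ContinuousLinearMap.precompL_apply]

theorem integrable_ind {F : Type*} [NormedAddCommGroup F] {f : V3 → F}
    (hm : AEStronglyMeasurable f (volume.restrict (ball 0 1)))
    (hf : ∫⁻ x in ball 0 1, ‖f x‖ₑ ^ 2 ≠ ∞) : Integrable (indicator (ball 0 1) f) volume := by
  rw [integrable_indicator_iff measurableSet_ball]
  refine ⟨hm, ?_⟩
  rw [hasFiniteIntegral_iff_enorm]
  have h := cs_sq (volume.restrict (ball (0:V3) 1)) (f := fun x => ‖f x‖ₑ) (g := fun _ => 1)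
    hm.enorm aemeasurable_const
  simp only [mul_one] at h
  refine h.trans_lt (ENNReal.mul_lt_top ?_ ?_)
  · exact ENNReal.rpow_lt_top_of_nonneg (by norm_num) hf
  · refine ENNReal.rpow_lt_top_of_nonneg (by norm_num) ?_
    simp [measure_ball_lt_top.ne]

/-- One mollification step. -/
theorem moll_step {w : V3 → V3} {dw : V3 → V3 →L[ℝ] V3}
    (hwm : AEStronglyMeasurable w (volume.restrict (ball 0 1)))
    (hdwm : AEStronglyMeasurable dw (volume.restrict (ball 0 1)))
    (hw2 : ∫⁻ x in ball 0 1, ‖w x‖ₑ ^ 2 ≠ ∞) (hdw2 : ∫⁻ x in ball 0 1, ‖dw x‖ₑ ^ 2 ≠ ∞)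
    (hwk : ∀ φ : V3 → ℝ, IsSpaceTest (ball 0 1) φ → ∀ e : V3,
      (∫ x in ball 0 1, φ x • dw x e) = - ∫ x in ball 0 1, fderiv ℝ φ x e • w x)
    {θ R : ℝ} (hθ : 0 < θ) (hθ1 : θ ≤ 1) (hR : 0 < R) (hR1 : R ≤ 1)
    (b : ContDiffBump (0 : V3)) (hb : b.rOut ≤ R / 2) :
    ContDiff ℝ 1 (convolution (b.normed volume) (indicator (ball 0 1) w)
      (ContinuousLinearMap.lsmul ℝ ℝ) volume) ∧
    (∫⁻ x in ball 0 (θ * (R - b.rOut)), ‖convolution (b.normed volume) (indicator (ball 0 1) w)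
      (ContinuousLinearMap.lsmul ℝ ℝ) volume x‖ₑ ^ 6) ^ (1/3:ℝ) ≤
      36 * sobC * ((∫⁻ x in ball 0 R, ‖dw x‖ₑ ^ 2)
        + ENNReal.ofReal (θ * R⁻¹ ^ 2) * ∫⁻ x in ball 0 R, ‖w x‖ₑ ^ 2) := by
  have hW := integrable_ind hwm hw2
  have hdW := integrable_ind hdwm hdw2
  set ρ := b.normed (volume : Measure V3) with hρd
  set u := convolution ρ (indicator (ball 0 1) w) (ContinuousLinearMap.lsmul ℝ ℝ) volume with hu
  set ε := b.rOut with hε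
  have hε0 : 0 < ε := b.rOut_pos
  have hρ : ContDiff ℝ (⊤ : ℕ∞) ρ := b.contDiff_normed
  have hc : HasCompactSupport ρ := b.hasCompactSupport_normed
  have hts : tsupport ρ ⊆ closedBall 0 ε := b.tsupport_normed_eq.le
  have h0 : ∀ x, 0 ≤ ρ x := fun x => b.nonneg_normed x
  have hsz : ∀ x, ε ≤ ‖x‖ → ρ x = 0 := by
    intro x hx
    by_contra h
    have : x ∈ Function.support ρ := h
    rw [hρd, b.support_normed_eq, mem_ball_zero_iff] at this
    linarith
  have h1 : ∫⁻ x, ENNReal.ofReal (ρ x) ≤ 1 := by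
    rw [← ofReal_integral_eq_lintegral_ofReal (hρ.continuous.integrable_of_hasCompactSupport hc)
      (Eventually.of_forall h0), b.integral_normed]
    simp
  have hu1 : ContDiff ℝ 1 u := by
    exact_mod_cast hc.contDiff_convolution_left (n := 1) (ContinuousLinearMap.lsmul ℝ ℝ)
      (hρ.of_le (by exact_mod_cast le_top)) hW.locallyIntegrable
  refine ⟨hu1, ?_⟩
  have hRe : 0 < R - ε := by linarith
  have hval : ∀ x, u x = ∫ y, ρ (x - y) • indicator (ball 0 1) w y := by
    intro x
    rw [hu, convolution_def, ← integral_sub_left_eq_self _ volume x]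
    simp
  have hsub : ball (0:V3) R ⊆ ball 0 1 := ball_subset_ball hR1
  have hind : ∀ {F : Type} [NormedAddCommGroup F] (f : V3 → F),
      ∫⁻ x in ball 0 (R - ε + ε), ‖indicator (ball 0 1) f x‖ₑ ^ 2 = ∫⁻ x in ball 0 R, ‖f x‖ₑ ^ 2 := by
    intro F _ f
    rw [sub_add_cancel]
    refine setLIntegral_congr_fun measurableSet_ball fun x hx => ?_
    simp only [indicator_of_mem (hsub hx)]
  have j1 : ∫⁻ x in ball 0 (R - ε), ‖u x‖ₑ ^ 2 ≤ ∫⁻ x in ball 0 R, ‖w x‖ₑ ^ 2 := by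
    have := jensen_conv hρ.continuous h0 h1 hsz hW.aestronglyMeasurable (R - ε)
    rw [hind] at this
    simpa only [← hval] using this
  have j2 : ∫⁻ x in ball 0 (R - ε), ‖fderiv ℝ u x‖ₑ ^ 2 ≤ ∫⁻ x in ball 0 R, ‖dw x‖ₑ ^ 2 := by
    have := jensen_conv hρ.continuous h0 h1 hsz hdW.aestronglyMeasurable (R - ε)
    rw [hind] at this
    refine le_trans (le_of_eq ?_) this
    refine setLIntegral_congr_fun measurableSet_ball fun x hx => ?_
    rw [mem_ball_zero_iff] at hx
    rw [hu, moll_deriv hW hdW hwk hρ hts hc (by linarith)]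
  have hinv : (R - ε)⁻¹ ^ 2 ≤ 4 * R⁻¹ ^ 2 := by
    have : (R - ε)⁻¹ ≤ 2 * R⁻¹ := by
      rw [← div_eq_mul_inv, inv_le_comm₀ hRe (by positivity), inv_div]
      linarith
    calc (R - ε)⁻¹ ^ 2 ≤ (2 * R⁻¹) ^ 2 := by gcongr
      _ = _ := by ring
  have hof : ENNReal.ofReal (θ * (R - ε)⁻¹ ^ 2) ≤ 4 * ENNReal.ofReal (θ * R⁻¹ ^ 2) := by
    have : (4:ℝ≥0∞) = ENNReal.ofReal 4 := by simp
    rw [this, ← ENNReal.ofReal_mul (by norm_num)]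
    apply ENNReal.ofReal_le_ofReal
    nlinarith
  refine (sobolev_theta hu1 hθ hθ1 hRe).trans ?_
  set X := ∫⁻ x in ball 0 R, ‖dw x‖ₑ ^ 2
  set Y := ∫⁻ x in ball 0 R, ‖w x‖ₑ ^ 2
  calc _ ≤ 9 * sobC * (4 * X + 4 * ENNReal.ofReal (θ * R⁻¹ ^ 2) * Y) := by
        gcongr
        exact j2.trans (le_mul_of_one_le_left zero_le (by norm_num))
    _ = _ := by ring

theorem weak_sobolev {w : V3 → V3} {dw : V3 → V3 →L[ℝ] V3}
    (hwm : AEStronglyMeasurable w (volume.restrict (ball 0 1)))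
    (hdwm : AEStronglyMeasurable dw (volume.restrict (ball 0 1)))
    (hw2 : ∫⁻ x in ball 0 1, ‖w x‖ₑ ^ 2 ≠ ∞) (hdw2 : ∫⁻ x in ball 0 1, ‖dw x‖ₑ ^ 2 ≠ ∞)
    (hwk : ∀ φ : V3 → ℝ, IsSpaceTest (ball 0 1) φ → ∀ e : V3,
      (∫ x in ball 0 1, φ x • dw x e) = - ∫ x in ball 0 1, fderiv ℝ φ x e • w x)
    {θ R : ℝ} (hθ : 0 < θ) (hθ1 : θ ≤ 1) (hR : 0 < R) (hR1 : R ≤ 1) :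
    (∫⁻ x in ball 0 (θ * R), ‖w x‖ₑ ^ 6) ^ (1/3:ℝ) ≤
      36 * sobC * ((∫⁻ x in ball 0 R, ‖dw x‖ₑ ^ 2)
        + ENNReal.ofReal (θ * R⁻¹ ^ 2) * ∫⁻ x in ball 0 R, ‖w x‖ₑ ^ 2) := by
  set M := 36 * sobC * ((∫⁻ x in ball 0 R, ‖dw x‖ₑ ^ 2)
        + ENNReal.ofReal (θ * R⁻¹ ^ 2) * ∫⁻ x in ball 0 R, ‖w x‖ₑ ^ 2) with hM
  have hW := integrable_ind hwm hw2
  let bump : ℕ → ContDiffBump (0 : V3) := fun n =>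
    { rIn := R / (n + 2) / 2
      rOut := R / (n + 2)
      rIn_pos := by positivity
      rIn_lt_rOut := half_lt_self (by positivity) }
  have hbo : ∀ n, (bump n).rOut = R / (n + 2) := fun n => rfl
  have hb : ∀ n, (bump n).rOut ≤ R / 2 := by
    intro n
    rw [hbo]
    gcongr
    linarith [(Nat.cast_nonneg n : (0:ℝ) ≤ n)]
  have hlim : Tendsto (fun n => (bump n).rOut) atTop (𝓝 0) := by
    simp only [hbo]
    refine Tendsto.div_atTop tendsto_const_nhds ?_
    exact tendsto_atTop_add_const_right _ _ tendsto_natCast_atTop_atTop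
  set u : ℕ → V3 → V3 := fun n => convolution ((bump n).normed volume) (indicator (ball 0 1) w)
      (ContinuousLinearMap.lsmul ℝ ℝ) volume with hu
  have step := fun n => moll_step hwm hdwm hw2 hdw2 hwk hθ hθ1 hR hR1 (bump n) (hb n)
  have hae : ∀ᵐ x ∂(volume : Measure V3),
      Tendsto (fun n => u n x) atTop (𝓝 (indicator (ball 0 1) w x)) :=
    ContDiffBump.ae_convolution_tendsto_right_of_locallyIntegrable (K := 2) hlim
      (Eventually.of_forall fun n => by change R / (n + 2) ≤ 2 * (R / (n + 2) / 2); linarith)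
      hW.locallyIntegrable
  set F : ℕ → V3 → ℝ≥0∞ := fun n => indicator (ball 0 (θ * (R - (bump n).rOut)))
    (fun x => ‖u n x‖ₑ ^ 6) with hF
  have hFm : ∀ n, Measurable (F n) := fun n =>
    ((step n).1.continuous.measurable.enorm.pow_const 6).indicator measurableSet_ball
  have hFb : ∀ n, ∫⁻ x, F n x ≤ M ^ 3 := by
    intro n
    rw [hF]
    simp only
    rw [lintegral_indicator measurableSet_ball]
    have := (step n).2
    calc _ = ((∫⁻ x in ball 0 (θ * (R - (bump n).rOut)), ‖u n x‖ₑ ^ 6) ^ (1/3:ℝ)) ^ 3 := by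
          rw [← ENNReal.rpow_natCast, ← ENNReal.rpow_mul]; norm_num
      _ ≤ M ^ 3 := by gcongr
  have hfat : ∫⁻ x in ball 0 (θ * R), ‖w x‖ₑ ^ 6 ≤ M ^ 3 := by
    calc ∫⁻ x in ball 0 (θ * R), ‖w x‖ₑ ^ 6
        ≤ ∫⁻ x in ball 0 (θ * R), liminf (fun n => F n x) atTop := by
          refine lintegral_mono_ae ?_
          filter_upwards [ae_restrict_of_ae hae, ae_restrict_mem measurableSet_ball] with x hx hxb
          have hx1 : x ∈ ball (0:V3) 1 := by
            rw [mem_ball_zero_iff] at hxb ⊢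
            nlinarith
          rw [indicator_of_mem hx1] at hx
          have t1 : Tendsto (fun n => ‖u n x‖ₑ ^ 6) atTop (𝓝 (‖w x‖ₑ ^ 6)) :=
            ((ENNReal.continuous_pow 6).tendsto _).comp hx.enorm
          have t2 : ∀ᶠ n in atTop, ‖u n x‖ₑ ^ 6 = F n x := by
            have : Tendsto (fun n => θ * (R - (bump n).rOut)) atTop (𝓝 (θ * (R - 0))) :=
              (tendsto_const_nhds.sub hlim).const_mul θ
            rw [mem_ball_zero_iff] at hxb
            filter_upwards [this.eventually (lt_mem_nhds (by simpa using hxb))] with n hn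
            rw [hF]
            simp only
            rw [indicator_of_mem (by rw [mem_ball_zero_iff]; exact hn)]
          exact (t1.congr' t2).liminf_eq.ge
      _ ≤ ∫⁻ x, liminf (fun n => F n x) atTop := setLIntegral_le_lintegral _ _
      _ ≤ liminf (fun n => ∫⁻ x, F n x) atTop := lintegral_liminf_le hFm
      _ ≤ liminf (fun _ : ℕ => M ^ 3) atTop := liminf_le_liminf (Eventually.of_forall hFb)
      _ = M ^ 3 := by simp
  calc _ ≤ (M ^ 3) ^ (1/3:ℝ) := by gcongr
    _ = M := by rw [← ENNReal.rpow_natCast, ← ENNReal.rpow_mul]; norm_num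

theorem fnormSq_nonneg' (A : V3 →L[ℝ] V3) : 0 ≤ fnormSq A := by
  unfold fnormSq; positivity

theorem norm_sq_le_fnormSq (A : V3 →L[ℝ] V3) : ‖A‖ ^ 2 ≤ fnormSq A := by
  have h : ‖A‖ ≤ √(fnormSq A) := by
    refine A.opNorm_le_bound (Real.sqrt_nonneg _) fun x => ?_
    have e1 : A x = ∑ i, x i • A (e3 i) := by
      conv_lhs => rw [v3_decomp x]
      simp [map_sum]
    have e2 : ‖x‖ = √(∑ i, ‖x i‖ ^ 2) := EuclideanSpace.norm_eq x
    rw [e1, e2, mul_comm]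
    refine (norm_sum_le _ _).trans ?_
    simp only [norm_smul]
    exact Real.sum_mul_le_sqrt_mul_sqrt Finset.univ (fun i => ‖x i‖) (fun i => ‖A (e3 i)‖)
  calc ‖A‖ ^ 2 ≤ √(fnormSq A) ^ 2 := by gcongr
    _ = _ := Real.sq_sqrt (fnormSq_nonneg' A)

theorem enorm_pow_ofReal {F : Type*} [NormedAddCommGroup F] (x : F) (n : ℕ) :
    ‖x‖ₑ ^ n = ENNReal.ofReal (‖x‖ ^ n) := by
  rw [ENNReal.ofReal_pow (norm_nonneg _), ofReal_norm]

theorem slice_bound {w : V3 → V3} {dw : V3 → V3 →L[ℝ] V3}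
    (hwm : AEStronglyMeasurable w (volume.restrict (ball 0 1)))
    (hdwm : AEStronglyMeasurable dw (volume.restrict (ball 0 1)))
    (hw2 : IntegrableOn (fun x => ‖w x‖ ^ 2) (ball 0 1) volume)
    (hdw2 : IntegrableOn (fun x => fnormSq (dw x)) (ball 0 1) volume)
    (hwk : ∀ φ : V3 → ℝ, IsSpaceTest (ball 0 1) φ → ∀ e : V3,
      (∫ x in ball 0 1, φ x • dw x e) = - ∫ x in ball 0 1, fderiv ℝ φ x e • w x)
    {θ R : ℝ} (hθ : 0 < θ) (hθ1 : θ ≤ 1) (hR : 0 < R) (hR1 : R ≤ 1) :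
    (∫ x in ball 0 (θ * R), ‖w x‖ ^ 6) ^ ((1:ℝ)/3) ≤
      (36 * sobC).toReal * ((∫ x in ball 0 R, fnormSq (dw x))
        + θ * R⁻¹ ^ 2 * ∫ x in ball 0 R, ‖w x‖ ^ 2) := by
  have hsub : ball (0:V3) R ⊆ ball 0 1 := ball_subset_ball hR1
  have hfin : 36 * sobC ≠ ∞ := ENNReal.mul_ne_top (by norm_num) sobC_ne_top
  have a1 : ∀ r : ℝ, r ≤ 1 →
      ∫⁻ x in ball 0 r, ‖w x‖ₑ ^ 2 = ENNReal.ofReal (∫ x in ball 0 r, ‖w x‖ ^ 2) := by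
    intro r hr
    rw [ofReal_integral_eq_lintegral_ofReal (hw2.mono_set (ball_subset_ball hr))
      (Eventually.of_forall fun x => by positivity)]
    simp only [enorm_pow_ofReal]
  have a2 : ∀ r : ℝ, r ≤ 1 →
      ∫⁻ x in ball 0 r, ‖dw x‖ₑ ^ 2 ≤ ENNReal.ofReal (∫ x in ball 0 r, fnormSq (dw x)) := by
    intro r hr
    rw [ofReal_integral_eq_lintegral_ofReal (hdw2.mono_set (ball_subset_ball hr))
      (Eventually.of_forall fun x => fnormSq_nonneg' _)]
    simp only [enorm_pow_ofReal]
    exact lintegral_mono fun x => ENNReal.ofReal_le_ofReal (norm_sq_le_fnormSq _)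
  have key := weak_sobolev hwm hdwm (by rw [a1 1 le_rfl]; exact ENNReal.ofReal_ne_top)
    ((a2 1 le_rfl).trans_lt ENNReal.ofReal_lt_top).ne hwk hθ hθ1 hR hR1
  have hsub2 : ball (0:V3) (θ * R) ⊆ ball 0 1 := ball_subset_ball (by nlinarith)
  have hwm2 : AEStronglyMeasurable w (volume.restrict (ball 0 (θ * R))) :=
    hwm.mono_measure (Measure.restrict_mono hsub2 le_rfl)
  rw [integral_eq_lintegral_of_nonneg_ae (f := fun x => ‖w x‖ ^ 6)
    (Eventually.of_forall fun x => by positivity)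
    (hwm2.norm.pow 6), ENNReal.toReal_rpow]
  simp only [← enorm_pow_ofReal]
  have hX : 0 ≤ ∫ x in ball 0 R, fnormSq (dw x) := integral_nonneg fun x => fnormSq_nonneg' _
  have hY : 0 ≤ ∫ x in ball 0 R, ‖w x‖ ^ 2 := integral_nonneg fun x => by positivity
  apply ENNReal.toReal_le_of_le_ofReal (by positivity)
  refine key.trans ?_
  rw [a1 R hR1, ENNReal.ofReal_mul ENNReal.toReal_nonneg, ENNReal.ofReal_toReal hfin,
    ENNReal.ofReal_add hX (by positivity), ENNReal.ofReal_mul (p := θ * R⁻¹ ^ 2) (by positivity)]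
  gcongr
  exact a2 R hR1

theorem main16 :
    ∃ c : ℝ, 0 < c ∧
      ∀ (v : V3 → ℝ → V3) (dv : V3 → ℝ → V3 →L[ℝ] V3),
        AEMeasurable (fun z : V3 × ℝ => v z.1 z.2)
          (volume.restrict (ball (0 : V3) 1 ×ˢ Ioo (-1 : ℝ) 0)) →
        AEMeasurable (fun z : V3 × ℝ => dv z.1 z.2)
          (volume.restrict (ball (0 : V3) 1 ×ˢ Ioo (-1 : ℝ) 0)) →
        (∃ K : ℝ, ∀ s ∈ Ioo (-1 : ℝ) 0,
          IntegrableOn (fun x => ‖v x s‖ ^ 2) (ball (0 : V3) 1) volume ∧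
          (∫ x in ball (0 : V3) 1, ‖v x s‖ ^ 2) ≤ K) →
        IsWeakSpatialGradient (ball (0 : V3) 1) (Ioo (-1 : ℝ) 0) v dv →
        IntegrableOn (fun z : V3 × ℝ => fnormSq (dv z.1 z.2))
          (ball (0 : V3) 1 ×ˢ Ioo (-1 : ℝ) 0) volume →
        ∀ r θ : ℝ, 0 < r → r ≤ 1 → 0 < θ → θ ≤ 1 →
          funG v (θ*r) ≤ c * (θ⁻¹ * funE dv r + θ ^ 2 * funA v r) := by
  refine ⟨(36 * sobC).toReal + 1, by positivity, ?_⟩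
  intro v dv hvm hdvm hK hwk hdv r θ hr hr1 hθ hθ1
  obtain ⟨K, hK⟩ := hK
  set C := (36 * sobC).toReal with hC
  have hC0 : 0 ≤ C := ENNReal.toReal_nonneg
  have hprod : (volume : Measure (V3 × ℝ)).restrict (ball (0 : V3) 1 ×ˢ Ioo (-1 : ℝ) 0)
      = (volume.restrict (ball (0:V3) 1)).prod (volume.restrict (Ioo (-1:ℝ) 0)) := by
    rw [Measure.prod_restrict]; rfl
  have hprodr : (volume : Measure (V3 × ℝ)).restrict (ball (0 : V3) r ×ˢ Ioo (-r^2) 0)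
      = (volume.restrict (ball (0:V3) r)).prod (volume.restrict (Ioo (-r^2) 0)) := by
    rw [Measure.prod_restrict]; rfl
  have hr2 : r ^ 2 ≤ 1 := by nlinarith
  have hIr : Ioo (-r ^ 2) 0 ⊆ Ioo (-1:ℝ) 0 := Ioo_subset_Ioo_left (by linarith)
  have hIθ : Ioo (-(θ * r) ^ 2) 0 ⊆ Ioo (-r ^ 2) 0 := by
    apply Ioo_subset_Ioo_left
    have : (θ * r) ^ 2 ≤ r ^ 2 := by
      apply pow_le_pow_left₀ (by positivity); nlinarith
    linarith
  -- slices
  have s1 : ∀ᵐ t ∂(volume.restrict (Ioo (-1:ℝ) 0)),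
      AEStronglyMeasurable (fun x => v x t) (volume.restrict (ball (0:V3) 1)) := by
    rw [hprod] at hvm
    exact hvm.aestronglyMeasurable.prod_swap.prodMk_left
  have s2 : ∀ᵐ t ∂(volume.restrict (Ioo (-1:ℝ) 0)),
      AEStronglyMeasurable (fun x => dv x t) (volume.restrict (ball (0:V3) 1)) := by
    rw [hprod] at hdvm
    exact hdvm.aestronglyMeasurable.prod_swap.prodMk_left
  have s3 : ∀ᵐ t ∂(volume.restrict (Ioo (-1:ℝ) 0)),
      IntegrableOn (fun x => fnormSq (dv x t)) (ball (0:V3) 1) volume := by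
    have h := hdv
    rw [IntegrableOn, hprod] at h
    exact h.prod_left_ae
  have hE : IntegrableOn (fun t => ∫ x in ball (0:V3) r, fnormSq (dv x t)) (Ioo (-r^2) 0) volume := by
    have h := hdv.mono_set (prod_mono (ball_subset_ball hr1) hIr)
    rw [IntegrableOn, hprodr] at h
    exact h.integral_prod_right
  set M := sSup ((fun s => ∫ x in ball (0 : V3) r, ‖v x s‖ ^ 2) '' Ioo (-r ^ 2) 0) with hM
  have hbdd : BddAbove ((fun s => ∫ x in ball (0 : V3) r, ‖v x s‖ ^ 2) '' Ioo (-r ^ 2) 0) := by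
    refine ⟨K, ?_⟩
    rintro _ ⟨s, hs, rfl⟩
    obtain ⟨h1, h2⟩ := hK s (hIr hs)
    refine le_trans ?_ h2
    exact setIntegral_mono_set h1 (Eventually.of_forall fun x => by positivity)
      (ball_subset_ball hr1).eventuallyLE
  have hMle : ∀ s ∈ Ioo (-r^2) 0, ∫ x in ball (0 : V3) r, ‖v x s‖ ^ 2 ≤ M :=
    fun s hs => le_csSup hbdd ⟨s, hs, rfl⟩
  have hM0 : 0 ≤ M := by
    apply Real.sSup_nonneg
    rintro _ ⟨s, hs, rfl⟩
    exact integral_nonneg fun x => by positivity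
  have hbound : ∀ᵐ t ∂(volume.restrict (Ioo (-(θ * r) ^ 2) 0)),
      (∫ x in ball (0 : V3) (θ * r), ‖v x t‖ ^ 6) ^ ((1:ℝ)/3) ≤
        C * ((∫ x in ball 0 r, fnormSq (dv x t)) + θ * r⁻¹ ^ 2 * M) := by
    have hle : (volume : Measure ℝ).restrict (Ioo (-(θ * r) ^ 2) 0) ≤ volume.restrict (Ioo (-1:ℝ) 0) :=
      Measure.restrict_mono (hIθ.trans hIr) le_rfl
    filter_upwards [ae_mono hle s1, ae_mono hle s2, ae_mono hle s3, ae_mono hle hwk,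
      ae_restrict_mem measurableSet_Ioo] with t h1 h2 h3 h4 ht
    refine (slice_bound h1 h2 (hK t (hIr (hIθ ht))).1 h3 h4 hθ hθ1 hr hr1).trans ?_
    gcongr
    exact hMle t (hIθ ht)
  have hEθ := hE.mono_set hIθ
  have hEnn : ∀ t, 0 ≤ ∫ x in ball (0:V3) r, fnormSq (dv x t) :=
    fun t => integral_nonneg fun x => fnormSq_nonneg' _
  set I := ∫ t in Ioo (-r ^ 2) 0, ∫ x in ball (0 : V3) r, fnormSq (dv x t) with hI
  have hI0 : 0 ≤ I := integral_nonneg hEnn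
  have hG : ∫ t in Ioo (-(θ * r) ^ 2) 0, (∫ x in ball (0 : V3) (θ * r), ‖v x t‖ ^ 6) ^ ((1:ℝ)/3)
      ≤ C * (I + θ ^ 3 * M) := by
    have hci : IntegrableOn (fun _ : ℝ => θ * r⁻¹ ^ 2 * M) (Ioo (-(θ * r) ^ 2) 0) volume :=
      integrableOn_const (by simp)
    refine (integral_mono_of_nonneg (Eventually.of_forall fun t => ?_)
      ((hEθ.add hci).const_mul C) hbound).trans ?_
    · exact Real.rpow_nonneg (integral_nonneg fun x => by positivity) _
    · simp only [Pi.add_apply]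
      rw [integral_const_mul, integral_add hEθ hci]
      have k1 : ∫ t in Ioo (-(θ * r) ^ 2) 0, ∫ x in ball (0 : V3) r, fnormSq (dv x t) ≤ I :=
        setIntegral_mono_set hE (Eventually.of_forall hEnn) hIθ.eventuallyLE
      have k2 : ∫ _t in Ioo (-(θ * r) ^ 2) 0, θ * r⁻¹ ^ 2 * M = θ ^ 3 * M := by
        rw [setIntegral_const]
        simp only [Measure.real, Real.volume_Ioo, smul_eq_mul]
        rw [ENNReal.toReal_ofReal (by nlinarith [sq_nonneg (θ * r)])]
        field_simp
        ring
      rw [k2]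
      gcongr
  unfold funG funE funA
  rw [← hM, ← hI]
  calc (θ * r)⁻¹ * ∫ t in Ioo (-(θ * r) ^ 2) 0,
        (∫ x in ball (0 : V3) (θ * r), ‖v x t‖ ^ 6) ^ ((1:ℝ)/3)
      ≤ (θ * r)⁻¹ * (C * (I + θ ^ 3 * M)) := by gcongr
    _ = C * (θ⁻¹ * (r⁻¹ * I) + θ ^ 2 * (r⁻¹ * M)) := by field_simp
    _ ≤ (C + 1) * (θ⁻¹ * (r⁻¹ * I) + θ ^ 2 * (r⁻¹ * M)) := by
        gcongr; linarith

/-- interpolation inequality II. -/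
theorem statement16 :
    ∃ c : ℝ, 0 < c ∧
      ∀ (v : V3 → ℝ → V3) (dv : V3 → ℝ → V3 →L[ℝ] V3),
        AEMeasurable (fun z : V3 × ℝ => v z.1 z.2)
          (volume.restrict (ball (0 : V3) 1 ×ˢ Ioo (-1 : ℝ) 0)) →
        AEMeasurable (fun z : V3 × ℝ => dv z.1 z.2)
          (volume.restrict (ball (0 : V3) 1 ×ˢ Ioo (-1 : ℝ) 0)) →
        (∃ K : ℝ, ∀ s ∈ Ioo (-1 : ℝ) 0,
          IntegrableOn (fun x => ‖v x s‖ ^ 2) (ball (0 : V3) 1) volume ∧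
          (∫ x in ball (0 : V3) 1, ‖v x s‖ ^ 2) ≤ K) →
        IsWeakSpatialGradient (ball (0 : V3) 1) (Ioo (-1 : ℝ) 0) v dv →
        IntegrableOn (fun z : V3 × ℝ => fnormSq (dv z.1 z.2))
          (ball (0 : V3) 1 ×ˢ Ioo (-1 : ℝ) 0) volume →
        ∀ r θ : ℝ, 0 < r → r ≤ 1 → 0 < θ → θ ≤ 1 →
          funG v (θ*r) ≤ c * (θ⁻¹ * funE dv r + θ ^ 2 * funA v r) :=
  main16

end
end
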